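/- arXiv:2601.21580 — 13 statements merged into one kernel-verified Lean document; each statement's English description precedes it below -/
import Mathlib

section
/- Let G be a finite connected simple graph with at least three vertices and maximum degree Δ(G). Then the minimum cardinality Ψ(L(G)) of a doubly resolving set of the line graph L(G) satisfies Ψ(L(G)) ≥ ⌈log₂(1 + Δ(G))⌉. -/
open SimpleGraph

variable {V : Type*}

/-- `S` is a doubly resolving set of `G`: every pair of distinct vertices is doubly
resolved by some pair of vertices of `S`. -/
def IsDoublyResolvingSet (G : SimpleGraph V) (S : Set V) : Prop :=
  ∀ u v : V, u ≠ v → ∃ x ∈ S, ∃ y ∈ S,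
    (G.dist u x : ℤ) - (G.dist u y : ℤ) ≠ (G.dist v x : ℤ) - (G.dist v y : ℤ)

/-- `Ψ(G)`: the minimum cardinality of a doubly resolving set of `G`. -/
noncomputable def psi (G : SimpleGraph V) : ℕ :=
  sInf {n | ∃ S : Set V, IsDoublyResolvingSet G S ∧ S.ncard = n}

/-- The degree of a vertex, as the cardinality of its neighbor set. -/
noncomputable def deg (G : SimpleGraph V) (v : V) : ℕ := (G.neighborSet v).ncard

/-- The maximum degree `Δ(G)`. -/
noncomputable def maxDeg (G : SimpleGraph V) : ℕ := sSup (Set.range (deg G))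

theorem lineGraph_reach_of_mem {V : Type*} (G : SimpleGraph V) {a : V} (e f : G.edgeSet)
    (he : a ∈ e.1) (hf : a ∈ f.1) : G.lineGraph.Reachable e f := by
  by_cases h : e = f
  · subst h; exact Reachable.refl _
  · exact Adj.reachable ⟨h, ⟨a, he, hf⟩⟩

theorem lineGraph_reach_of_walk {V : Type*} (G : SimpleGraph V) {a b : V} (w : G.Walk a b) :
    ∀ (e f : G.edgeSet), a ∈ e.1 → b ∈ f.1 → G.lineGraph.Reachable e f := by
  induction w with
  | nil => intro e f he hf; exact lineGraph_reach_of_mem G e f he hf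
  | cons h p ih =>
    rename_i u v w
    intro e f he hf
    exact (lineGraph_reach_of_mem G e ⟨s(u, v), h⟩ he (Sym2.mem_mk_left _ _)).trans
      (ih _ f (Sym2.mem_mk_right _ _) hf)

theorem lineGraph_preconn {V : Type*} (G : SimpleGraph V) (hconn : G.Connected) :
    G.lineGraph.Preconnected := by
  rintro ⟨e, he⟩ ⟨f, hf⟩
  induction e with | _ a a'
  induction f with | _ b b'
  obtain ⟨w⟩ := hconn.preconnected a b
  exact lineGraph_reach_of_walk G w _ _ (Sym2.mem_mk_left _ _) (Sym2.mem_mk_left _ _)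

theorem exists_two_edges {V : Type*} [Fintype V] (G : SimpleGraph V)
    (hconn : G.Connected) (hcard : 3 ≤ Fintype.card V) : ∃ e f : G.edgeSet, e ≠ f := by
  classical
  have : Nontrivial V := Fintype.one_lt_card_iff_nontrivial.1 (by omega)
  obtain ⟨a⟩ := hconn.nonempty
  obtain ⟨a', ha⟩ := hconn.preconnected.exists_adj_of_nontrivial a
  have : ∃ c, c ∉ ({a, a'} : Finset V) := by
    by_contra! h
    have h1 := Finset.card_le_card (fun x _ => h x : (Finset.univ : Finset V) ⊆ {a, a'})
    have h2 := Finset.card_le_two (a := a) (b := a')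
    rw [Finset.card_univ] at h1
    omega
  obtain ⟨c, hc⟩ := this
  obtain ⟨c', hc'⟩ := hconn.preconnected.exists_adj_of_nontrivial c
  refine ⟨⟨s(a, a'), ha⟩, ⟨s(c, c'), hc'⟩, fun h => hc ?_⟩
  have h2 : s(a, a') = s(c, c') := congrArg Subtype.val h
  have : c ∈ s(a, a') := h2 ▸ Sym2.mem_mk_left _ _
  simpa using this

theorem deg_lt_of_drs {V : Type*} [Fintype V] (G : SimpleGraph V)
    (hconn : G.Connected) (hcard : 3 ≤ Fintype.card V) (S : Set G.edgeSet)
    (hS : IsDoublyResolvingSet G.lineGraph S) (v : V) : deg G v < 2 ^ S.ncard := by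
  classical
  have hpre := lineGraph_preconn G hconn
  have hne : S.Nonempty := by
    obtain ⟨e, f, h⟩ := exists_two_edges G hconn hcard
    obtain ⟨x, hx, _⟩ := hS e f h
    exact ⟨x, hx⟩
  let q : G.neighborSet v → G.edgeSet := fun w => ⟨s(v, w.1), w.2⟩
  have hq : Function.Injective q := by
    intro a b h
    have h2 : s(v, a.1) = s(v, b.1) := congrArg Subtype.val h
    exact Subtype.ext (Sym2.congr_right.1 h2)
  have hd : ∀ a b x, G.lineGraph.dist (q a) x ≤ G.lineGraph.dist (q b) x + 1 := by
    intro a b x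
    by_cases h : q a = q b
    · rw [h]; omega
    · have hadj : G.lineGraph.Adj (q a) (q b) :=
        ⟨h, ⟨v, Sym2.mem_mk_left _ _, Sym2.mem_mk_left _ _⟩⟩
      have h1 : G.lineGraph.dist (q a) (q b) = 1 := dist_eq_one_iff_adj.2 hadj
      obtain ⟨p, hp⟩ := (hpre (q b) x).exists_walk_length_eq_dist
      have := dist_le (Walk.cons hadj p)
      simp only [Walk.length_cons] at this
      omega
  have hm : ∀ x, ∃ m, ∀ a, G.lineGraph.dist (q a) x = m ∨ G.lineGraph.dist (q a) x = m + 1 := by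
    intro x
    by_cases hN : Nonempty (G.neighborSet v)
    · obtain ⟨a, ha⟩ := Finite.exists_min (fun a => G.lineGraph.dist (q a) x)
      refine ⟨G.lineGraph.dist (q a) x, fun b => ?_⟩
      have h1 := ha b
      have h2 := hd b a x
      omega
    · exact ⟨0, fun a => (hN ⟨a⟩).elim⟩
  choose m hm using hm
  let f : G.neighborSet v → (S → Bool) := fun a x => decide (G.lineGraph.dist (q a) x = m x)
  have hf : Function.Injective f := by
    intro a b h
    by_contra hab
    obtain ⟨x, hx, y, hy, hxy⟩ := hS (q a) (q b) (fun h => hab (hq h))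
    have key : ∀ x ∈ S, G.lineGraph.dist (q a) x = G.lineGraph.dist (q b) x := by
      intro x hx
      have h1 := congrFun h ⟨x, hx⟩
      simp only [f, decide_eq_decide] at h1
      have h2 := hm x a
      have h3 := hm x b
      omega
    rw [key x hx, key y hy] at hxy
    exact hxy rfl
  have hns : ¬ Function.Surjective f := by
    intro hs
    obtain ⟨a, ha⟩ := hs (fun _ => true)
    obtain ⟨b, hb⟩ := hs (fun _ => false)
    have hA : ∀ x ∈ S, G.lineGraph.dist (q a) x = m x := by
      intro x hx
      simpa [f] using congrFun ha ⟨x, hx⟩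
    have hB : ∀ x ∈ S, G.lineGraph.dist (q b) x = m x + 1 := by
      intro x hx
      have h1 : ¬ G.lineGraph.dist (q b) x = m x := by simpa [f] using congrFun hb ⟨x, hx⟩
      exact (hm x b).resolve_left h1
    obtain ⟨z, hz⟩ := hne
    have hab : q a ≠ q b := by
      intro h
      have h1 := hA z hz
      have h2 := hB z hz
      rw [h] at h1
      omega
    obtain ⟨x, hx, y, hy, hxy⟩ := hS _ _ hab
    rw [hA x hx, hA y hy, hB x hx, hB y hy] at hxy
    push_cast at hxy
    omega
  have := Fintype.card_lt_of_injective_not_surjective f hf hns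
  rw [Fintype.card_fun, Fintype.card_bool, ← Nat.card_eq_fintype_card,
    ← Nat.card_eq_fintype_card, Nat.card_coe_set_eq, Nat.card_coe_set_eq] at this
  exact this

/-- For a finite connected simple graph `G` with at least three vertices,
`Ψ(L(G)) ≥ ⌈log₂ (1 + Δ(G))⌉`. -/
theorem psi_lineGraph_lower_bound {V : Type*} [Fintype V] (G : SimpleGraph V)
    (hconn : G.Connected) (hcard : 3 ≤ Fintype.card V) :
    Nat.clog 2 (1 + maxDeg G) ≤ psi G.lineGraph := by
  have hpre := lineGraph_preconn G hconn
  have hne : {n | ∃ S : Set G.edgeSet, IsDoublyResolvingSet G.lineGraph S ∧ S.ncard = n}.Nonempty := by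
    refine ⟨_, Set.univ, ?_, rfl⟩
    intro u v huv
    refine ⟨u, trivial, v, trivial, ?_⟩
    have h1 := (hpre u v).pos_dist_of_ne huv
    rw [dist_self, dist_self, dist_comm (u := v) (v := u)]
    push_cast
    omega
  obtain ⟨S, hS, hn⟩ := Nat.sInf_mem hne
  have := hconn.nonempty
  have hmem : maxDeg G ∈ Set.range (deg G) :=
    Nat.sSup_mem (Set.range_nonempty _) (Set.finite_range _).bddAbove
  obtain ⟨v, hv⟩ := hmem
  have h := deg_lt_of_drs G hconn hcard S hS v
  unfold psi
  rw [← hn]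
  apply Nat.clog_le_of_le_pow
  omega
end

section
/- Let G be a finite connected simple graph with at least three vertices. Then the minimum cardinality Ψ(L(G)) of a doubly resolving set of the line graph L(G) satisfies Ψ(L(G)) ≤ |V(G)| − 1. -/
open SimpleGraph

variable {V : Type*}

theorem closed_aux {T : SimpleGraph V} (hT : T.Connected) (P : V → Prop) (a : V) (ha : P a)
    (h : ∀ x y, T.Adj x y → P x → P y) : ∀ x, P x := by
  intro x
  obtain ⟨p⟩ := hT.preconnected a x
  induction p with
  | nil => exact ha
  | cons hadj _ ih => exact ih (h _ _ hadj ha)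

theorem lineGraph_reach_aux {G : SimpleGraph V} {u v : V} (p : G.Walk u v) :
    ∀ e f : G.edgeSet, u ∈ e.1 → v ∈ f.1 → G.lineGraph.Reachable e f := by
  have adj : ∀ (w : V) (e f : G.edgeSet), w ∈ e.1 → w ∈ f.1 → G.lineGraph.Reachable e f := by
    intro w e f he hf
    by_cases hef : e = f
    · subst hef; exact Reachable.refl _
    · exact (lineGraph_adj_iff_exists.2 ⟨hef, w, he, hf⟩).reachable
  induction p with
  | nil => exact fun e f he hf => adj _ e f he hf
  | @cons a b c hadj _ ih =>
    intro e f he hf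
    exact (adj a e ⟨s(a, b), hadj⟩ he (by simp)).trans (ih _ f (by simp) hf)

theorem lineGraph_preconn_aux {G : SimpleGraph V} (hG : G.Connected) :
    G.lineGraph.Preconnected := by
  rintro ⟨⟨a, b⟩, he⟩ ⟨⟨c, d⟩, hf⟩
  obtain ⟨p⟩ := hG.preconnected a c
  exact lineGraph_reach_aux p _ _ (by simp) (by simp)

theorem two_edges_aux [Nontrivial V] {G T : SimpleGraph V} (hle : T ≤ G) (hT : T.Connected)
    (e f : G.edgeSet) (hf : f.1 ∉ T.edgeSet) :
    ∃ x : G.edgeSet, x.1 ∈ T.edgeSet ∧ G.lineGraph.Adj f x ∧ x ≠ e := by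
  obtain ⟨⟨u, v⟩, huv⟩ := f
  obtain ⟨a, ha⟩ := hT.preconnected.exists_adj_of_nontrivial u
  obtain ⟨b, hb⟩ := hT.preconnected.exists_adj_of_nontrivial v
  change ¬ T.Adj u v at hf
  have hg : G.Adj u v := huv
  have key : ∀ x : G.edgeSet, x.1 ∈ T.edgeSet → (u ∈ x.1 ∨ v ∈ x.1) →
      G.lineGraph.Adj ⟨s(u, v), huv⟩ x := by
    intro x hx h
    refine lineGraph_adj_iff_exists.2 ⟨?_, ?_⟩
    · rintro rfl; exact hf hx
    · rcases h with h | h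
      · exact ⟨u, by simp, h⟩
      · exact ⟨v, by simp, h⟩
  by_cases hx : (⟨s(u, a), hle ha⟩ : G.edgeSet) = e
  · refine ⟨⟨s(v, b), hle hb⟩, hb, key _ hb (by simp), ?_⟩
    subst hx
    intro h
    have h1 : s(v, b) = s(u, a) := congrArg Subtype.val h
    rw [Sym2.eq_iff] at h1
    rcases h1 with ⟨h1, -⟩ | ⟨h1, -⟩
    · exact hg.ne h1.symm
    · subst h1; exact hf ha
  · exact ⟨⟨s(u, a), hle ha⟩, ha, key _ ha (by simp), hx⟩

theorem core_aux [Nontrivial V] {G T : SimpleGraph V} (hG : G.Connected) (hle : T ≤ G)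
    (hT : T.Connected) (hbad : ∀ u v w z, G.Adj u v → G.Adj w z → ¬ T.Adj u v → ¬ T.Adj w z →
      u ≠ w → u ≠ z → v ≠ w → v ≠ z →
      (∀ a b, T.Adj a b → ((a = u ∨ a = v ∨ b = u ∨ b = v) ↔ (a = w ∨ a = z ∨ b = w ∨ b = z))) →
      False) :
    IsDoublyResolvingSet G.lineGraph {x | x.1 ∈ T.edgeSet} := by
  have hL := lineGraph_preconn_aux hG
  have pos : ∀ e f : G.edgeSet, e ≠ f → 0 < G.lineGraph.dist e f :=
    fun e f h => (hL e f).pos_dist_of_ne h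
  have mixed : ∀ e f : G.edgeSet, e ≠ f → e.1 ∈ T.edgeSet → f.1 ∉ T.edgeSet →
      ∃ x, x.1 ∈ T.edgeSet ∧ (G.lineGraph.dist e e : ℤ) - (G.lineGraph.dist e x : ℤ) ≠
        (G.lineGraph.dist f e : ℤ) - (G.lineGraph.dist f x : ℤ) := by
    intro e f hne he hf
    obtain ⟨x, hx, hadj, hxe⟩ := two_edges_aux hle hT e f hf
    refine ⟨x, hx, ?_⟩
    have h1 := dist_eq_one_iff_adj.2 hadj
    have h2 := pos e x hxe.symm
    have h3 := pos f e hne.symm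
    rw [h1, dist_self]
    omega
  intro e f hne
  by_cases he : e.1 ∈ T.edgeSet
  · by_cases hf : f.1 ∈ T.edgeSet
    · refine ⟨e, he, f, hf, ?_⟩
      have h1 := pos e f hne
      rw [dist_self, dist_self, G.lineGraph.dist_comm (u := f)]
      omega
    · obtain ⟨x, hx, h⟩ := mixed e f hne he hf
      exact ⟨e, he, x, hx, h⟩
  · by_cases hf : f.1 ∈ T.edgeSet
    · obtain ⟨x, hx, h⟩ := mixed f e hne.symm hf he
      exact ⟨f, hf, x, hx, h.symm⟩
    · by_contra hcon
      push Not at hcon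
      have ne1 : ∀ x : G.edgeSet, x.1 ∈ T.edgeSet → e ≠ x := by rintro x hx rfl; exact he hx
      have ne2 : ∀ x : G.edgeSet, x.1 ∈ T.edgeSet → f ≠ x := by rintro x hx rfl; exact hf hx
      obtain ⟨x0, hx0, hadj0, -⟩ := two_edges_aux hle hT e e he
      obtain ⟨y0, hy0, hadjy, -⟩ := two_edges_aux hle hT f f hf
      have iffadj : ∀ x : G.edgeSet, x.1 ∈ T.edgeSet →
          (G.lineGraph.Adj e x ↔ G.lineGraph.Adj f x) := by
        intro x hx
        have a1 := hcon x hx x0 hx0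
        have a2 := hcon x hx y0 hy0
        rw [← dist_eq_one_iff_adj] at hadj0 hadjy ⊢
        rw [← dist_eq_one_iff_adj]
        have b1 := pos _ _ (ne2 x0 hx0)
        have b2 := pos _ _ (ne1 y0 hy0)
        omega
      obtain ⟨⟨u, v⟩, huv⟩ := e
      obtain ⟨⟨w, z⟩, hwz⟩ := f
      have guv : G.Adj u v := huv
      have gwz : G.Adj w z := hwz
      change ¬ T.Adj u v at he
      change ¬ T.Adj w z at hf
      have hne' : s(u, v) ≠ s(w, z) := fun h => hne (Subtype.ext h)
      have H : ∀ a b, T.Adj a b →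
          ((a = u ∨ a = v ∨ b = u ∨ b = v) ↔ (a = w ∨ a = z ∨ b = w ∨ b = z)) := by
        intro a b hab
        have h := iffadj ⟨s(a, b), hle hab⟩ hab
        rw [lineGraph_adj_iff_exists, lineGraph_adj_iff_exists] at h
        have n1 := ne1 ⟨s(a, b), hle hab⟩ hab
        have n2 := ne2 ⟨s(a, b), hle hab⟩ hab
        simp only [n1, n2, ne_eq, not_false_eq_true, true_and] at h
        have conv : ∀ p q : V, (∃ t, t ∈ s(p, q) ∧ t ∈ s(a, b)) ↔
            (a = p ∨ a = q ∨ b = p ∨ b = q) := by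
          intro p q
          simp only [Sym2.mem_iff]
          constructor
          · rintro ⟨t, rfl | rfl, rfl | rfl⟩ <;> simp
          · rintro (rfl | rfl | rfl | rfl)
            · exact ⟨a, by simp⟩
            · exact ⟨a, by simp⟩
            · exact ⟨b, by simp⟩
            · exact ⟨b, by simp⟩
        exact (conv u v).symm.trans (h.trans (conv w z))
      -- sharing an endpoint is impossible
      have share : ∀ c p q : V, G.Adj c p → G.Adj c q → ¬ T.Adj c p → ¬ T.Adj c q → p ≠ q →
          (∀ a b, T.Adj a b →
            ((a = c ∨ a = p ∨ b = c ∨ b = p) ↔ (a = c ∨ a = q ∨ b = c ∨ b = q))) → False := by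
        intro c p q gcp gcq tcp tcq hpq hh
        have := closed_aux hT (fun x => x = p ∨ x = q) p (Or.inl rfl) (by
          rintro x y hxy (rfl | rfl)
          · have := (hh x y hxy).1 (by simp)
            have t2 : y ≠ c := by rintro rfl; exact tcp hxy.symm
            have t1 := gcp.ne
            grind
          · have := (hh x y hxy).2 (by simp)
            have t2 : y ≠ c := by rintro rfl; exact tcq hxy.symm
            have t1 := gcq.ne
            grind) c
        rcases this with h | h
        · exact gcp.ne h
        · exact gcq.ne h
      have he' : ¬ T.Adj v u := fun h => he h.symm
      have hf' : ¬ T.Adj z w := fun h => hf h.symm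
      refine hbad u v w z guv gwz he hf ?_ ?_ ?_ ?_ H
      · rintro rfl
        exact share u v z guv gwz he hf (by rintro rfl; exact hne' rfl) H
      · rintro rfl
        exact share u v w guv gwz.symm he hf' (by rintro rfl; exact hne' Sym2.eq_swap)
          (fun a b h => by have := H a b h; grind)
      · rintro rfl
        exact share v u z guv.symm gwz he' hf (by rintro rfl; exact hne' Sym2.eq_swap)
          (fun a b h => by have := H a b h; grind)
      · rintro rfl
        exact share v u w guv.symm gwz.symm he' hf' (by rintro rfl; exact hne' rfl)
          (fun a b h => by have := H a b h; grind)

theorem bad_cover_aux {T : SimpleGraph V} (hT : T.Connected) (u v w z : V)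
    (n1 : u ≠ w) (n2 : u ≠ z) (n3 : v ≠ w) (n4 : v ≠ z)
    (H : ∀ a b, T.Adj a b →
      ((a = u ∨ a = v ∨ b = u ∨ b = v) ↔ (a = w ∨ a = z ∨ b = w ∨ b = z))) :
    ∀ x, x = u ∨ x = v ∨ x = w ∨ x = z := by
  refine closed_aux hT (fun x => x = u ∨ x = v ∨ x = w ∨ x = z) u (Or.inl rfl) ?_
  intro x y hxy hx
  have h1 := H x y hxy
  grind

theorem psi_le_aux [Fintype V] {G T : SimpleGraph V} (hle : T ≤ G) (hT : T.IsTree)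
    (h : IsDoublyResolvingSet G.lineGraph {x | x.1 ∈ T.edgeSet}) :
    psi G.lineGraph ≤ Fintype.card V - 1 := by
  have h1 := (isTree_iff_connected_and_card.1 hT).2
  have h2 : ({x | x.1 ∈ T.edgeSet} : Set G.edgeSet).ncard = Nat.card T.edgeSet := by
    rw [Nat.card_coe_set_eq, ← Set.ncard_image_of_injective _ Subtype.val_injective]
    congr 1
    ext x
    simp only [Set.mem_image, Set.mem_ofPred_eq, Subtype.exists, exists_and_left, exists_prop,
      exists_eq_right_right, and_iff_left_iff_imp]
    exact fun hx => edgeSet_mono hle hx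
  refine Nat.sInf_le ⟨_, h, ?_⟩
  rw [h2, ← Nat.card_eq_fintype_card]
  omega

/-- For a finite connected simple graph `G` with at least three vertices,
`Ψ(L(G)) ≤ |V(G)| - 1`. -/
theorem psi_lineGraph_upper_bound {V : Type*} [Fintype V] (G : SimpleGraph V)
    (hconn : G.Connected) (hcard : 3 ≤ Fintype.card V) :
    psi G.lineGraph ≤ Fintype.card V - 1 := by
  classical
  have : Nontrivial V := Fintype.one_lt_card_iff_nontrivial.1 (by omega)
  by_cases hc : ∃ c, ∀ x, x ≠ c → G.Adj c x
  · obtain ⟨c, hc⟩ := hc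
    have hle : starGraph c ≤ G := by
      intro a b hab
      rw [starGraph_adj] at hab
      obtain ⟨h, rfl | rfl⟩ := hab
      · exact hc _ h.symm
      · exact (hc _ h).symm
    refine psi_le_aux hle (isTree_starGraph c)
      (core_aux hconn hle (connected_starGraph c) ?_)
    intro u v w z h1 h2 h3 h4 n1 n2 n3 n4 H
    have hcov := bad_cover_aux (connected_starGraph c) u v w z n1 n2 n3 n4 H c
    have := h1.ne
    have := h2.ne
    simp only [starGraph_adj] at h3 h4
    grind
  · obtain ⟨T, hle, hT⟩ := hconn.exists_isTree_le
    refine psi_le_aux hle hT (core_aux hconn hle hT.connected ?_)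
    intro u v w z h1 h2 h3 h4 n1 n2 n3 n4 H
    have hcov := bad_cover_aux hT.connected u v w z n1 n2 n3 n4 H
    -- a center with two `T`-neighbours across
    have fin : ∀ p q r s : V, G.Adj p q → T.Adj p r → T.Adj p s →
        (∀ x, x = p ∨ x = q ∨ x = r ∨ x = s) → False := by
      intro p q r s a1 a2 a3 hx
      refine hc ⟨p, fun x hxp => ?_⟩
      rcases hx x with rfl | rfl | rfl | rfl
      · exact absurd rfl hxp
      · exact a1
      · exact hle a2
      · exact hle a3
    -- from one cross edge
    have step : ∀ p q r s : V, G.Adj p q → G.Adj r s → T.Adj p r → q ≠ p → q ≠ r →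
        (∀ x, x = p ∨ x = q ∨ x = r ∨ x = s) → ¬ T.Adj p q → ¬ T.Adj r s → False := by
      intro p q r s a1 a2 a3 n n' hx b1 b2
      have := closed_aux hT.connected (fun x => x = p ∨ x = r) p (Or.inl rfl) (by
        rintro x y hxy (rfl | rfl)
        · rcases hx y with rfl | rfl | rfl | rfl
          · simp
          · exact absurd hxy b1
          · simp
          · exact (fin _ _ _ _ a1 a3 hxy hx).elim
        · rcases hx y with rfl | rfl | rfl | rfl
          · simp
          · exact (fin _ _ _ _ a2 a3.symm hxy (fun t => by have := hx t; tauto)).elim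
          · simp
          · exact absurd hxy b2) q
      rcases this with h | h
      · exact n h
      · exact n' h
    obtain ⟨a, ha⟩ := hT.connected.preconnected.exists_adj_of_nontrivial u
    rcases hcov a with rfl | rfl | rfl | rfl
    · exact ha.ne rfl
    · exact h3 ha
    · exact step _ _ _ _ h1 h2 ha h1.ne' n3 hcov h3 h4
    · exact step _ _ _ _ h1 h2.symm ha h1.ne' n4 (fun t => by have := hcov t; tauto) h3
        (fun h => h4 h.symm)
end

section
/- Let G be a finite connected simple graph with at least three vertices, and let T be a spanning tree of G with the additional requirement that if G is isomorphic to the complete graph K₄ or to K₄ with one edge removed, then T is isomorphic to the star K_{1,3}. Then the edge set E(T), regarded as a set of vertices of the line graph L(G), is a doubly resolving set of L(G). -/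
open SimpleGraph

variable {V : Type*}

/-- The complete graph `K₄` minus one edge. -/
def K4MinusEdge : SimpleGraph (Fin 4) := (completeGraph (Fin 4)).deleteEdges {s(0, 1)}

/-- The star `K_{1,3}`: vertex `0` is adjacent to the three other vertices. -/
def StarK13 : SimpleGraph (Fin 4) := SimpleGraph.fromRel (fun a _ => a = 0)

lemma aux_iso {V : Type*} (G : SimpleGraph V) (p q r s : V)
    (hpq : p ≠ q) (hpr : G.Adj p r) (hps : G.Adj p s) (hqr : G.Adj q r) (hqs : G.Adj q s)
    (hrs : G.Adj r s) (hcov : ∀ v, v = p ∨ v = q ∨ v = r ∨ v = s) :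
    Nonempty (G ≃g completeGraph (Fin 4)) ∨ Nonempty (G ≃g K4MinusEdge) := by
  have hb : Function.Bijective (![p, q, r, s] : Fin 4 → V) := by
    constructor
    · intro i j hij
      have h1 := hpr.ne
      have h2 := hps.ne
      have h3 := hqr.ne
      have h4 := hqs.ne
      have h5 := hrs.ne
      fin_cases i <;> fin_cases j <;> simp_all [eq_comm]
    · intro v
      rcases hcov v with h | h | h | h
      · exact ⟨0, by simp [h]⟩
      · exact ⟨1, by simp [h]⟩
      · exact ⟨2, by simp [h]⟩
      · exact ⟨3, by simp [h]⟩
  by_cases h : G.Adj p q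
  · left
    refine ⟨RelIso.symm ⟨Equiv.ofBijective _ hb, ?_⟩⟩
    intro i j
    fin_cases i <;> fin_cases j <;> simp [*, completeGraph, G.adj_comm]
  · right
    have h' : ¬ G.Adj q p := fun h0 => h h0.symm
    refine ⟨RelIso.symm ⟨Equiv.ofBijective _ hb, ?_⟩⟩
    intro i j
    fin_cases i <;> fin_cases j <;>
      simp [K4MinusEdge, completeGraph, h, h', hpr, hps, hqr, hqs, hrs,
        hpr.symm, hps.symm, hqr.symm, hqs.symm, hrs.symm]

lemma aux_reach {V : Type*} (G : SimpleGraph V) {u v : V} (w : G.Walk u v) :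
    ∀ e f : G.edgeSet, u ∈ (e : Sym2 V) → v ∈ (f : Sym2 V) → G.lineGraph.Reachable e f := by
  have key : ∀ (x : V) (e f : G.edgeSet), x ∈ (e : Sym2 V) → x ∈ (f : Sym2 V) →
      G.lineGraph.Reachable e f := by
    intro x e f he hf
    by_cases h : e = f
    · rw [h]
    · exact (lineGraph_adj_iff_exists.2 ⟨h, x, he, hf⟩).reachable
  induction w with
  | nil => exact fun e f => key _ e f
  | @cons a b c h p ih =>
    intro e f he hf
    exact (key a e ⟨s(a, b), h⟩ he (Sym2.mem_mk_left a b)).trans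
      (ih ⟨s(a, b), h⟩ f (Sym2.mem_mk_right a b) hf)

lemma aux_closed {V : Type*} (T : SimpleGraph V) (hT : T.Connected) (A : V → Prop) (a : V)
    (ha : A a) (hA : ∀ x y, A x → T.Adj x y → A y) (v : V) : A v := by
  obtain ⟨w⟩ := hT.preconnected a v
  induction w with
  | nil => exact ha
  | cons h p ih => exact ih (hA _ _ ha h)

lemma aux_line_conn {V : Type*} (G : SimpleGraph V) (hG : G.Connected) (e f : G.edgeSet) :
    G.lineGraph.Reachable e f := by
  obtain ⟨e, he⟩ := e
  obtain ⟨f, hf⟩ := f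
  induction e with | _ a b
  induction f with | _ c d
  obtain ⟨w⟩ := hG.preconnected a c
  exact aux_reach G w _ _ (Sym2.mem_mk_left _ _) (Sym2.mem_mk_left _ _)

set_option maxHeartbeats 1000000 in
/-- the combinatorial core -/
lemma aux_core {V : Type*} (G T : SimpleGraph V) (hsub : T ≤ G) (hT : T.Connected)
    (hK4 : (Nonempty (G ≃g completeGraph (Fin 4)) ∨ Nonempty (G ≃g K4MinusEdge)) →
      Nonempty (T ≃g StarK13))
    (e f : Sym2 V) (he : e ∈ G.edgeSet) (hf : f ∈ G.edgeSet) (heT : e ∉ T.edgeSet)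
    (hfT : f ∉ T.edgeSet) (hne : e ≠ f)
    (h : ∀ x y, T.Adj x y → ((x ∈ e ∨ y ∈ e) ↔ (x ∈ f ∨ y ∈ f))) : False := by
  have shared : ∀ a b c, b ≠ c → G.Adj a b → G.Adj a c → ¬ T.Adj a b → ¬ T.Adj a c →
      (∀ x y, T.Adj x y → ((x ∈ s(a, b) ∨ y ∈ s(a, b)) ↔ (x ∈ s(a, c) ∨ y ∈ s(a, c)))) →
      False := by
    intro a b c hbc hab hac nab nac hh
    have := aux_closed T hT (fun v => v = b ∨ v = c) b (Or.inl rfl) (by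
      intro x y hx hxy
      have h1 := hh x y hxy
      have h2 : ¬ T.Adj b a := fun h0 => nab h0.symm
      have h3 : ¬ T.Adj c a := fun h0 => nac h0.symm
      simp only [Sym2.mem_iff] at h1
      have h4 := hab.ne
      have h5 := hac.ne
      clear hh h hK4
      grind) a
    rcases this with h0 | h0
    · exact hab.ne h0
    · exact hac.ne h0
  induction e with | _ a b
  induction f with | _ c d
  rw [mem_edgeSet] at he hf heT hfT
  by_cases hac : a = c
  · subst hac; exact shared a b d (by rintro rfl; simp [Sym2.eq_swap] at hne) he hf heT hfT h
  by_cases had : a = d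
  · subst had
    refine shared a b c (by rintro rfl; simp [Sym2.eq_swap] at hne) he hf.symm heT (fun h0 => hfT h0.symm) ?_
    rw [Sym2.eq_swap (a := a) (b := c)]; exact h
  by_cases hbc : b = c
  · subst hbc
    refine shared b a d (by rintro rfl; simp [Sym2.eq_swap] at hne) he.symm hf (fun h0 => heT h0.symm) hfT ?_
    rw [Sym2.eq_swap (a := b) (b := a)]; exact h
  by_cases hbd : b = d
  · subst hbd
    refine shared b a c (by rintro rfl; simp [Sym2.eq_swap] at hne) he.symm hf.symm (fun h0 => heT h0.symm) (fun h0 => hfT h0.symm) ?_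
    rw [Sym2.eq_swap (a := b) (b := a), Sym2.eq_swap (a := b) (b := c)]; exact h
  simp only [Sym2.mem_iff] at h
  have hne1 := he.ne
  have hne2 := hf.ne
  have sab : ¬ T.Adj b a := fun h0 => heT h0.symm
  have scd : ¬ T.Adj d c := fun h0 => hfT h0.symm
  have hcov : ∀ v, v = a ∨ v = b ∨ v = c ∨ v = d :=
    aux_closed T hT (fun v => v = a ∨ v = b ∨ v = c ∨ v = d) a (Or.inl rfl) (by
      intro x y hx hxy
      have h1 := h x y hxy
      grind)
  have nostar : ¬ Nonempty (T ≃g StarK13) := by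
    rintro ⟨φ⟩
    have hs : ∀ v, v ≠ φ.symm 0 → T.Adj (φ.symm 0) v := by
      intro v hv
      rw [← φ.map_adj_iff]
      have : φ v ≠ 0 := fun h0 => hv (by rw [← h0]; simp)
      have h2 : φ (φ.symm 0) = 0 := φ.apply_symm_apply 0
      rw [h2]
      simp only [StarK13, SimpleGraph.fromRel_adj]
      exact ⟨fun h0 => this h0.symm, Or.inl trivial⟩
    generalize φ.symm 0 = z at hs
    rcases hcov z with h0 | h0 | h0 | h0 <;> subst h0
    · exact heT (hs _ hne1.symm)
    · exact sab (hs _ hne1)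
    · exact hfT (hs _ hne2.symm)
    · exact scd (hs _ hne2)
  have iso : ∀ p q r s : V, p ≠ q → G.Adj p r → T.Adj p s → T.Adj q r → G.Adj q s →
      T.Adj r s → (∀ v, v = p ∨ v = q ∨ v = r ∨ v = s) → False := by
    intro p q r s h1 h2 h3 h4 h5 h6 h7
    exact nostar (hK4 (aux_iso G p q r s h1 h2 (hsub h3) (hsub h4) h5 (hsub h6) h7))
  have ca : T.Adj a c ∨ T.Adj a d := by
    by_contra hc
    exact hne1 (aux_closed T hT (fun v => v = a) a rfl (by
      intro x y hx hxy
      subst hx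
      rcases hcov y with h0 | h0 | h0 | h0 <;> subst h0 <;> tauto) b).symm
  have cb : T.Adj b c ∨ T.Adj b d := by
    by_contra hc
    exact hne1 (aux_closed T hT (fun v => v = b) b rfl (by
      intro x y hx hxy
      subst hx
      rcases hcov y with h0 | h0 | h0 | h0 <;> subst h0 <;> tauto) a)
  have cc : T.Adj c a ∨ T.Adj c b := by
    by_contra hc
    exact hne2 (aux_closed T hT (fun v => v = c) c rfl (by
      intro x y hx hxy
      subst hx
      rcases hcov y with h0 | h0 | h0 | h0 <;> subst h0 <;> tauto) d).symm
  have cd : T.Adj d a ∨ T.Adj d b := by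
    by_contra hc
    exact hne2 (aux_closed T hT (fun v => v = d) d rfl (by
      intro x y hx hxy
      subst hx
      rcases hcov y with h0 | h0 | h0 | h0 <;> subst h0 <;> tauto) c)
  have c1 : T.Adj a c ∨ T.Adj b d := by
    by_contra hc
    have := aux_closed T hT (fun v => v = a ∨ v = d) a (Or.inl rfl) (by
      intro x y hx hxy
      have := hcov y
      have := @T.adj_comm
      grind) b
    grind
  have c2 : T.Adj a d ∨ T.Adj b c := by
    by_contra hc
    have := aux_closed T hT (fun v => v = a ∨ v = c) a (Or.inl rfl) (by
      intro x y hx hxy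
      have := hcov y
      have := @T.adj_comm
      grind) b
    grind
  rw [T.adj_comm c, T.adj_comm c] at cc
  rw [T.adj_comm d, T.adj_comm d] at cd
  by_cases h1 : T.Adj a c
  · by_cases h2 : T.Adj a d
    · by_cases h3 : T.Adj b c
      · -- b d may be missing
        exact iso b d a c hbd he.symm h3 h2.symm hf.symm h1 (fun v => by rcases hcov v with h | h | h | h <;> simp [h])
      · have h4 : T.Adj b d := by tauto
        exact iso b c a d hbc he.symm h4 h1.symm hf h2 (fun v => by rcases hcov v with h | h | h | h <;> simp [h])
    · have h3 : T.Adj b c := by tauto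
      have h4 : T.Adj b d := by tauto
      exact iso a d b c had he h1 h4.symm hf.symm h3 (fun v => by rcases hcov v with h | h | h | h <;> simp [h])
  · have h2 : T.Adj a d := by tauto
    have h3 : T.Adj b c := by tauto
    have h4 : T.Adj b d := by tauto
    exact iso a c b d hac he h2 h3.symm hf h4 (fun v => by rcases hcov v with h | h | h | h <;> simp [h])

/-- Let `G` be a finite connected simple graph with at least three vertices and
`T` a spanning tree of `G` such that if `G ≅ K₄` or `G ≅ K₄⁻` then `T ≅ K_{1,3}`.
Then `E(T)`, regarded as a set of vertices of `L(G)`, is a doubly resolving set of `L(G)`. -/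
theorem spanningTree_edges_isDRS_lineGraph {V : Type*} [Fintype V] (G : SimpleGraph V)
    (hconn : G.Connected) (hcard : 3 ≤ Fintype.card V)
    (T : SimpleGraph V) (hsub : T ≤ G) (hT : T.IsTree)
    (hK4 : (Nonempty (G ≃g completeGraph (Fin 4)) ∨ Nonempty (G ≃g K4MinusEdge)) →
      Nonempty (T ≃g StarK13)) :
    IsDoublyResolvingSet G.lineGraph {e : G.edgeSet | (e : Sym2 V) ∈ T.edgeSet} := by
  classical
  have hR := aux_line_conn G hconn
  have h0 : ∀ e f : G.edgeSet, G.lineGraph.dist e f = 0 ↔ e = f :=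
    fun e f => (hR e f).dist_eq_zero_iff
  have hnt : Nontrivial V := Fintype.one_lt_card_iff_nontrivial.1 (by omega)
  have hnb : ∀ u, ∃ w, T.Adj u w := fun u => hT.connected.preconnected.exists_adj_of_nontrivial u
  -- tree edge touching
  have htouch : ∀ (f : G.edgeSet) (u : V), u ∈ (f : Sym2 V) → (f : Sym2 V) ∉ T.edgeSet →
      ∃ x : G.edgeSet, (x : Sym2 V) ∈ T.edgeSet ∧ u ∈ (x : Sym2 V) ∧ G.lineGraph.dist f x = 1 := by
    intro f u hu hf
    obtain ⟨w, hw⟩ := hnb u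
    refine ⟨⟨s(u, w), hsub hw⟩, hw, Sym2.mem_mk_left _ _, ?_⟩
    rw [dist_eq_one_iff_adj, lineGraph_adj_iff_exists]
    refine ⟨?_, u, hu, Sym2.mem_mk_left _ _⟩
    rintro rfl
    exact hf hw
  -- mixed case
  have mixed : ∀ e f : G.edgeSet, (e : Sym2 V) ∈ T.edgeSet → (f : Sym2 V) ∉ T.edgeSet →
      (∀ x y : G.edgeSet, (x : Sym2 V) ∈ T.edgeSet → (y : Sym2 V) ∈ T.edgeSet →
        (G.lineGraph.dist e x : ℤ) - G.lineGraph.dist e y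
          = G.lineGraph.dist f x - G.lineGraph.dist f y) → False := by
    intro e f he hf h
    have hne : e ≠ f := by rintro rfl; exact hf he
    have hfe : G.lineGraph.dist f e ≠ 0 := fun h1 => hne ((h0 _ _).1 h1).symm
    have hin : ∀ u, u ∈ (f : Sym2 V) → u ∈ (e : Sym2 V) := by
      intro u hu
      obtain ⟨x, hx, hux, hd⟩ := htouch f u hu hf
      have h1 := h x e hx he
      rw [dist_self, hd] at h1
      have h2 : G.lineGraph.dist e x = 0 := by omega
      rw [(h0 _ _).1 h2]; exact hux
    obtain ⟨f, hfG⟩ := f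
    induction f with | _ c d
    have hc := hin c (Sym2.mem_mk_left _ _)
    have hd := hin d (Sym2.mem_mk_right _ _)
    have := (Sym2.mem_and_mem_iff (G.ne_of_adj hfG)).1 ⟨hc, hd⟩
    exact hne (Subtype.ext this)
  intro e f hne
  by_contra hcon
  push Not at hcon
  have h : ∀ x y : G.edgeSet, (x : Sym2 V) ∈ T.edgeSet → (y : Sym2 V) ∈ T.edgeSet →
        (G.lineGraph.dist e x : ℤ) - G.lineGraph.dist e y
          = G.lineGraph.dist f x - G.lineGraph.dist f y := fun x y hx hy => hcon x hx y hy
  by_cases he : (e : Sym2 V) ∈ T.edgeSet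
  · by_cases hf : (f : Sym2 V) ∈ T.edgeSet
    · have h1 := h e f he hf
      rw [dist_self, dist_self, dist_comm (u := f)] at h1
      exact hne ((h0 e f).1 (by omega))
    · exact mixed e f he hf h
  · by_cases hf : (f : Sym2 V) ∈ T.edgeSet
    · exact mixed f e hf he (fun x y hx hy => (h x y hx hy).symm)
    · have hdeq : ∀ x : G.edgeSet, (x : Sym2 V) ∈ T.edgeSet →
          G.lineGraph.dist e x = G.lineGraph.dist f x := by
        intro x hx
        obtain ⟨y, hy, -, hey⟩ := htouch e _ (Sym2.out_fst_mem _) he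
        obtain ⟨z, hz, -, hfz⟩ := htouch f _ (Sym2.out_fst_mem _) hf
        have h1 := h x y hx hy
        have h2 := h y z hy hz
        have h3 : G.lineGraph.dist e z ≠ 0 := fun h4 => he ((h0 _ _).1 h4 ▸ hz)
        have h4 : G.lineGraph.dist f y ≠ 0 := fun h5 => hf ((h0 _ _).1 h5 ▸ hy)
        omega
      refine aux_core G T hsub hT.connected hK4 e f e.2 f.2 he hf
        (fun h1 => hne (Subtype.ext h1)) ?_
      have hadj : ∀ (g : G.edgeSet), (g : Sym2 V) ∉ T.edgeSet → ∀ x y (hxy : T.Adj x y),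
          (x ∈ (g : Sym2 V) ∨ y ∈ (g : Sym2 V)) ↔
            G.lineGraph.dist g ⟨s(x, y), hsub hxy⟩ = 1 := by
        intro g hg x y hxy
        rw [dist_eq_one_iff_adj, lineGraph_adj_iff_exists]
        have h1 : g ≠ ⟨s(x, y), hsub hxy⟩ := by
          rintro rfl
          exact hg hxy
        simp only [Sym2.mem_iff]
        constructor
        · rintro (h2 | h2)
          · exact ⟨h1, x, h2, Or.inl rfl⟩
          · exact ⟨h1, y, h2, Or.inr rfl⟩
        · rintro ⟨-, v, h2, rfl | rfl⟩
          · exact Or.inl h2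
          · exact Or.inr h2
      intro x y hxy
      rw [hadj e he x y hxy, hadj f hf x y hxy, hdeq ⟨s(x, y), hsub hxy⟩ hxy]
end

section
/- Let T be a tree with at least three vertices. Then Ψ(L(T)) = σ(T) − ex'(T), where Ψ(L(T)) is the minimum cardinality of a doubly resolving set of the line graph L(T), σ(T) is the number of leaves of T, and ex'(T) is the number of strong exterior major vertices of T. -/
open SimpleGraph

variable {V : Type*}

namespace PsiLine

lemma exists_pred {W : Type*} {G : SimpleGraph W} {u v : W} (h : G.Reachable u v) (hne : u ≠ v) :
    ∃ w, G.Adj u w ∧ G.dist w v + 1 = G.dist u v := by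
  obtain ⟨p, hp⟩ := h.exists_walk_length_eq_dist
  cases p with
  | nil => exact absurd rfl hne
  | @cons _ w _ hadj q =>
    refine ⟨w, hadj, ?_⟩
    have h1 := SimpleGraph.dist_le q
    have h2 := hadj.reachable.dist_triangle_left v
    rw [SimpleGraph.dist_eq_one_iff_adj.mpr hadj] at h2
    simp only [SimpleGraph.Walk.length_cons] at hp
    omega

lemma tree_step {T : SimpleGraph V} (hT : T.IsTree) {r a b c : V} (hab : T.Adj a b)
    (hbc : T.Adj b c) (hac : a ≠ c) (h : T.dist r b = T.dist r a + 1) :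
    T.dist r c = T.dist r b + 1 := by
  have h1 := hT.dist_ne_of_adj r hbc
  have h2 := hbc.diff_dist_adj (u := r)
  by_contra h3
  have h4 : T.dist r c = T.dist r a := by omega
  obtain ⟨p, hp⟩ := hT.connected.exists_walk_length_eq_dist a r
  obtain ⟨q, hq⟩ := hT.connected.exists_walk_length_eq_dist c r
  have e1 := T.dist_comm (u := r) (v := a)
  have e2 := T.dist_comm (u := r) (v := b)
  have e3 := T.dist_comm (u := r) (v := c)
  have P := SimpleGraph.Walk.isPath_of_length_eq_dist (SimpleGraph.Walk.cons hab.symm p)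
    (by simp only [SimpleGraph.Walk.length_cons]; omega)
  have Q := SimpleGraph.Walk.isPath_of_length_eq_dist (SimpleGraph.Walk.cons hbc q)
    (by simp only [SimpleGraph.Walk.length_cons]; omega)
  have := (hT.isAcyclic.subsingleton_path _ _).elim (⟨_, P⟩ : T.Path b r) ⟨_, Q⟩
  simp only [Subtype.mk.injEq, SimpleGraph.Walk.cons.injEq] at this
  exact hac this.1

lemma adj_line {T : SimpleGraph V} {e f : T.edgeSet} {u : V} (hne : e ≠ f) (he : u ∈ e.1)
    (hf : u ∈ f.1) : T.lineGraph.Adj e f := ⟨hne, u, he, hf⟩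

lemma walk_line {T : SimpleGraph V} {u v : V} (p : T.Walk u v) : ∀ (e f : T.edgeSet), u ∈ e.1 →
    v ∈ f.1 → ∃ q : T.lineGraph.Walk e f, q.length ≤ p.length + 1 := by
  induction p with
  | nil =>
    intro e f he hf
    by_cases h : e = f
    · subst h; exact ⟨.nil, by simp⟩
    · exact ⟨.cons (adj_line h he hf) .nil, by simp⟩
  | @cons a b c hab p ih =>
    intro e f he hf
    obtain ⟨q, hq⟩ := ih ⟨s(a, b), hab⟩ f (by simp) hf
    by_cases h : e = ⟨s(a, b), hab⟩
    · subst h; exact ⟨q, by simp; omega⟩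
    · exact ⟨.cons (adj_line h he (by simp)) q, by simp; omega⟩

lemma line_dist_le {T : SimpleGraph V} (hT : T.Connected) {u v : V} {e f : T.edgeSet} (he : u ∈ e.1)
    (hf : v ∈ f.1) : T.lineGraph.dist e f ≤ T.dist u v + 1 := by
  obtain ⟨p, hp⟩ := hT.exists_walk_length_eq_dist u v
  obtain ⟨q, hq⟩ := walk_line p e f he hf
  have := SimpleGraph.dist_le q
  omega

lemma line_reach {T : SimpleGraph V} (hT : T.Connected) (e f : T.edgeSet) :
    T.lineGraph.Reachable e f := by
  obtain ⟨⟨a, b⟩, he⟩ := e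
  obtain ⟨⟨c, d⟩, hf⟩ := f
  obtain ⟨p⟩ := hT a c
  obtain ⟨q, -⟩ := walk_line p ⟨s(a,b), he⟩ ⟨s(c,d), hf⟩ (by simp) (by simp)
  exact ⟨q⟩

lemma edge_dist_le {T : SimpleGraph V} {e : T.edgeSet} {u v : V} (hu : u ∈ e.1) (hv : v ∈ e.1) :
    T.dist u v ≤ 1 := by
  obtain ⟨⟨a, b⟩, he⟩ := e
  have h1 : T.dist a b = 1 := SimpleGraph.dist_eq_one_iff_adj.mpr he
  have h2 : T.dist b a = 1 := by rw [SimpleGraph.dist_comm]; exact h1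
  change u ∈ s(a,b) at hu
  change v ∈ s(a,b) at hv
  rw [Sym2.mem_iff] at hu hv
  rcases hu with rfl | rfl <;> rcases hv with rfl | rfl <;> simp [h1, h2]

lemma walk_dist {T : SimpleGraph V} (hT : T.Connected) {e f : T.edgeSet} (q : T.lineGraph.Walk e f) :
    ∀ u v : V, u ∈ e.1 → v ∈ f.1 → T.dist u v ≤ q.length + 1 := by
  induction q with
  | nil => intro u v hu hv; simpa using edge_dist_le hu hv
  | @cons a b c hab q ih =>
    intro u v hu hv
    obtain ⟨-, w, hw1, hw2⟩ := hab
    have := ih w v hw2 hv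
    have h2 := edge_dist_le hu hw1
    have h3 := hT.dist_triangle (u := u) (v := w) (w := v)
    change _ ≤ q.length + 1 + 1
    omega

lemma le_line_dist {T : SimpleGraph V} (hT : T.Connected) {u v : V} {e f : T.edgeSet} (he : u ∈ e.1)
    (hf : v ∈ f.1) : T.dist u v ≤ T.lineGraph.dist e f + 1 := by
  obtain ⟨q, hq⟩ := (line_reach hT e f).exists_walk_length_eq_dist
  have := walk_dist hT q u v he hf
  omega

lemma exists_far {T : SimpleGraph V} (hT : T.IsTree) {e f : T.edgeSet} (hne : e ≠ f) :
    ∃ c ∈ f.1, ∃ a ∈ e.1, T.dist c a = T.lineGraph.dist f e + 1 := by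
  classical
  have hex : ∃ m, ∃ d ∈ f.1, ∃ b ∈ e.1, T.dist d b = m := by
    obtain ⟨⟨a, b⟩, he⟩ := e
    obtain ⟨⟨c, d⟩, hf⟩ := f
    exact ⟨_, c, by simp, a, by simp, rfl⟩
  obtain ⟨d, hd, b, hb, hm⟩ := Nat.find_spec hex
  have hmin : ∀ x ∈ f.1, ∀ y ∈ e.1, T.dist d b ≤ T.dist x y := by
    intro x hx y hy
    rw [hm]
    exact Nat.find_min' hex ⟨x, hx, y, hy, rfl⟩
  obtain ⟨c, hc⟩ := Sym2.mem_iff_exists.mp hd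
  obtain ⟨a, ha⟩ := Sym2.mem_iff_exists.mp hb
  have hdc : T.Adj d c := by have := f.2; rw [hc] at this; exact this
  have hba : T.Adj b a := by have := e.2; rw [ha] at this; exact this
  have hcf : c ∈ f.1 := by rw [hc]; simp
  have hae : a ∈ e.1 := by rw [ha]; simp
  refine ⟨c, hcf, a, hae, ?_⟩
  have h1 := hmin c hcf b hb
  have h2 := hmin d hd a hae
  have h3 := hdc.diff_dist_adj (u := b)
  have h4 := hT.dist_ne_of_adj b hdc
  have h5 := hba.diff_dist_adj (u := d)
  have h6 := hT.dist_ne_of_adj d hba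
  have h7 := T.dist_comm (u := b) (v := d)
  have h8 := T.dist_comm (u := b) (v := c)
  have hcb : T.dist c b = T.dist d b + 1 := by omega
  have hda : T.dist d a = T.dist d b + 1 := by omega
  have key : T.dist c a = T.dist c b + 1 := by
    obtain ⟨q, hq, hq'⟩ := exists_pred (hT.connected b c) (by
      rintro rfl; simp at hcb)
    have h9 := T.dist_comm (u := q) (v := c)
    refine tree_step hT hq.symm hba ?_ (by omega)
    rintro rfl
    by_cases h0 : T.dist d b = 0
    · have h10 := hT.connected.dist_eq_zero_iff.mp h0
      subst h10
      have : q = c := hT.connected.dist_eq_zero_iff.mp (by omega)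
      subst this
      exact hne (Subtype.ext (ha.trans hc.symm))
    · have : T.dist d q ≤ T.dist d c + T.dist c q := hT.connected.dist_triangle
      -- use a closer neighbour
      obtain ⟨w, hw, hw'⟩ := exists_pred (hT.connected b d) (by rintro rfl; simp at h0)
      have hwq : w ≠ q := by
        rintro rfl
        have := T.dist_comm (u := w) (v := d)
        omega
      have h11 := T.dist_comm (u := w) (v := d)
      have h12 : T.dist c w ≤ T.dist c d + T.dist d w := hT.connected.dist_triangle
      rw [SimpleGraph.dist_eq_one_iff_adj.mpr hdc.symm] at h12
      have h13 : T.dist c b ≤ T.dist c w + T.dist w b := hT.connected.dist_triangle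
      rw [SimpleGraph.dist_eq_one_iff_adj.mpr hw.symm] at h13
      have := tree_step hT hw.symm hq hwq (r := c) (by omega)
      omega
  have h9 := line_dist_le hT.connected hd hb
  have h10 := le_line_dist hT.connected hcf hae
  omega

lemma exists_third [Fintype V] {T : SimpleGraph V} {p : V} (hp : 3 ≤ deg T p) (x y : V) :
    ∃ m, T.Adj p m ∧ m ≠ x ∧ m ≠ y := by
  have h : ({x, y} : Set V).ncard < (T.neighborSet p).ncard := by
    have : ({x, y} : Set V).ncard ≤ 2 := (Set.ncard_insert_le x {y}).trans (by simp)
    unfold deg at hp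
    omega
  obtain ⟨m, hm, hm'⟩ := Set.exists_mem_notMem_of_ncard_lt_ncard h
  simp at hm'
  exact ⟨m, hm, hm'.1, hm'.2⟩

lemma leaf_unique {T : SimpleGraph V} {l p q : V} (hl : deg T l = 1) (hp : T.Adj l p)
    (hq : T.Adj l q) : p = q := by
  obtain ⟨a, ha⟩ := Set.ncard_eq_one.mp hl
  have h1 : p ∈ T.neighborSet l := hp
  have h2 : q ∈ T.neighborSet l := hq
  rw [ha] at h1 h2
  exact h1.trans h2.symm

lemma leaf_edge_unique {T : SimpleGraph V} {l : V} {x y : T.edgeSet} (hl : deg T l = 1)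
    (hx : l ∈ x.1) (hy : l ∈ y.1) : x = y := by
  obtain ⟨p, hp⟩ := Sym2.mem_iff_exists.mp hx
  obtain ⟨q, hq⟩ := Sym2.mem_iff_exists.mp hy
  have h1 : T.Adj l p := by have := x.2; rw [hp] at this; exact this
  have h2 : T.Adj l q := by have := y.2; rw [hq] at this; exact this
  obtain rfl := leaf_unique hl h1 h2
  exact Subtype.ext (hp.trans hq.symm)

/-- removed leaves -/
def Rm (T : SimpleGraph V) (g : V → V) (l : V) : Prop := ∃ p, T.Adj p l ∧ 3 ≤ deg T p ∧ g p = l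

lemma exists_ext [Fintype V] {T : SimpleGraph V} (hT : T.IsTree) (g : V → V) {c a : V} (hca : c ≠ a) :
    ∃ l, deg T l = 1 ∧ T.dist c l = T.dist c a + T.dist a l ∧ (Rm T g l → l = a) := by
  classical
  let A : Finset V := Finset.univ.filter fun l => T.dist c l = T.dist c a + T.dist a l
  have hA : A.Nonempty := ⟨a, by simp [A]⟩
  obtain ⟨l, hlA, hmax⟩ := A.exists_max_image (fun l => T.dist c l) hA
  have hpos : 0 < T.dist c a := hT.connected.pos_dist_of_ne hca
  have memA : ∀ x, x ∈ A ↔ T.dist c x = T.dist c a + T.dist a x := by simp [A]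
  -- maximal elements are leaves
  have leafy : ∀ l ∈ A, (∀ x ∈ A, T.dist c x ≤ T.dist c l) → deg T l = 1 := by
    intro l hl hmax
    have hl' := (memA l).mp hl
    have hlc : l ≠ c := by rintro rfl; simp at hl'; omega
    obtain ⟨q, hq, hq'⟩ := exists_pred (hT.connected l c) hlc
    refine Set.ncard_eq_one.mpr ⟨q, ?_⟩
    ext m
    simp only [SimpleGraph.mem_neighborSet, Set.mem_singleton_iff]
    refine ⟨fun hm => ?_, by rintro rfl; exact hq⟩
    by_contra hne
    have e1 := T.dist_comm (u := q) (v := c)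
    have e2 := T.dist_comm (u := l) (v := c)
    have h1 := tree_step hT hq.symm hm (Ne.symm hne) (r := c) (by omega)
    have h2 : T.dist c m ≤ T.dist c a + T.dist a m := hT.connected.dist_triangle
    have h3 : T.dist a m ≤ T.dist a l + T.dist l m := hT.connected.dist_triangle
    rw [SimpleGraph.dist_eq_one_iff_adj.mpr hm] at h3
    have := hmax m ((memA m).mpr (by omega))
    omega
  have hl1 := leafy l hlA hmax
  have hl2 := (memA l).mp hlA
  by_cases hR : Rm T g l
  swap
  · exact ⟨l, hl1, hl2, fun h => absurd h hR⟩
  by_cases hla : l = a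
  · exact ⟨l, hl1, hl2, fun _ => hla⟩
  obtain ⟨p, hpl, hp3, hgp⟩ := hR
  obtain ⟨p', hp', hd'⟩ := exists_pred (hT.connected l a) hla
  obtain rfl := leaf_unique hl1 hpl.symm hp'
  have e1 := T.dist_comm (u := p) (v := a)
  have e2 := T.dist_comm (u := l) (v := a)
  have t1 : T.dist c l ≤ T.dist c p + T.dist p l := hT.connected.dist_triangle
  rw [SimpleGraph.dist_eq_one_iff_adj.mpr hpl] at t1
  have t2 : T.dist c p ≤ T.dist c a + T.dist a p := hT.connected.dist_triangle
  have hpc : p ≠ c := by rintro rfl; simp at t1; omega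
  obtain ⟨q, hq, hq'⟩ := exists_pred (hT.connected p c) hpc
  obtain ⟨m, hm, hml, hmq⟩ := exists_third hp3 l q
  have e3 := T.dist_comm (u := q) (v := c)
  have e4 := T.dist_comm (u := p) (v := c)
  have h1 := tree_step hT hq.symm hm hmq.symm (r := c) (by omega)
  have h2 : T.dist c m ≤ T.dist c a + T.dist a m := hT.connected.dist_triangle
  have h3 : T.dist a m ≤ T.dist a p + T.dist p m := hT.connected.dist_triangle
  rw [SimpleGraph.dist_eq_one_iff_adj.mpr hm] at h3
  have hmA : m ∈ A := (memA m).mpr (by omega)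
  have hm1 := leafy m hmA (fun x hx => (hmax x hx).trans (by omega))
  refine ⟨m, hm1, (memA m).mp hmA, ?_⟩
  rintro ⟨p2, hp2, -, hg2⟩
  obtain rfl := leaf_unique hm1 hm.symm hp2.symm
  exact absurd (hg2.symm.trans hgp) hml

/-- the edge at a leaf, distance estimate -/
lemma leaf_edge_dist {T : SimpleGraph V} (hT : T.IsTree) {e x : T.edgeSet} {a l : V} (hl : deg T l = 1)
    (ha : a ∈ e.1) (hx : l ∈ x.1) : T.lineGraph.dist e x ≤ T.dist a l := by
  obtain ⟨p, hp⟩ := Sym2.mem_iff_exists.mp hx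
  have hlp : T.Adj l p := by have := x.2; rw [hp] at this; exact this
  by_cases hla : l = a
  · subst hla
    obtain ⟨b, hb⟩ := Sym2.mem_iff_exists.mp ha
    have hlb : T.Adj l b := by have := e.2; rw [hb] at this; exact this
    obtain rfl := leaf_unique hl hlp hlb
    have : e = x := Subtype.ext (hb.trans hp.symm)
    simp [this]
  · obtain ⟨p', hp', hd'⟩ := exists_pred (hT.connected l a) hla
    obtain rfl := leaf_unique hl hlp hp'
    have h1 := line_dist_le hT.connected (e := e) (f := x) (v := p) ha (by rw [hp]; simp)
    have e1 := T.dist_comm (u := p) (v := a)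
    have e2 := T.dist_comm (u := l) (v := a)
    omega

/-- the candidate set -/
def S0 (T : SimpleGraph V) (g : V → V) : Set T.edgeSet :=
  {x | ∃ l ∈ x.1, deg T l = 1 ∧ ¬ Rm T g l}

lemma exists_edge {T : SimpleGraph V} {l : V} (hl : deg T l = 1) :
    ∃ x : T.edgeSet, l ∈ x.1 := by
  obtain ⟨a, ha⟩ := Set.ncard_eq_one.mp hl
  have : a ∈ T.neighborSet l := by rw [ha]; rfl
  exact ⟨⟨s(l, a), this⟩, by simp⟩

lemma claim [Fintype V] {T : SimpleGraph V} (hT : T.IsTree) (g : V → V) {e f : T.edgeSet}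
    (hne : e ≠ f) : ∃ x ∈ S0 T g,
      T.lineGraph.dist f e + T.lineGraph.dist e x ≤ T.lineGraph.dist f x ∨
      ((∃ a ∈ e.1, deg T a = 1 ∧ Rm T g a) ∧
        T.lineGraph.dist f e + T.lineGraph.dist e x ≤ T.lineGraph.dist f x + 1) := by
  obtain ⟨c, hc, a, ha, hd⟩ := exists_far hT hne
  have hca : c ≠ a := by rintro rfl; simp at hd
  obtain ⟨l, hl, hl2, hR⟩ := exists_ext hT g hca
  by_cases hRl : Rm T g l
  swap
  · obtain ⟨x, hx⟩ := exists_edge hl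
    refine ⟨x, ⟨l, hx, hl, hRl⟩, Or.inl ?_⟩
    have h1 := leaf_edge_dist hT hl ha hx
    have h2 := le_line_dist hT.connected hc hx
    omega
  obtain rfl := hR hRl
  obtain ⟨b, hbl, hb3, hgb⟩ := id hRl
  have hpos : 0 < T.lineGraph.dist f e := (line_reach hT.connected f e).pos_dist_of_ne hne.symm
  obtain ⟨b', hb', hd'⟩ := exists_pred (hT.connected l c) hca.symm
  obtain rfl := leaf_unique hl hbl.symm hb'
  have e1 := T.dist_comm (u := b) (v := c)
  have e2 := T.dist_comm (u := l) (v := c)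
  have hbc : b ≠ c := by rintro rfl; simp at hd'; omega
  obtain ⟨q, hq, hq'⟩ := exists_pred (hT.connected b c) hbc
  obtain ⟨m, hm, hml, hmq⟩ := exists_third hb3 l q
  have e3 := T.dist_comm (u := q) (v := c)
  have h1 := tree_step hT hq.symm hm hmq.symm (r := c) (by omega)
  obtain ⟨k, hk, hk2, hkR⟩ := exists_ext hT g (c := c) (a := m) (by rintro rfl; simp at h1)
  have hkn : ¬ Rm T g k := by
    intro h
    obtain rfl := hkR h
    obtain ⟨p2, hp2, -, hg2⟩ := h
    obtain rfl := leaf_unique hk hm.symm hp2.symm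
    exact hml (hg2.symm.trans hgb)
  obtain ⟨x, hx⟩ := exists_edge hk
  refine ⟨x, ⟨k, hx, hk, hkn⟩, Or.inr ⟨⟨l, ha, hl, hRl⟩, ?_⟩⟩
  have h2 := le_line_dist hT.connected hc hx
  let e' : T.edgeSet := ⟨s(b, m), hm⟩
  have h3 := leaf_edge_dist hT (e := e') (a := m) hk (by simp [e']) hx
  have hbe : b ∈ e.1 := by
    obtain ⟨b2, hb2⟩ := Sym2.mem_iff_exists.mp ha
    have hlb : T.Adj l b2 := by have := e.2; rw [hb2] at this; exact this
    obtain rfl := leaf_unique hl hlb hbl.symm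
    rw [hb2]; simp
  have h4 := line_dist_le hT.connected (f := e') (v := b) hbe (by simp [e'])
  have h5 := (line_reach hT.connected e e').dist_triangle_left x
  simp only [SimpleGraph.dist_self] at h4
  omega

lemma drs [Fintype V] {T : SimpleGraph V} (hT : T.IsTree) (g : V → V) :
    IsDoublyResolvingSet T.lineGraph (S0 T g) := by
  intro e f hne
  obtain ⟨x, hx, h1⟩ := claim hT g hne
  obtain ⟨y, hy, h2⟩ := claim hT g hne.symm
  refine ⟨x, hx, y, hy, fun h => ?_⟩
  have hpos : 0 < T.lineGraph.dist f e := (line_reach hT.connected f e).pos_dist_of_ne hne.symm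
  have e1 := T.lineGraph.dist_comm (u := f) (v := e)
  rcases h1 with h1 | ⟨⟨a, ha, ha1, p, hp, hp3, hgp⟩, h1⟩
  · rcases h2 with h2 | ⟨-, h2⟩ <;> omega
  rcases h2 with h2 | ⟨⟨c, hc, hc1, q, hq, hq3, hgq⟩, h2⟩
  · omega
  have hd : T.lineGraph.dist e f = 1 := by omega
  obtain ⟨-, w, hw1, hw2⟩ := SimpleGraph.dist_eq_one_iff_adj.mp hd
  obtain ⟨b, hb⟩ := Sym2.mem_iff_exists.mp ha
  have hab : T.Adj a b := by have := e.2; rw [hb] at this; exact this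
  obtain rfl := leaf_unique ha1 hab hp.symm
  obtain ⟨d, hd⟩ := Sym2.mem_iff_exists.mp hc
  have hcd : T.Adj c d := by have := f.2; rw [hd] at this; exact this
  obtain rfl := leaf_unique hc1 hcd hq.symm
  change w ∈ e.1 at hw1
  change w ∈ f.1 at hw2
  rw [hb, Sym2.mem_iff] at hw1
  rw [hd, Sym2.mem_iff] at hw2
  rcases hw1 with rfl | rfl <;> rcases hw2 with h | h
  · subst h
    obtain rfl := leaf_unique ha1 hab hcd
    exact hne (Subtype.ext (hb.trans hd.symm))
  · subst h; omega
  · subst h; omega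
  · subst h
    have : a = c := hgp.symm.trans hgq
    subst this
    exact hne (Subtype.ext (hb.trans hd.symm))

lemma S0_card [Fintype V] {T : SimpleGraph V} : ∃ g : V → V, (S0 T g).ncard ≤
    {v : V | deg T v = 1}.ncard -
        {v : V | 3 ≤ deg T v ∧ ∃ w, T.Adj v w ∧ deg T w = 1}.ncard := by
  classical
  let g : V → V := fun v => if h : ∃ w, T.Adj v w ∧ deg T w = 1 then h.choose else v
  have hg : ∀ v, (∃ w, T.Adj v w ∧ deg T w = 1) → T.Adj v (g v) ∧ deg T (g v) = 1 := by
    intro v h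
    simp only [g, dif_pos h]
    exact h.choose_spec
  refine ⟨g, ?_⟩
  set L := {v : V | deg T v = 1} with hL
  set X := {v : V | 3 ≤ deg T v ∧ ∃ w, T.Adj v w ∧ deg T w = 1} with hX
  have hinj : Set.InjOn g X := by
    intro u hu v hv huv
    have h1 := hg u hu.2
    have h2 := hg v hv.2
    rw [← huv] at h2
    exact leaf_unique h1.2 h1.1.symm h2.1.symm
  have hsub : g '' X ⊆ L := by
    rintro _ ⟨v, hv, rfl⟩
    exact (hg v hv.2).2
  have hc1 : (L \ g '' X).ncard = L.ncard - X.ncard := by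
    rw [Set.ncard_sdiff hsub, hinj.ncard_image]
  rw [← hc1]
  have hch : ∀ x : T.edgeSet, ∃ l, x ∈ S0 T g → (l ∈ x.1 ∧ deg T l = 1 ∧ ¬ Rm T g l) := by
    intro x
    by_cases hx : x ∈ S0 T g
    · obtain ⟨l, h⟩ := id hx
      exact ⟨l, fun _ => h⟩
    · obtain ⟨⟨a, b⟩, -⟩ := id x
      exact ⟨a, fun h => absurd h hx⟩
  choose h hh using hch
  refine Set.ncard_le_ncard_of_injOn h ?_ ?_
  · intro x hx
    obtain ⟨h1, h2, h3⟩ := hh x hx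
    refine ⟨h2, ?_⟩
    rintro ⟨v, hv, hv'⟩
    exact h3 ⟨v, hv' ▸ (hg v hv.2).1, hv.1, hv'⟩
  · intro x hx y hy hxy
    obtain ⟨h1, h2, h3⟩ := hh x hx
    obtain ⟨k1, -, -⟩ := hh y hy
    rw [← hxy] at k1
    exact leaf_edge_unique h2 h1 k1

lemma leaf_not_adj [Fintype V] {T : SimpleGraph V} (hT : T.IsTree) (hcard : 3 ≤ Fintype.card V)
    {l k : V} (hl : deg T l = 1) (hk : deg T k = 1) (h : T.Adj l k) : False := by
  classical
  have : ∃ w, w ∉ ({l, k} : Finset V) := by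
    by_contra hc
    push Not at hc
    have h1 : ({l, k} : Finset V) = Finset.univ := Finset.eq_univ_iff_forall.mpr hc
    have h2 : ({l, k} : Finset V).card ≤ 2 := Finset.card_le_two
    rw [h1, Finset.card_univ] at h2
    omega
  obtain ⟨w, hw⟩ := this
  simp only [Finset.mem_insert, Finset.mem_singleton, not_or] at hw
  obtain ⟨a, ha, ha'⟩ := exists_pred (hT.connected l w) (Ne.symm hw.1)
  obtain ⟨b, hb, hb'⟩ := exists_pred (hT.connected k w) (Ne.symm hw.2)
  obtain rfl := leaf_unique hl h ha
  obtain rfl := leaf_unique hk h.symm hb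
  omega

lemma twin_le {T : SimpleGraph V} (hT : T.IsTree) {l k p : V} (hl : deg T l = 1)
    (hlp : T.Adj l p) (hkp : T.Adj k p) {x : T.edgeSet} (hx : (⟨s(l, p), hlp⟩ : T.edgeSet) ≠ x) :
    T.lineGraph.dist ⟨s(k, p), hkp⟩ x ≤ T.lineGraph.dist ⟨s(l, p), hlp⟩ x := by
  obtain ⟨w, hw, hw'⟩ := exists_pred (line_reach hT.connected _ x) hx
  obtain ⟨hne, u, hu1, hu2⟩ := hw
  change u ∈ s(l, p) at hu1
  change u ∈ w.1 at hu2
  rw [Sym2.mem_iff] at hu1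
  rcases hu1 with rfl | rfl
  · exact absurd (leaf_edge_unique hl (by simp) hu2) hne
  · have h1 := line_dist_le hT.connected (e := ⟨s(k, u), hkp⟩) (f := w) (u := u) (by simp) hu2
    have h2 := (line_reach hT.connected ⟨s(k, u), hkp⟩ w).dist_triangle_left x
    simp only [SimpleGraph.dist_self] at h1
    omega

lemma lower [Fintype V] {T : SimpleGraph V} (hT : T.IsTree) (hcard : 3 ≤ Fintype.card V)
    {S : Set T.edgeSet} (hS : IsDoublyResolvingSet T.lineGraph S) :
    {v : V | deg T v = 1}.ncard ≤ S.ncard +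
        {v : V | 3 ≤ deg T v ∧ ∃ w, T.Adj v w ∧ deg T w = 1}.ncard := by
  classical
  set X := {v : V | 3 ≤ deg T v ∧ ∃ w, T.Adj v w ∧ deg T w = 1} with hX
  have hpar : ∀ l, ∃ p, deg T l = 1 → T.Adj l p := by
    intro l
    by_cases hl : deg T l = 1
    · obtain ⟨a, ha⟩ := Set.ncard_eq_one.mp hl
      have : a ∈ T.neighborSet l := by rw [ha]; rfl
      exact ⟨a, fun _ => this⟩
    · exact ⟨l, fun h => absurd h hl⟩
  choose par hpar using hpar
  let A : Set V := {l | deg T l = 1 ∧ ∃ x ∈ S, l ∈ x.1}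
  let B : Set V := {l | deg T l = 1 ∧ ∀ x ∈ S, l ∉ x.1}
  have hAB : {v : V | deg T v = 1} ⊆ A ∪ B := by
    intro v hv
    by_cases h : ∃ x ∈ S, v ∈ x.1
    · exact Or.inl ⟨hv, h⟩
    · push Not at h
      exact Or.inr ⟨hv, h⟩
  have hA : A.ncard ≤ S.ncard := by
    by_cases hAe : A = ∅
    · simp [hAe]
    obtain ⟨l0, hl0, x0, hx0, -⟩ := Set.nonempty_iff_ne_empty.mpr hAe
    have hch : ∀ l, ∃ x : T.edgeSet, l ∈ A → x ∈ S ∧ l ∈ x.1 := by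
      intro l
      by_cases hl : l ∈ A
      · obtain ⟨x, hx⟩ := hl.2
        exact ⟨x, fun _ => hx⟩
      · exact ⟨x0, fun h => absurd h hl⟩
    choose E hE using hch
    refine Set.ncard_le_ncard_of_injOn E (fun l hl => (hE l hl).1) ?_ (Set.toFinite _)
    intro l hl k hk hlk
    by_contra hne
    have h1 := (hE l hl).2
    have h2 := (hE k hk).2
    rw [← hlk] at h2
    have h3 := (Sym2.mem_and_mem_iff hne).mp ⟨h1, h2⟩
    have h4 := (E l).2
    rw [h3] at h4
    exact leaf_not_adj hT hcard hl.1 hk.1 h4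
  have hB : B.ncard ≤ X.ncard := by
    refine Set.ncard_le_ncard_of_injOn par ?_ ?_
    · rintro l ⟨hl, hlS⟩
      have hlp := hpar l hl
      refine ⟨?_, l, hlp.symm, hl⟩
      by_contra hlt
      have h1 : deg T (par l) ≠ 1 := fun h => leaf_not_adj hT hcard hl h hlp
      have h0 : deg T (par l) ≠ 0 := by
        intro h
        have h := (Set.ncard_eq_zero (Set.toFinite _)).mp h
        have h' : l ∈ T.neighborSet (par l) := hlp.symm
        rw [h] at h'
        exact h'
      have h2 : (T.neighborSet (par l)).ncard = 2 := by unfold deg at *; omega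
      obtain ⟨q, hq, hql⟩ := Set.exists_ne_of_one_lt_ncard (s := T.neighborSet (par l)) (by omega) l
      change T.Adj _ _ at hq
      have hall : ∀ w, T.Adj (par l) w → w = l ∨ w = q := by
        intro w hw
        obtain ⟨a, b, hab, hN⟩ := Set.ncard_eq_two.mp h2
        have i1 : w ∈ T.neighborSet (par l) := hw
        have i2 : q ∈ T.neighborSet (par l) := hq
        have i3 : l ∈ T.neighborSet (par l) := hlp.symm
        rw [hN] at i1 i2 i3
        simp only [Set.mem_insert_iff, Set.mem_singleton_iff] at i1 i2 i3
        grind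
      let e : T.edgeSet := ⟨s(l, par l), hlp⟩
      let e' : T.edgeSet := ⟨s(par l, q), hq⟩
      have hne : e ≠ e' := by
        intro h
        have : l ∈ e'.1 := by rw [← h]; simp [e]
        simp only [e', Sym2.mem_iff] at this
        rcases this with h | h
        · exact hlp.ne h
        · exact hql h.symm
      have key : ∀ x ∈ S, T.lineGraph.dist e' x + 1 = T.lineGraph.dist e x := by
        intro x hx
        have hxe : e ≠ x := by rintro rfl; exact hlS _ hx (by simp [e])
        obtain ⟨w, hw, hw'⟩ := exists_pred (line_reach hT.connected e x) hxe
        obtain ⟨hwne, u, hu1, hu2⟩ := hw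
        change u ∈ s(l, par l) at hu1
        change u ∈ w.1 at hu2
        rw [Sym2.mem_iff] at hu1
        rcases hu1 with rfl | rfl
        · exact absurd (leaf_edge_unique hl (by simp [e]) hu2) hwne
        · obtain ⟨z, hz⟩ := Sym2.mem_iff_exists.mp hu2
          have hz' : T.Adj (par l) z := by have := w.2; rw [hz] at this; exact this
          rcases hall z hz' with rfl | rfl
          · exact absurd (Subtype.ext (by rw [hz]; exact Sym2.eq_swap)) hwne
          · have : w = e' := Subtype.ext hz
            rw [← this]; exact hw'
      obtain ⟨x, hx, y, hy, hxy⟩ := hS e e' hne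
      have := key x hx
      have := key y hy
      omega
    · rintro l ⟨hl, hlS⟩ k ⟨hk, hkS⟩ hlk
      by_contra hne
      have hlp := hpar l hl
      have hkp := hpar k hk
      rw [← hlk] at hkp
      obtain ⟨x, hx, y, hy, hxy⟩ := hS ⟨s(l, par l), hlp⟩ ⟨s(k, par l), hkp⟩ (by
        intro h
        have h' : s(l, par l) = s(k, par l) := congrArg Subtype.val h
        exact hne (Sym2.congr_left.mp h'))
      have key : ∀ x ∈ S, T.lineGraph.dist ⟨s(l, par l), hlp⟩ x
          = T.lineGraph.dist ⟨s(k, par l), hkp⟩ x := by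
        intro x hx
        refine le_antisymm (twin_le hT hk hkp hlp ?_) (twin_le hT hl hlp hkp ?_)
        · rintro rfl; exact hkS _ hx (by simp)
        · rintro rfl; exact hlS _ hx (by simp)
      rw [key x hx, key y hy] at hxy
      exact hxy rfl
  have h1 := Set.ncard_le_ncard hAB (Set.toFinite _)
  have h2 := Set.ncard_union_le A B
  omega

end PsiLine

/-- For a tree `T` with at least three vertices,
`Ψ(L(T)) = σ(T) - ex'(T)`, where `σ(T)` is the number of leaves of `T` and `ex'(T)`
is the number of strong exterior major vertices of `T` (major vertices, i.e., vertices of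
degree at least 3, adjacent to at least one leaf). -/
theorem psi_lineGraph_tree {V : Type*} [Fintype V] (T : SimpleGraph V)
    (hT : T.IsTree) (hcard : 3 ≤ Fintype.card V) :
    psi T.lineGraph =
      {v : V | deg T v = 1}.ncard -
        {v : V | 3 ≤ deg T v ∧ ∃ w, T.Adj v w ∧ deg T w = 1}.ncard := by
  obtain ⟨g, hg⟩ := PsiLine.S0_card (T := T)
  have hd := PsiLine.drs hT g
  apply le_antisymm
  · refine le_trans ?_ hg
    unfold psi
    exact Nat.sInf_le ⟨_, hd, rfl⟩
  · obtain ⟨S, hS, hS'⟩ := Nat.sInf_mem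
      (s := {n | ∃ S : Set T.edgeSet, IsDoublyResolvingSet T.lineGraph S ∧ S.ncard = n})
      ⟨_, _, hd, rfl⟩
    have := PsiLine.lower hT hcard hS
    unfold psi
    omega
end

section
/- For every integer k ≥ 2, the graph A_k satisfies Ψ(L(A_k)) = ⌈log₂(1 + k)⌉ = ⌈log₂(1 + Δ(A_k))⌉, where Ψ(L(A_k)) is the minimum cardinality of a doubly resolving set of the line graph L(A_k). -/
open SimpleGraph

variable {V : Type*}

/-- Number of pendant paths in `A_k`: `m = ⌈log₂ (1 + k)⌉`. -/
def akM (k : ℕ) : ℕ := Nat.clog 2 (1 + k)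

/-- The vertex set of the graph `A_k`:
`{u} ∪ {v_1, …, v_k} ∪ {w_0, …, w_{m-1}} ∪ {w'_0, …, w'_{m-1}}`. -/
abbrev AkVert (k : ℕ) : Type := (Unit ⊕ Fin k) ⊕ (Fin (akM k) ⊕ Fin (akM k))

/-- The vertex `u` of `A_k`. -/
def akU (k : ℕ) : AkVert k := Sum.inl (Sum.inl ())

/-- The vertex `v_{j+1}` of `A_k` (for `j : Fin k`, representing `v_1, …, v_k`). -/
def akV (k : ℕ) (j : Fin k) : AkVert k := Sum.inl (Sum.inr j)

/-- The vertex `w_i` of `A_k`. -/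
def akW (k : ℕ) (i : Fin (akM k)) : AkVert k := Sum.inr (Sum.inl i)

/-- The vertex `w'_i` of `A_k`. -/
def akW' (k : ℕ) (i : Fin (akM k)) : AkVert k := Sum.inr (Sum.inr i)

/-- The graph `A_k`: edges are `u v_j` for `1 ≤ j ≤ k`; `v_j w_i` whenever the `i`-th binary
digit of `j` is `0` (i.e. `⌊j / 2^i⌋ mod 2 = 0`, with `j` the 1-based label); and `w_i w'_i`
for `0 ≤ i ≤ m - 1`. -/
def akGraph (k : ℕ) : SimpleGraph (AkVert k) := SimpleGraph.fromRel (fun a b =>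
  (∃ j : Fin k, a = akU k ∧ b = akV k j) ∨
  (∃ (j : Fin k) (i : Fin (akM k)),
      a = akV k j ∧ b = akW k i ∧ ((j.val + 1) / 2 ^ i.val) % 2 = 0) ∨
  (∃ i : Fin (akM k), a = akW k i ∧ b = akW' k i))


set_option linter.unusedSimpArgs false
def bz {k : ℕ} (j : Fin k) (i : Fin (akM k)) : Prop := ((j.val + 1) / 2 ^ i.val) % 2 = 0

section adj
variable {k : ℕ}
lemma adj_uv (j : Fin k) : (akGraph k).Adj (akU k) (akV k j) := by
  simp [akGraph, akU, akV, akW, akW']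
lemma adj_vw (j : Fin k) (i : Fin (akM k)) (h : bz j i) : (akGraph k).Adj (akV k j) (akW k i) := by
  simp only [bz] at h
  simp [akGraph, akU, akV, akW, akW', h]
lemma adj_ww (i : Fin (akM k)) : (akGraph k).Adj (akW k i) (akW' k i) := by
  simp [akGraph, akU, akV, akW, akW']

def eU (j : Fin k) : (akGraph k).edgeSet := ⟨s(akU k, akV k j), adj_uv j⟩
def eW (j : Fin k) (i : Fin (akM k)) (h : bz j i) : (akGraph k).edgeSet :=
  ⟨s(akV k j, akW k i), adj_vw j i h⟩
def eS (i : Fin (akM k)) : (akGraph k).edgeSet := ⟨s(akW k i, akW' k i), adj_ww i⟩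

lemma edge_cases (e : (akGraph k).edgeSet) :
    (∃ j, e = eU j) ∨ (∃ j i h, e = eW j i h) ∨ ∃ i, e = eS i := by
  obtain ⟨e, he⟩ := e
  induction e with
  | _ a b =>
  rw [mem_edgeSet, akGraph, fromRel_adj] at he
  simp only [eU, eW, eS, bz]
  rcases he with ⟨-, (⟨j, rfl, rfl⟩ | ⟨j, i, rfl, rfl, h⟩ | ⟨i, rfl, rfl⟩) |
    (⟨j, rfl, rfl⟩ | ⟨j, i, rfl, rfl, h⟩ | ⟨i, rfl, rfl⟩)⟩
  · exact Or.inl ⟨j, rfl⟩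
  · exact Or.inr (Or.inl ⟨j, i, h, rfl⟩)
  · exact Or.inr (Or.inr ⟨i, rfl⟩)
  · exact Or.inl ⟨j, Subtype.ext Sym2.eq_swap⟩
  · exact Or.inr (Or.inl ⟨j, i, h, Subtype.ext Sym2.eq_swap⟩)
  · exact Or.inr (Or.inr ⟨i, Subtype.ext Sym2.eq_swap⟩)

lemma UU (j l : Fin k) : (akGraph k).lineGraph.Adj (eU j) (eU l) ↔ j ≠ l := by
  simp [lineGraph_adj_iff_exists, eU, akU, akV, akW, akW']
lemma UW (j l : Fin k) (i h) : (akGraph k).lineGraph.Adj (eU j) (eW l i h) ↔ j = l := by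
  simp [lineGraph_adj_iff_exists, eU, eW, akU, akV, akW, akW']
lemma US (j : Fin k) (i) : ¬ (akGraph k).lineGraph.Adj (eU j) (eS i) := by
  simp [lineGraph_adj_iff_exists, eU, eS, akU, akV, akW, akW']
lemma WW (j l : Fin k) (i i' h h') : (akGraph k).lineGraph.Adj (eW j i h) (eW l i' h') ↔
    (j ≠ l ∧ i = i') ∨ (j = l ∧ i ≠ i') := by
  simp [lineGraph_adj_iff_exists, eW, akU, akV, akW, akW']
  grind
lemma WS (j : Fin k) (i i' h) : (akGraph k).lineGraph.Adj (eW j i h) (eS i') ↔ i = i' := by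
  simp [lineGraph_adj_iff_exists, eW, eS, akU, akV, akW, akW']
lemma SS (i i' : Fin (akM k)) : ¬ (akGraph k).lineGraph.Adj (eS i) (eS i') := by
  simp [lineGraph_adj_iff_exists, eW, eS, akU, akV, akW, akW']
end adj

section bits
variable {k : ℕ}
lemma label_lt (j : Fin k) : j.val + 1 < 2 ^ akM k := by
  have := Nat.le_pow_clog (b := 2) (by norm_num) (1 + k)
  have := j.2
  unfold akM
  omega

lemma bits_ext (a b : ℕ) (ha : a < 2 ^ akM k) (hb : b < 2 ^ akM k)
    (h : ∀ i : Fin (akM k), (a / 2 ^ i.val) % 2 = 0 ↔ (b / 2 ^ i.val) % 2 = 0) : a = b := by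
  apply Nat.eq_of_testBit_eq
  intro i
  by_cases hi : i < akM k
  · have := h ⟨i, hi⟩
    simp only [] at this
    rw [Nat.testBit_eq_decide_div_mod_eq, Nat.testBit_eq_decide_div_mod_eq]
    congr 1
    apply propext
    omega
  · have hp : 2 ^ akM k ≤ 2 ^ i := Nat.pow_le_pow_right (by norm_num) (by omega)
    rw [Nat.testBit_lt_two_pow (by omega), Nat.testBit_lt_two_pow (by omega)]

lemma bz_ext {j l : Fin k} (h : ∀ i, bz j i ↔ bz l i) : j = l := by
  have := bits_ext (j.val + 1) (l.val + 1) (label_lt j) (label_lt l) h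
  exact Fin.ext (by omega)

lemma exists_one (j : Fin k) : ∃ i, ¬ bz j i := by
  by_contra! hc
  have := bits_ext (k := k) (j.val + 1) 0 (label_lt j) (by positivity) (by
    intro i
    simpa [bz] using hc i)
  omega

lemma exists_zero (hk : 2 ≤ k) (i : Fin (akM k)) : ∃ j : Fin k, bz j i := by
  by_cases hi : i.val = 0
  · exact ⟨⟨1, by omega⟩, by simp [bz, hi]⟩
  · refine ⟨⟨0, by omega⟩, ?_⟩
    have : 1 < 2 ^ i.val := Nat.one_lt_two_pow hi
    simp [bz, Nat.div_eq_of_lt this]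

lemma exists_bit_one (i : Fin (akM k)) : ∃ j : Fin k, ¬ bz j i := by
  have h := Nat.pow_lt_of_lt_clog i.2
  have hp : 0 < 2 ^ i.val := by positivity
  refine ⟨⟨2 ^ i.val - 1, by omega⟩, ?_⟩
  have : 2 ^ i.val - 1 + 1 = 2 ^ i.val := by omega
  simp [bz, this, Nat.div_self hp]

lemma two_le_m (hk : 2 ≤ k) : 2 ≤ akM k :=
  (Nat.lt_clog_iff_pow_lt (by norm_num)).2 (by omega)

lemma m_le : akM k ≤ k :=
  Nat.clog_le_of_le_pow (by have := Nat.lt_two_pow_self (n := k); omega)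
end bits

section dist
variable {k : ℕ}

open Classical in
noncomputable def pot (i : Fin (akM k)) (e : (akGraph k).edgeSet) : ℕ :=
  if akW' k i ∈ e.1 then 0 else if akW k i ∈ e.1 then 1 else
    if ∃ j, bz j i ∧ akV k j ∈ e.1 then 2 else 3

open Classical in
lemma pot_U (i : Fin (akM k)) (j : Fin k) : pot i (eU j) = if bz j i then 2 else 3 := by
  simp [pot, eU, akU, akV, akW, akW']

open Classical in
lemma pot_W (i i' : Fin (akM k)) (j : Fin k) (h) :
    pot i (eW j i' h) = if i = i' then 1 else if bz j i then 2 else 3 := by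
  simp [pot, eW, akU, akV, akW, akW']

open Classical in
lemma pot_S (i i' : Fin (akM k)) :
    pot i (eS i') = if i = i' then 0 else 3 := by
  simp [pot, eS, akU, akV, akW, akW']
  grind

lemma pot_lip (i : Fin (akM k)) (a b : (akGraph k).edgeSet) (hab : (akGraph k).lineGraph.Adj a b) :
    pot i a ≤ pot i b + 1 ∧ pot i b ≤ pot i a + 1 := by
  rcases edge_cases a with ⟨j, rfl⟩ | ⟨j, i₁, h, rfl⟩ | ⟨i₁, rfl⟩ <;>
  rcases edge_cases b with ⟨l, rfl⟩ | ⟨l, i₂, h', rfl⟩ | ⟨i₂, rfl⟩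
  · simp only [pot_U]; split_ifs <;> omega
  · rw [UW] at hab; subst hab
    simp only [pot_U, pot_W]; split_ifs <;> grind
  · exact (US _ _ hab).elim
  · have := hab.symm
    rw [UW] at this; subst this
    simp only [pot_U, pot_W]; split_ifs <;> grind
  · rw [WW] at hab
    simp only [pot_W]; split_ifs <;> grind
  · rw [WS] at hab; subst hab
    simp only [pot_S, pot_W]; split_ifs <;> grind
  · exact (US _ _ hab.symm).elim
  · have := hab.symm
    rw [WS] at this; subst this
    simp only [pot_S, pot_W]; split_ifs <;> grind
  · exact (SS _ _ hab).elim

lemma lg_conn (hk : 2 ≤ k) : (akGraph k).lineGraph.Connected := by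
  have key : ∀ e, (akGraph k).lineGraph.Reachable e (eU ⟨0, by omega⟩) := by
    have hU : ∀ j, (akGraph k).lineGraph.Reachable (eU j) (eU ⟨0, by omega⟩) := by
      intro j
      by_cases h : j = ⟨0, by omega⟩
      · rw [h]
      · exact ((UU _ _).2 h).reachable
    have hW : ∀ j i h, (akGraph k).lineGraph.Reachable (eW j i h) (eU ⟨0, by omega⟩) :=
      fun j i h => (((UW j j i h).2 rfl).symm.reachable).trans (hU j)
    intro e
    rcases edge_cases e with ⟨j, rfl⟩ | ⟨j, i₁, h, rfl⟩ | ⟨i₁, rfl⟩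
    · exact hU j
    · exact hW _ _ _
    · obtain ⟨j, hj⟩ := exists_zero hk i₁
      exact (((WS j i₁ i₁ hj).2 rfl).symm.reachable).trans (hW _ _ _)
  have : Nonempty (akGraph k).edgeSet := ⟨eU ⟨0, by omega⟩⟩
  exact ⟨fun a b => (key a).trans (key b).symm⟩

lemma pot_walk (i : Fin (akM k)) (a b : (akGraph k).edgeSet) (p : (akGraph k).lineGraph.Walk a b) :
    pot i a ≤ pot i b + p.length := by
  induction p with
  | nil => simp
  | cons h p ih =>
    have := (pot_lip i _ _ h).1
    simp only [Walk.length_cons]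
    omega

lemma pot_le (hk : 2 ≤ k) (i : Fin (akM k)) (a : (akGraph k).edgeSet) :
    pot i a ≤ (akGraph k).lineGraph.dist a (eS i) := by
  obtain ⟨p, hp⟩ := (lg_conn hk).exists_walk_length_eq_dist a (eS i)
  have := pot_walk i _ _ p
  rw [pot_S, if_pos rfl] at this
  omega

lemma dist_step (hk : 2 ≤ k) {a b : (akGraph k).edgeSet} (x) (h : (akGraph k).lineGraph.Adj a b) :
    (akGraph k).lineGraph.dist a x ≤ (akGraph k).lineGraph.dist b x + 1 := by
  have := (lg_conn hk).dist_triangle (u := a) (v := b) (w := x)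
  rw [dist_eq_one_iff_adj.2 h] at this
  omega

lemma dW0 (hk : 2 ≤ k) (j : Fin k) (i h) : (akGraph k).lineGraph.dist (eW j i h) (eS i) = 1 :=
  dist_eq_one_iff_adj.2 ((WS _ _ _ _).2 rfl)

lemma dW1 (hk : 2 ≤ k) (j : Fin k) (i i' h) (hi : i' ≠ i) (hb : bz j i) :
    (akGraph k).lineGraph.dist (eW j i' h) (eS i) = 2 := by
  have h1 := pot_le hk i (eW j i' h)
  rw [pot_W, if_neg hi.symm, if_pos hb] at h1
  have h2 := dist_step hk (eS i) ((WW j j i' i h hb).2 (Or.inr ⟨rfl, hi⟩))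
  rw [dW0 hk] at h2
  omega

lemma dW2 (hk : 2 ≤ k) (j : Fin k) (i i' h) (hb : ¬ bz j i) :
    3 ≤ (akGraph k).lineGraph.dist (eW j i' h) (eS i) := by
  have h1 := pot_le hk i (eW j i' h)
  have hi : i ≠ i' := by rintro rfl; exact hb h
  rwa [pot_W, if_neg hi, if_neg hb] at h1

lemma dU0 (hk : 2 ≤ k) (j : Fin k) (i) (hb : bz j i) :
    (akGraph k).lineGraph.dist (eU j) (eS i) = 2 := by
  have h1 := pot_le hk i (eU j)
  rw [pot_U, if_pos hb] at h1
  have h2 := dist_step hk (eS i) ((UW j j i hb).2 rfl)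
  rw [dW0 hk] at h2
  omega

lemma dU1 (hk : 2 ≤ k) (j : Fin k) (i) (hb : ¬ bz j i) :
    (akGraph k).lineGraph.dist (eU j) (eS i) = 3 := by
  have h1 := pot_le hk i (eU j)
  rw [pot_U, if_neg hb] at h1
  obtain ⟨l, hl⟩ := exists_zero hk i
  have h2 := dist_step hk (eS i) ((UU j l).2 (by rintro rfl; exact hb hl))
  rw [dU0 hk _ _ hl] at h2
  omega

lemma dS (hk : 2 ≤ k) (i i' : Fin (akM k)) (hi : i' ≠ i) :
    3 ≤ (akGraph k).lineGraph.dist (eS i') (eS i) := by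
  have h1 := pot_le hk i (eS i')
  rwa [pot_S, if_neg hi.symm] at h1

lemma walk_step {W : Type*} {G : SimpleGraph W} {a x : W} (p : G.Walk a x) (hp : 0 < p.length) :
    ∃ b, G.Adj a b ∧ G.dist b x + 1 ≤ p.length := by
  cases p with
  | nil => simp at hp
  | cons h q => exact ⟨_, h, by have := dist_le q; simpa using this⟩

lemma dSW (hk : 2 ≤ k) (i i' : Fin (akM k)) (hi : i' ≠ i) (j h) :
    (akGraph k).lineGraph.dist (eW j i' h) (eS i) ≤
    (akGraph k).lineGraph.dist (eS i') (eS i) := by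
  obtain ⟨p, hp⟩ := (lg_conn hk).exists_walk_length_eq_dist (eS i') (eS i)
  have h3 := dS hk i i' hi
  rw [← hp] at h3 ⊢
  obtain ⟨b, hb, hq⟩ := walk_step p (by omega)
  rcases edge_cases b with ⟨l, rfl⟩ | ⟨l, i₂, h', rfl⟩ | ⟨i₂, rfl⟩
  · exact (US _ _ hb.symm).elim
  · have := (WS _ _ _ _).1 hb.symm
    subst this
    by_cases hjl : j = l
    · subst hjl; omega
    · have := dist_step hk (eS i) ((WW j l i₂ i₂ h h').2 (Or.inl ⟨hjl, rfl⟩))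
      omega
  · exact (SS _ _ hb).elim
end dist

section resolve
variable {k : ℕ}

def Res (a b : (akGraph k).edgeSet) : Prop := ∃ i i' : Fin (akM k),
  ((akGraph k).lineGraph.dist a (eS i) : ℤ) - ((akGraph k).lineGraph.dist a (eS i') : ℤ) ≠
  ((akGraph k).lineGraph.dist b (eS i) : ℤ) - ((akGraph k).lineGraph.dist b (eS i') : ℤ)

lemma Res.symm {a b : (akGraph k).edgeSet} (h : Res a b) : Res b a := by
  obtain ⟨i, i', h⟩ := h
  exact ⟨i, i', h.symm⟩

lemma dU_le (hk : 2 ≤ k) (j : Fin k) (i) :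
    2 ≤ (akGraph k).lineGraph.dist (eU j) (eS i) ∧
    (akGraph k).lineGraph.dist (eU j) (eS i) ≤ 3 := by
  by_cases h : bz j i
  · rw [dU0 hk _ _ h]; omega
  · rw [dU1 hk _ _ h]; omega

lemma dW_ge (hk : 2 ≤ k) (j : Fin k) (i i' h) (hi : i' ≠ i) :
    2 ≤ (akGraph k).lineGraph.dist (eW j i' h) (eS i) := by
  by_cases hb : bz j i
  · rw [dW1 hk _ _ _ _ hi hb]
  · have := dW2 hk j i i' h hb; omega

lemma res_UU' (hk : 2 ≤ k) (j l : Fin k) (i) (h1 : ¬ bz j i) (h2 : bz l i) :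
    Res (eU j) (eU l) := by
  obtain ⟨i', hi'⟩ := exists_one l
  refine ⟨i, i', ?_⟩
  have := dU0 hk _ _ h2
  have := dU1 hk _ _ h1
  have := dU1 hk _ _ hi'
  have := dU_le hk j i'
  omega

lemma res_UU (hk : 2 ≤ k) (j l : Fin k) (h : j ≠ l) : Res (eU j) (eU l) := by
  have : ∃ i, ¬ (bz j i ↔ bz l i) := by
    by_contra! hc
    exact h (bz_ext hc)
  obtain ⟨i, hi⟩ := this
  by_cases h1 : bz j i
  · exact (res_UU' hk l j i (by tauto) h1).symm
  · exact res_UU' hk j l i h1 (by tauto)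

lemma res_UW (hk : 2 ≤ k) (j l : Fin k) (i h) : Res (eU j) (eW l i h) := by
  obtain ⟨i', hi'⟩ := exists_one l
  refine ⟨i, i', ?_⟩
  have := dW0 hk l i h
  have := dW2 hk l i' i h hi'
  have := dU_le hk j i
  have := dU_le hk j i'
  omega

lemma res_WW_aux (hk : 2 ≤ k) (j l : Fin k) (i h h') (i₀) (h1 : ¬ bz j i₀) (h2 : bz l i₀) :
    Res (eW j i h) (eW l i h') := by
  refine ⟨i, i₀, ?_⟩
  have := dW0 hk l i h'
  have := dW0 hk j i h
  have := dW2 hk j i₀ i h h1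
  have hi : i ≠ i₀ := by rintro rfl; exact h1 h
  have := dW1 hk l i₀ i h' hi h2
  omega

lemma res_WW (hk : 2 ≤ k) (j l : Fin k) (i i' h h') (hne : eW j i h ≠ eW l i' h') :
    Res (eW j i h) (eW l i' h') := by
  by_cases hi : i = i'
  · subst hi
    have : ∃ i, ¬ (bz j i ↔ bz l i) := by
      by_contra! hc
      have := bz_ext hc
      subst this
      exact hne rfl
    obtain ⟨i₀, hi⟩ := this
    by_cases h1 : bz j i₀
    · exact (res_WW_aux hk l j i h' h i₀ (by tauto) h1).symm
    · exact res_WW_aux hk j l i h h' i₀ h1 (by tauto)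
  · refine ⟨i, i', ?_⟩
    have := dW0 hk l i' h'
    have := dW0 hk j i h
    have := dW_ge hk j i' i h hi
    have := dW_ge hk l i i' h' (Ne.symm hi)
    omega

lemma exists_other (hk : 2 ≤ k) (i : Fin (akM k)) : ∃ i' : Fin (akM k), i ≠ i' := by
  have := two_le_m hk
  by_cases h : i.val = 0
  · exact ⟨⟨1, by omega⟩, fun hh => by rw [hh] at h; simp at h⟩
  · exact ⟨⟨0, by omega⟩, fun hh => by rw [hh] at h; simp at h⟩

lemma res_US (hk : 2 ≤ k) (j : Fin k) (i) : Res (eU j) (eS i) := by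
  obtain ⟨i', hi'⟩ := exists_other hk i
  refine ⟨i, i', ?_⟩
  have : (akGraph k).lineGraph.dist (eS i) (eS i) = 0 := SimpleGraph.dist_self
  have := dS hk i' i hi'
  have := dU_le hk j i
  have := dU_le hk j i'
  omega

lemma res_WS (hk : 2 ≤ k) (j : Fin k) (i h i') : Res (eW j i h) (eS i') := by
  have h0 : (akGraph k).lineGraph.dist (eS i') (eS i') = 0 := SimpleGraph.dist_self
  by_cases hi : i = i'
  · subst hi
    obtain ⟨i', hi'⟩ := exists_other hk i
    refine ⟨i, i', ?_⟩
    have := dW0 hk j i h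
    have := dSW hk i' i hi' j h
    omega
  · refine ⟨i, i', ?_⟩
    have := dW0 hk j i h
    have := dS hk i i' (Ne.symm hi)
    have := dW_ge hk j i' i h hi
    omega

lemma res_SS (hk : 2 ≤ k) (i i' : Fin (akM k)) (hi : i ≠ i') : Res (eS i) (eS i') := by
  refine ⟨i, i', ?_⟩
  have : (akGraph k).lineGraph.dist (eS i') (eS i') = 0 := SimpleGraph.dist_self
  have : (akGraph k).lineGraph.dist (eS i) (eS i) = 0 := SimpleGraph.dist_self
  have := dS hk i i' (Ne.symm hi)
  have := dS hk i' i hi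
  omega

lemma res_all (hk : 2 ≤ k) (a b : (akGraph k).edgeSet) (hab : a ≠ b) : Res a b := by
  rcases edge_cases a with ⟨j, rfl⟩ | ⟨j, i₁, h, rfl⟩ | ⟨i₁, rfl⟩ <;>
  rcases edge_cases b with ⟨l, rfl⟩ | ⟨l, i₂, h', rfl⟩ | ⟨i₂, rfl⟩
  · exact res_UU hk _ _ (by rintro rfl; exact hab rfl)
  · exact res_UW hk _ _ _ _
  · exact res_US hk _ _
  · exact (res_UW hk _ _ _ _).symm
  · exact res_WW hk _ _ _ _ _ _ hab
  · exact res_WS hk _ _ _ _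
  · exact (res_US hk _ _).symm
  · exact (res_WS hk _ _ _ _).symm
  · exact res_SS hk _ _ (by rintro rfl; exact hab rfl)

lemma eS_inj : Function.Injective (eS (k := k)) := by
  intro a b h
  have := congrArg Subtype.val h
  simpa [eS, akW, akW'] using this

lemma drs_range (hk : 2 ≤ k) :
    IsDoublyResolvingSet (akGraph k).lineGraph (Set.range (eS (k := k))) := by
  intro a b hab
  obtain ⟨i, i', h⟩ := res_all hk a b hab
  exact ⟨_, ⟨i, rfl⟩, _, ⟨i', rfl⟩, h⟩

lemma lower (hk : 2 ≤ k) (S : Set (akGraph k).edgeSet)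
    (hS : IsDoublyResolvingSet (akGraph k).lineGraph S) : Nat.clog 2 (1 + k) ≤ S.ncard := by
  classical
  have hfin : S.Finite := Set.toFinite S
  have : Nonempty (Fin k) := ⟨⟨0, by omega⟩⟩
  have hmin : ∀ x : (akGraph k).edgeSet, ∃ j₀ : Fin k, ∀ j,
      (akGraph k).lineGraph.dist (eU j₀) x ≤ (akGraph k).lineGraph.dist (eU j) x :=
    fun x => Finite.exists_min _
  choose m hm using hmin
  have hle : ∀ j x, (akGraph k).lineGraph.dist (eU j) x ≤
      (akGraph k).lineGraph.dist (eU (m x)) x + 1 := by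
    intro j x
    by_cases h : j = m x
    · rw [← h]; omega
    · exact dist_step hk x ((UU _ _).2 h)
  let f : Fin k → Finset (akGraph k).edgeSet := fun j => hfin.toFinset.filter
    (fun x => (akGraph k).lineGraph.dist (eU j) x = (akGraph k).lineGraph.dist (eU (m x)) x)
  have hne : ∀ j l : Fin k, j ≠ l → (eU j : (akGraph k).edgeSet) ≠ eU l :=
    fun j l h => ((UU j l).2 h).ne
  have hinj : Function.Injective f := by
    intro j l hjl
    by_contra hc
    obtain ⟨x, hx, y, hy, h⟩ := hS _ _ (hne j l hc)
    have e : ∀ x ∈ S, (akGraph k).lineGraph.dist (eU j) x = (akGraph k).lineGraph.dist (eU l) x := by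
      intro x hx
      have h1 : x ∈ f j ↔ x ∈ f l := by rw [hjl]
      simp only [f, Finset.mem_filter, Set.Finite.mem_toFinset, hx, true_and] at h1
      have := hm x j
      have := hm x l
      have := hle j x
      have := hle l x
      omega
    rw [e x hx, e y hy] at h
    exact h rfl
  have hmiss : ¬ ((∃ j, f j = ∅) ∧ ∃ l, f l = hfin.toFinset) := by
    rintro ⟨⟨j, hj⟩, l, hl⟩
    have e : ∀ x ∈ S, (akGraph k).lineGraph.dist (eU j) x =
        (akGraph k).lineGraph.dist (eU l) x + 1 := by
      intro x hx
      have h1 : x ∉ f j := by rw [hj]; simp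
      have h2 : x ∈ f l := by rw [hl]; simpa using hx
      simp only [f, Finset.mem_filter, Set.Finite.mem_toFinset, hx, true_and] at h1 h2
      have := hm x j
      have := hle j x
      omega
    by_cases hjl : j = l
    · subst hjl
      obtain ⟨x, hx, -⟩ := hS _ _ (hne (⟨0, by omega⟩ : Fin k) ⟨1, by omega⟩ (by simp))
      have := e x hx
      omega
    · obtain ⟨x, hx, y, hy, h⟩ := hS _ _ (hne j l hjl)
      have := e x hx
      have := e y hy
      omega
  have hT : ∃ T ∈ hfin.toFinset.powerset, ∀ j, f j ≠ T := by
    by_cases h : ∃ j, f j = ∅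
    · exact ⟨hfin.toFinset, by simp, fun l hl => hmiss ⟨h, l, hl⟩⟩
    · exact ⟨∅, by simp, fun l hl => h ⟨l, hl⟩⟩
  obtain ⟨T, hT, hTf⟩ := hT
  have hsub : insert T (Finset.univ.image f) ⊆ hfin.toFinset.powerset := by
    intro A hA
    rcases Finset.mem_insert.1 hA with rfl | hA
    · exact hT
    · obtain ⟨j, -, rfl⟩ := Finset.mem_image.1 hA
      exact Finset.mem_powerset.2 (Finset.filter_subset _ _)
  have hcard := Finset.card_le_card hsub
  rw [Finset.card_insert_of_notMem (by simpa using hTf), Finset.card_image_of_injective _ hinj,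
    Finset.card_powerset, Finset.card_univ, Fintype.card_fin,
    ← Set.ncard_eq_toFinset_card S hfin] at hcard
  exact Nat.clog_le_of_le_pow (by omega)

lemma psi_eq (hk : 2 ≤ k) : psi (akGraph k).lineGraph = Nat.clog 2 (1 + k) := by
  have hmem : Nat.clog 2 (1 + k) ∈ {n | ∃ S : Set (akGraph k).edgeSet,
      IsDoublyResolvingSet (akGraph k).lineGraph S ∧ S.ncard = n} := by
    refine ⟨_, drs_range hk, ?_⟩
    rw [← Set.image_univ, Set.ncard_image_of_injective _ eS_inj, Set.ncard_univ, Nat.card_fin]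
    rfl
  apply le_antisymm
  · exact Nat.sInf_le hmem
  · apply le_csInf ⟨_, hmem⟩
    rintro n ⟨S, hS, rfl⟩
    exact lower hk S hS

lemma ncard_lt_fin {n : ℕ} (p : Fin n → Prop) (i : Fin n) (hi : ¬ p i) :
    {j | p j}.ncard + 1 ≤ n := by
  have : ({j | p j} : Set (Fin n)) ⊂ Set.univ := by
    rw [Set.ssubset_univ_iff]
    intro h
    exact hi (by have : i ∈ {j | p j} := by rw [h]; trivial
                 exact this)
  have := Set.ncard_lt_ncard this
  rw [Set.ncard_univ, Nat.card_fin] at this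
  omega

lemma deg_le (hk : 2 ≤ k) (v : AkVert k) : deg (akGraph k) v ≤ k := by
  unfold deg
  rcases v with (⟨⟩ | j) | (i | i)
  · have : (akGraph k).neighborSet (Sum.inl (Sum.inl ())) ⊆ Set.range (akV k) := by
      intro x hx
      simp [akGraph, akU, akV, akW, akW'] at hx
      obtain ⟨-, y, rfl⟩ := hx
      exact ⟨y, rfl⟩
    refine (Set.ncard_le_ncard this).trans ?_
    rw [← Set.image_univ]
    refine (Set.ncard_image_le).trans ?_
    rw [Set.ncard_univ, Nat.card_fin]
  · have : (akGraph k).neighborSet (Sum.inl (Sum.inr j)) ⊆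
        insert (akU k) (akW k '' {i | bz j i}) := by
      intro x hx
      simp [akGraph, akU, akV, akW, akW'] at hx
      simp [bz]
      grind [akU, akW]
    refine (Set.ncard_le_ncard this).trans ?_
    refine (Set.ncard_insert_le _ _).trans ?_
    obtain ⟨i, hi⟩ := exists_one j
    have h1 := ncard_lt_fin (fun i => bz j i) i hi
    have h2 := Set.ncard_image_le (f := akW k) (s := {i | bz j i})
    have := m_le (k := k)
    omega
  · have : (akGraph k).neighborSet (Sum.inr (Sum.inl i)) ⊆
        insert (akW' k i) (akV k '' {j | bz j i}) := by
      intro x hx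
      simp [akGraph, akU, akV, akW, akW'] at hx
      simp [bz]
      grind [akV, akW']
    refine (Set.ncard_le_ncard this).trans ?_
    refine (Set.ncard_insert_le _ _).trans ?_
    obtain ⟨j, hj⟩ := exists_bit_one i
    have h1 := ncard_lt_fin (fun j => bz j i) j hj
    have h2 := Set.ncard_image_le (f := akV k) (s := {j | bz j i})
    omega
  · have : (akGraph k).neighborSet (Sum.inr (Sum.inr i)) ⊆ {akW k i} := by
      intro x hx
      simp [akGraph, akU, akV, akW, akW'] at hx
      simp
      grind [akW]
    refine (Set.ncard_le_ncard this).trans ?_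
    rw [Set.ncard_singleton]
    omega

lemma maxDeg_eq (hk : 2 ≤ k) : maxDeg (akGraph k) = k := by
  apply IsGreatest.csSup_eq
  constructor
  · refine ⟨akU k, le_antisymm (deg_le hk _) ?_⟩
    have : akV k '' Set.univ ⊆ (akGraph k).neighborSet (akU k) := by
      rintro _ ⟨j, -, rfl⟩
      exact adj_uv j
    have h := Set.ncard_le_ncard this
    rw [Set.ncard_image_of_injective _ (by intro a b h; simpa [akV] using h), Set.ncard_univ,
      Nat.card_fin] at h
    exact h
  · rintro _ ⟨v, rfl⟩
    exact deg_le hk v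
end resolve

/-- For every integer `k ≥ 2`,
`Ψ(L(A_k)) = ⌈log₂ (1 + k)⌉ = ⌈log₂ (1 + Δ(A_k))⌉`. -/
theorem psi_lineGraph_akGraph (k : ℕ) (hk : 2 ≤ k) :
    psi (akGraph k).lineGraph = Nat.clog 2 (1 + k) ∧
      Nat.clog 2 (1 + k) = Nat.clog 2 (1 + maxDeg (akGraph k)) := by
  exact ⟨psi_eq hk, by rw [maxDeg_eq hk]⟩
end

section
/- For every integer k ≥ 2, the maximum degree of the graph A_k equals k, i.e., Δ(A_k) = k. -/
open SimpleGraph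

variable {V : Type*}

theorem ak_ncard_aux {α : Type*} {n : ℕ} (S : Set α) (a : α) (f : Fin n → α) (x : Fin n)
    (h : S ⊆ insert a (f '' {x}ᶜ)) : S.ncard ≤ n := by
  have h1 : S.ncard ≤ (insert a (f '' {x}ᶜ)).ncard :=
    Set.ncard_le_ncard h (Set.toFinite _)
  have h2 := Set.ncard_insert_le a (f '' {x}ᶜ)
  have h3 : (f '' {x}ᶜ).ncard ≤ ({x}ᶜ : Set (Fin n)).ncard := Set.ncard_image_le (Set.toFinite _)
  have h4 := Set.ncard_add_ncard_compl ({x} : Set (Fin n))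
  rw [Set.ncard_singleton, Nat.card_eq_fintype_card, Fintype.card_fin] at h4
  omega

theorem ak_lt_akM (k i : ℕ) : i < akM k ↔ 2 ^ i < 1 + k := by
  unfold akM
  exact Nat.lt_clog_iff_pow_lt (by norm_num)

theorem akM_le (k : ℕ) : akM k ≤ k := by
  by_contra h
  have h1 := (ak_lt_akM k k).1 (by omega)
  have := Nat.lt_two_pow_self (n := k)
  omega

theorem ak_deg_u (k : ℕ) : deg (akGraph k) (akU k) = k := by
  have : (akGraph k).neighborSet (akU k) = Set.range (akV k) := by
    ext b
    rcases b with (b | b) | (b | b) <;>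
      simp [akGraph, akU, akV, akW, akW']
  unfold deg
  rw [this, ← Set.image_univ, Set.ncard_image_of_injective, Set.ncard_univ]
  · simp
  · intro a b h
    simpa [akV] using h

theorem ak_deg_le (k : ℕ) (hk : 2 ≤ k) (a : AkVert k) : deg (akGraph k) a ≤ k := by
  rcases a with (a | j) | (i | i)
  · exact (ak_deg_u k).le
  · have hlog : 2 ^ Nat.log 2 (j.val + 1) ≤ j.val + 1 := Nat.pow_log_le_self 2 (by omega)
    have hlog2 : j.val + 1 < 2 ^ (Nat.log 2 (j.val + 1) + 1) :=
      Nat.lt_pow_succ_log_self (by norm_num) _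
    have hi : Nat.log 2 (j.val + 1) < akM k := by
      rw [ak_lt_akM]; omega
    have hd : (j.val + 1) / 2 ^ Nat.log 2 (j.val + 1) = 1 := by
      rw [pow_succ] at hlog2
      apply Nat.div_eq_of_lt_le <;> omega
    refine (ak_ncard_aux _ (akU k) (akW k) ⟨_, hi⟩ ?_).trans (akM_le k)
    intro b
    rcases b with (b | b) | (b | b) <;>
      simp [akGraph, akU, akV, akW, akW']
    intro h hb
    subst hb
    simp [hd] at h
  · have hi : 2 ^ i.val < 1 + k := (ak_lt_akM k i).1 i.2
    have hp : 0 < 2 ^ i.val := by positivity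
    refine ak_ncard_aux _ (akW' k i) (akV k) ⟨2 ^ i.val - 1, by omega⟩ ?_
    intro b
    rcases b with (b | b) | (b | b) <;>
      simp [akGraph, akU, akV, akW, akW']
    · intro h hb
      subst hb
      simp [Nat.sub_add_cancel hp] at h
  · have : (akGraph k).neighborSet (Sum.inr (Sum.inr i)) ⊆ {akW k i} := by
      intro b
      rcases b with (b | b) | (b | b) <;>
        simp [akGraph, akU, akV, akW, akW']
      all_goals exact fun h => h.symm
    have h1 := Set.ncard_le_ncard this (Set.toFinite _)
    rw [Set.ncard_singleton] at h1
    unfold deg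
    omega

/-- For every integer `k ≥ 2`, the maximum degree of `A_k` equals `k`. -/
theorem maxDeg_akGraph (k : ℕ) (hk : 2 ≤ k) : maxDeg (akGraph k) = k := by
  apply le_antisymm
  · refine csSup_le (Set.range_nonempty_iff_nonempty.2 ⟨akU k⟩) ?_
    rintro _ ⟨a, rfl⟩
    exact ak_deg_le k hk a
  · refine le_csSup (s := Set.range (deg (akGraph k))) ⟨k, ?_⟩ ⟨akU k, ak_deg_u k⟩
    rintro _ ⟨a, rfl⟩
    exact ak_deg_le k hk a
end

section
/- For every integer k ≥ 2, the set S = {w_0w'_0, w_1w'_1, …, w_{m−1}w'_{m−1}} of m pendant edges of the graph A_k, regarded as a set of vertices of the line graph L(A_k), is a doubly resolving set of L(A_k), where m = ⌈log₂(1+k)⌉. -/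
open SimpleGraph

variable {V : Type*}

/-- the `i`-th bit of the label of `v_j` is zero -/
def akZ (k : ℕ) (j : Fin k) (i : Fin (akM k)) : Prop := ((j.val + 1) / 2 ^ i.val) % 2 = 0

/-- `w_i` and `w_l` have a common neighbour -/
def akC (k : ℕ) (i l : Fin (akM k)) : Prop := ∃ j : Fin k, akZ k j i ∧ akZ k j l

open Classical in
/-- distance to `w'_i` -/
noncomputable def akG (k : ℕ) (i : Fin (akM k)) : AkVert k → ℕ
  | Sum.inl (Sum.inl _) => 3
  | Sum.inl (Sum.inr j) => if akZ k j i then 2 else 4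
  | Sum.inr (Sum.inl l) => if l = i then 1 else if akC k i l then 3 else 5
  | Sum.inr (Sum.inr l) => if l = i then 0 else if akC k i l then 4 else 6

theorem ak_adj_uv (k : ℕ) (j : Fin k) : (akGraph k).Adj (akU k) (akV k j) := by
  simp [akGraph, akU, akV, akW, akW']

theorem ak_adj_vw (k : ℕ) (j : Fin k) (i : Fin (akM k)) (h : akZ k j i) :
    (akGraph k).Adj (akV k j) (akW k i) := by
  unfold akZ at h
  simp [akGraph, akU, akV, akW, akW', h]

theorem ak_adj_ww (k : ℕ) (i : Fin (akM k)) : (akGraph k).Adj (akW k i) (akW' k i) := by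
  simp [akGraph, akU, akV, akW, akW']

theorem ak_cases (k : ℕ) (P : AkVert k → AkVert k → Prop)
    (hs : ∀ a b, P a b → P b a)
    (h1 : ∀ j, P (akU k) (akV k j))
    (h2 : ∀ j i, akZ k j i → P (akV k j) (akW k i))
    (h3 : ∀ i, P (akW k i) (akW' k i)) (a b : AkVert k) (h : (akGraph k).Adj a b) : P a b := by
  rw [akGraph, SimpleGraph.fromRel_adj] at h
  rcases h.2 with h | h
  · rcases h with ⟨j, rfl, rfl⟩ | ⟨j, i, rfl, rfl, hz⟩ | ⟨i, rfl, rfl⟩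
    · exact h1 j
    · exact h2 j i hz
    · exact h3 i
  · apply hs
    rcases h with ⟨j, rfl, rfl⟩ | ⟨j, i, rfl, rfl, hz⟩ | ⟨i, rfl, rfl⟩
    · exact h1 j
    · exact h2 j i hz
    · exact h3 i

theorem akG_lip (k : ℕ) (i : Fin (akM k)) (a b : AkVert k) (h : (akGraph k).Adj a b) :
    akG k i a ≤ akG k i b + 1 ∧ akG k i b ≤ akG k i a + 1 := by
  revert h
  apply ak_cases k (fun a b => akG k i a ≤ akG k i b + 1 ∧ akG k i b ≤ akG k i a + 1)
  · intro a b h; exact h.symm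
  · intro j
    simp only [akG, akU, akV]
    split_ifs <;> omega
  · intro j l hz
    simp only [akG, akV, akW]
    by_cases hli : l = i
    · subst hli; simp [hz]
    · by_cases hc : akZ k j i
      · have : akC k i l := ⟨j, hc, hz⟩
        simp [hli, hc, this]
      · simp only [hli, hc, if_false]
        split_ifs <;> omega
  · intro l
    simp only [akG, akW, akW']
    split_ifs <;> omega

theorem ak_exists_zero (k : ℕ) (hk : 2 ≤ k) (i : Fin (akM k)) : ∃ j, akZ k j i := by
  obtain ⟨i, hi⟩ := i
  rcases i with _ | i
  · exact ⟨⟨1, by omega⟩, by simp [akZ]⟩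
  · refine ⟨⟨0, by omega⟩, ?_⟩
    have : 1 / 2 ^ (i + 1) = 0 := Nat.div_eq_of_lt (Nat.one_lt_two_pow (by omega))
    simp [akZ, this]

theorem akG_desc (k : ℕ) (hk : 2 ≤ k) (i : Fin (akM k)) (a : AkVert k) (h : a ≠ akW' k i) :
    ∃ b, (akGraph k).Adj a b ∧ akG k i b + 1 = akG k i a := by
  rcases a with (⟨⟩ | j) | (l | l)
  · obtain ⟨j, hj⟩ := ak_exists_zero k hk i
    exact ⟨_, ak_adj_uv k j, by simp [akG, akV, hj]⟩
  · by_cases hz : akZ k j i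
    · exact ⟨_, ak_adj_vw k j i hz, by simp [akG, akW, hz]⟩
    · exact ⟨_, (ak_adj_uv k j).symm, by simp [akG, akU, hz]⟩
  · by_cases hl : l = i
    · exact ⟨_, ak_adj_ww k l, by simp [akG, akW', hl]⟩
    · by_cases hc : akC k i l
      · obtain ⟨j, h1, h2⟩ := id hc
        exact ⟨_, (ak_adj_vw k j l h2).symm, by simp [akG, akV, hl, hc, h1]⟩
      · obtain ⟨j, hj⟩ := ak_exists_zero k hk l
        have h1 : ¬ akZ k j i := fun h1 => hc ⟨j, h1, hj⟩
        exact ⟨_, (ak_adj_vw k j l hj).symm, by simp [akG, akV, hl, hc, h1]⟩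
  · have hl : l ≠ i := by rintro rfl; exact h rfl
    refine ⟨_, (ak_adj_ww k l).symm, ?_⟩
    simp only [akG, akW, hl, if_false]
    split_ifs <;> omega

theorem akG_zero (k : ℕ) (i : Fin (akM k)) : akG k i (akW' k i) = 0 := by simp [akG, akW']

theorem ak_pendant (k : ℕ) (i : Fin (akM k)) (b : AkVert k)
    (h : (akGraph k).Adj (akW' k i) b) : b = akW k i := by
  have := ak_cases k (fun a b => (a = akW' k i → b = akW k i) ∧ (b = akW' k i → a = akW k i))
    (fun a b h => h.symm) (by simp [akU, akV, akW, akW']) (by simp [akU, akV, akW, akW'])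
    (by simp [akU, akV, akW, akW']) _ _ h
  exact this.1 rfl

/-- the pendant edge -/
def akS (k : ℕ) (i : Fin (akM k)) : (akGraph k).edgeSet := ⟨s(akW k i, akW' k i), ak_adj_ww k i⟩

/-- potential on edges -/
noncomputable def akF (k : ℕ) (i : Fin (akM k)) (e : Sym2 (AkVert k)) : ℕ :=
  Sym2.lift ⟨fun a b => min (akG k i a) (akG k i b), fun _ _ => min_comm _ _⟩ e

theorem akF_mk (k : ℕ) (i : Fin (akM k)) (a b : AkVert k) :
    akF k i s(a, b) = min (akG k i a) (akG k i b) := rfl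

theorem akF_lip (k : ℕ) (i : Fin (akM k)) (e f : (akGraph k).edgeSet)
    (h : (akGraph k).lineGraph.Adj e f) : akF k i e ≤ akF k i f + 1 := by
  rw [SimpleGraph.lineGraph_adj_iff_exists] at h
  obtain ⟨-, a, h1, h2⟩ := h
  obtain ⟨e, he⟩ := e
  obtain ⟨f, hf⟩ := f
  obtain ⟨b, rfl⟩ := Sym2.mem_iff_exists.1 h1
  obtain ⟨c, rfl⟩ := Sym2.mem_iff_exists.1 h2
  simp only [akF_mk]
  have := akG_lip k i a c hf
  omega

theorem akF_walk (k : ℕ) (i : Fin (akM k)) (e f : (akGraph k).edgeSet)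
    (p : (akGraph k).lineGraph.Walk e f) : akF k i e ≤ akF k i f + p.length := by
  induction p with
  | nil => simp
  | cons h p ih =>
    have := akF_lip k i _ _ h
    simp only [SimpleGraph.Walk.length_cons]
    omega

theorem ak_walk (k : ℕ) (hk : 2 ≤ k) (i : Fin (akM k)) (n : ℕ) : ∀ (a b : AkVert k)
    (h : (akGraph k).Adj a b), akG k i a = n →
    ∃ p : (akGraph k).lineGraph.Walk ⟨s(a, b), h⟩ (akS k i), p.length ≤ n := by
  induction n using Nat.strong_induction_on with
  | _ n ih =>
  intro a b h hn
  by_cases ha : a = akW' k i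
  · subst ha
    have := ak_pendant k i b h
    subst this
    have : (⟨s(akW' k i, akW k i), h⟩ : (akGraph k).edgeSet) = akS k i :=
      Subtype.ext Sym2.eq_swap
    rw [this]
    exact ⟨SimpleGraph.Walk.nil, by simp⟩
  · obtain ⟨c, hac, hc⟩ := akG_desc k hk i a ha
    obtain ⟨p, hp⟩ := ih (akG k i c) (by omega) c a hac.symm rfl
    by_cases hbc : b = c
    · subst hbc
      have : (⟨s(a, b), h⟩ : (akGraph k).edgeSet) = ⟨s(b, a), hac.symm⟩ :=
        Subtype.ext Sym2.eq_swap
      rw [this]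
      exact ⟨p, by omega⟩
    · have hadj : (akGraph k).lineGraph.Adj ⟨s(a, b), h⟩ ⟨s(c, a), hac.symm⟩ := by
        rw [SimpleGraph.lineGraph_adj_iff_exists]
        refine ⟨?_, a, by simp, by simp⟩
        intro heq
        have h3 := congrArg Subtype.val heq
        simp only [Sym2.eq_iff] at h3
        rcases h3 with ⟨h3, h4⟩ | ⟨-, h4⟩
        · exact hac.ne h3
        · exact hbc h4
      exact ⟨SimpleGraph.Walk.cons hadj p, by simp only [SimpleGraph.Walk.length_cons]; omega⟩

theorem ak_dist (k : ℕ) (hk : 2 ≤ k) (i : Fin (akM k)) (e : (akGraph k).edgeSet) :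
    (akGraph k).lineGraph.dist e (akS k i) = akF k i e := by
  obtain ⟨e, he⟩ := e
  induction e using Sym2.ind with
  | _ a b =>
  have he' : (akGraph k).Adj b a := SimpleGraph.Adj.symm he
  obtain ⟨p, hp⟩ := ak_walk k hk i _ a b he rfl
  obtain ⟨q, hq⟩ := ak_walk k hk i _ b a he' rfl
  have hsw : (⟨s(b, a), he'⟩ : (akGraph k).edgeSet) = ⟨s(a, b), he⟩ :=
    Subtype.ext Sym2.eq_swap
  have h1 := (SimpleGraph.dist_le p).trans hp
  have h2 := (SimpleGraph.dist_le q).trans hq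
  rw [hsw] at h2
  obtain ⟨r, hr⟩ := SimpleGraph.Reachable.exists_walk_length_eq_dist ⟨p⟩
  have h3 := akF_walk k i _ _ r
  have h4 : akF k i (akS k i) = 0 := by simp [akS, akF_mk, akG_zero]
  rw [h4, hr] at h3
  simp only [akF_mk] at h3 ⊢
  omega

open Classical in
theorem akF_uv (k : ℕ) (i : Fin (akM k)) (j : Fin k) :
    akF k i s(akU k, akV k j) = if akZ k j i then 2 else 3 := by
  simp only [akF_mk, akG, akU, akV]
  split_ifs <;> rfl

open Classical in
theorem akF_vw (k : ℕ) (i l : Fin (akM k)) (j : Fin k) (h : akZ k j l) :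
    akF k i s(akV k j, akW k l) =
      if l = i then 1 else if akZ k j i then 2 else if akC k i l then 3 else 4 := by
  simp only [akF_mk, akG, akW, akV]
  by_cases hl : l = i
  · subst hl; simp [h]
  · by_cases hz : akZ k j i
    · have : akC k i l := ⟨j, hz, h⟩
      simp [hl, hz, this]
    · simp only [hl, hz, if_false]
      split_ifs <;> rfl

open Classical in
theorem akF_ww (k : ℕ) (i l : Fin (akM k)) :
    akF k i s(akW k l, akW' k l) = if l = i then 0 else if akC k i l then 3 else 5 := by
  simp only [akF_mk, akG, akW, akW']
  split_ifs <;> rfl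

theorem ak_bits (m a b : ℕ) (ha : a < 2 ^ m) (hb : b < 2 ^ m)
    (h : ∀ i < m, (a / 2 ^ i % 2 = 0 ↔ b / 2 ^ i % 2 = 0)) : a = b := by
  apply Nat.eq_of_testBit_eq
  intro i
  by_cases hi : i < m
  · have := h i hi
    rw [Nat.testBit_eq_decide_div_mod_eq, Nat.testBit_eq_decide_div_mod_eq, decide_eq_decide]
    omega
  · have h2 : 2 ^ m ≤ 2 ^ i := Nat.pow_le_pow_right (by norm_num) (by omega)
    rw [Nat.testBit_lt_two_pow (by omega), Nat.testBit_lt_two_pow (by omega)]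

theorem ak_lt (k : ℕ) (j : Fin k) : j.val + 1 < 2 ^ akM k := by
  have : 1 + k ≤ 2 ^ akM k := Nat.le_pow_clog (by norm_num) _
  omega

theorem ak_not_all (k : ℕ) (j : Fin k) (h : ∀ i, akZ k j i) : False := by
  have := ak_bits (akM k) (j.val + 1) 0 (ak_lt k j) (by positivity) (fun i hi => by
    have := h ⟨i, hi⟩
    simp only [akZ] at this
    simp [this])
  omega

theorem ak_inj (k : ℕ) (j j' : Fin k) (h : ∀ i, akZ k j i ↔ akZ k j' i) : j = j' := by
  have := ak_bits (akM k) (j.val + 1) (j'.val + 1) (ak_lt k j) (ak_lt k j')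
    (fun i hi => h ⟨i, hi⟩)
  apply Fin.ext
  omega

theorem ak_other (k : ℕ) (hk : 2 ≤ k) (i : Fin (akM k)) : ∃ l, i ≠ l := by
  have h : 1 < akM k := by
    by_contra hc
    have h1 : 1 + k ≤ 2 ^ akM k := Nat.le_pow_clog (by norm_num) _
    have h2 : 2 ^ akM k ≤ 2 ^ 1 := Nat.pow_le_pow_right (by norm_num) (by omega)
    omega
  by_cases h0 : i.val = 0
  · exact ⟨⟨1, h⟩, fun h' => by simp [h'] at h0⟩
  · exact ⟨⟨0, by omega⟩, fun h' => by simp [h'] at h0⟩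

/-- not doubly resolved -/
def akB (k : ℕ) (e f : Sym2 (AkVert k)) : Prop :=
  ∀ i l, akF k i e + akF k l f = akF k i f + akF k l e

theorem akB_symm (k : ℕ) (e f : Sym2 (AkVert k)) (h : akB k e f) : akB k f e :=
  fun i l => by have := h i l; omega

theorem ak_uv_uv (k : ℕ) (j j' : Fin k)
    (h : akB k s(akU k, akV k j) s(akU k, akV k j')) : j = j' := by
  apply ak_inj
  intro i
  by_contra hc
  have key : ∀ l, (akZ k j l ↔ akZ k j i) ∧ (akZ k j' l ↔ akZ k j' i) := by
    intro l
    have := h i l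
    simp only [akF_uv] at this
    split_ifs at this <;> first | omega | tauto
  by_cases hz : akZ k j i
  · exact ak_not_all k j fun l => (key l).1.2 hz
  · exact ak_not_all k j' fun l => (key l).2.2 (by tauto)

theorem ak_uv_vw (k : ℕ) (j j' : Fin k) (l : Fin (akM k)) (hz : akZ k j' l)
    (h : akB k s(akU k, akV k j) s(akV k j', akW k l)) : False := by
  apply ak_not_all k j'
  intro i
  by_cases hi : l = i
  · exact hi ▸ hz
  · have := h i l
    simp only [akF_uv, akF_vw k _ _ _ hz, if_true, hi, if_false] at this
    split_ifs at this <;> first | omega | assumption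

theorem ak_uv_ww (k : ℕ) (hk : 2 ≤ k) (j : Fin k) (l : Fin (akM k))
    (h : akB k s(akU k, akV k j) s(akW k l, akW' k l)) : False := by
  obtain ⟨i, hi⟩ := ak_other k hk l
  have := h i l
  simp only [akF_uv, akF_ww, if_true, hi, if_false] at this
  split_ifs at this <;> omega

theorem ak_vw_vw (k : ℕ) (j j' : Fin k) (l l' : Fin (akM k)) (hz : akZ k j l)
    (hz' : akZ k j' l') (h : akB k s(akV k j, akW k l) s(akV k j', akW k l')) :
    j = j' ∧ l = l' := by
  by_cases hl : l = l'
  · subst hl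
    refine ⟨ak_inj k _ _ fun i => ?_, rfl⟩
    by_cases hi : l = i
    · subst hi; tauto
    · have := h i l
      simp only [akF_vw k _ _ _ hz, akF_vw k _ _ _ hz', if_true, hi, if_false] at this
      split_ifs at this <;> first | omega | tauto
  · have := h l l'
    simp only [akF_vw k _ _ _ hz, akF_vw k _ _ _ hz', if_true, hl, Ne.symm hl, if_false] at this
    split_ifs at this <;> omega

theorem ak_vw_ww (k : ℕ) (hk : 2 ≤ k) (j : Fin k) (l l' : Fin (akM k)) (hz : akZ k j l)
    (h : akB k s(akV k j, akW k l) s(akW k l', akW' k l')) : False := by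
  by_cases hl : l = l'
  · subst hl
    obtain ⟨i, hi⟩ := ak_other k hk l
    have := h i l
    simp only [akF_vw k _ _ _ hz, akF_ww, if_true, hi, if_false] at this
    split_ifs at this <;> omega
  · have := h l l'
    simp only [akF_vw k _ _ _ hz, akF_ww, if_true, hl, Ne.symm hl, if_false] at this
    split_ifs at this <;> omega

theorem ak_ww_ww (k : ℕ) (l l' : Fin (akM k))
    (h : akB k s(akW k l, akW' k l) s(akW k l', akW' k l')) : l = l' := by
  by_contra hl
  have := h l l'
  simp only [akF_ww, if_true, hl, Ne.symm hl, if_false] at this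
  split_ifs at this <;> omega

theorem ak_edge_cases (k : ℕ) (e : Sym2 (AkVert k)) (he : e ∈ (akGraph k).edgeSet) :
    (∃ j, e = s(akU k, akV k j)) ∨ (∃ j i, akZ k j i ∧ e = s(akV k j, akW k i)) ∨
    (∃ i, e = s(akW k i, akW' k i)) := by
  induction e using Sym2.ind with
  | _ a b =>
  refine ak_cases k (fun a b => (∃ j, s(a, b) = s(akU k, akV k j)) ∨
    (∃ j i, akZ k j i ∧ s(a, b) = s(akV k j, akW k i)) ∨
    (∃ i, s(a, b) = s(akW k i, akW' k i))) ?_ ?_ ?_ ?_ a b he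
  · intro a b h
    rw [Sym2.eq_swap]
    exact h
  · exact fun j => Or.inl ⟨j, rfl⟩
  · exact fun j i h => Or.inr (Or.inl ⟨j, i, h, rfl⟩)
  · exact fun i => Or.inr (Or.inr ⟨i, rfl⟩)

theorem ak_main (k : ℕ) (hk : 2 ≤ k) (e f : Sym2 (AkVert k)) (he : e ∈ (akGraph k).edgeSet)
    (hf : f ∈ (akGraph k).edgeSet) (h : akB k e f) : e = f := by
  rcases ak_edge_cases k e he with ⟨j, rfl⟩ | ⟨j, i, hz, rfl⟩ | ⟨i, rfl⟩ <;>
  rcases ak_edge_cases k f hf with ⟨j', rfl⟩ | ⟨j', i', hz', rfl⟩ | ⟨i', rfl⟩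
  · rw [ak_uv_uv k j j' h]
  · exact (ak_uv_vw k _ _ _ hz' h).elim
  · exact (ak_uv_ww k hk _ _ h).elim
  · exact (ak_uv_vw k _ _ _ hz (akB_symm k _ _ h)).elim
  · obtain ⟨rfl, rfl⟩ := ak_vw_vw k _ _ _ _ hz hz' h
    rfl
  · exact (ak_vw_ww k hk _ _ _ hz h).elim
  · exact (ak_uv_ww k hk _ _ (akB_symm k _ _ h)).elim
  · exact (ak_vw_ww k hk _ _ _ hz' (akB_symm k _ _ h)).elim
  · rw [ak_ww_ww k _ _ h]

/-- For every integer `k ≥ 2`, the set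
`S = {w_0 w'_0, …, w_{m-1} w'_{m-1}}` of the `m` pendant edges of `A_k`, viewed as a set of
vertices of the line graph `L(A_k)`, is a doubly resolving set of `L(A_k)`. -/
theorem pendantEdges_isDRS_lineGraph_akGraph (k : ℕ) (hk : 2 ≤ k) :
    IsDoublyResolvingSet (akGraph k).lineGraph
      {e : (akGraph k).edgeSet |
        ∃ i : Fin (akM k), (e : Sym2 (AkVert k)) = s(akW k i, akW' k i)} := by
  intro e f hne
  by_contra hc
  push Not at hc
  apply hne
  apply Subtype.ext
  apply ak_main k hk _ _ e.2 f.2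
  intro i l
  have := hc (akS k i) ⟨i, rfl⟩ (akS k l) ⟨l, rfl⟩
  simp only [ak_dist k hk] at this
  omega
end

section
/- For every integer k ≥ 1, the friendship graph T_k satisfies Ψ(L(T_k)) = 2k = |V(T_k)| − 1, where Ψ(L(T_k)) is the minimum cardinality of a doubly resolving set of the line graph L(T_k). -/
open SimpleGraph

variable {V : Type*}

/-- The vertex set of the friendship graph `T_k`: the center `u` together with the
vertices `x_i = (i, false)` and `y_i = (i, true)` for `1 ≤ i ≤ k`. -/
abbrev FriendVert (k : ℕ) : Type := Unit ⊕ (Fin k × Bool)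

/-- The center vertex `u` of the friendship graph. -/
def fkU (k : ℕ) : FriendVert k := Sum.inl ()

/-- The vertex `x_i` of the friendship graph. -/
def fkX (k : ℕ) (i : Fin k) : FriendVert k := Sum.inr (i, false)

/-- The vertex `y_i` of the friendship graph. -/
def fkY (k : ℕ) (i : Fin k) : FriendVert k := Sum.inr (i, true)

/-- The friendship graph `T_k`, obtained by gluing `k` triangles at the vertex `u`:
its edges are `u x_i`, `u y_i` and `x_i y_i` for `1 ≤ i ≤ k`. -/
def friendshipGraph (k : ℕ) : SimpleGraph (FriendVert k) := SimpleGraph.fromRel (fun a b =>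
  (∃ i : Fin k, a = fkU k ∧ b = fkX k i) ∨
  (∃ i : Fin k, a = fkU k ∧ b = fkY k i) ∨
  (∃ i : Fin k, a = fkX k i ∧ b = fkY k i))


namespace FK

lemma dist_eq_of_potential {W : Type*} (G : SimpleGraph W) (q : W) (f : W → ℕ)
    (h0 : ∀ v, f v = 0 → v = q) (hq : f q = 0)
    (hd : ∀ v n, f v = n + 1 → ∃ w, G.Adj v w ∧ f w = n)
    (hl : ∀ v w, G.Adj v w → f v ≤ f w + 1) (v : W) : G.dist v q = f v := by
  have hup : ∀ n v, f v = n → ∃ p : G.Walk v q, p.length = n := by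
    intro n
    induction n with
    | zero =>
      intro v hv
      obtain rfl := h0 v hv
      exact ⟨Walk.nil, rfl⟩
    | succ n ih =>
      intro v hv
      obtain ⟨w, hvw, hw⟩ := hd v n hv
      obtain ⟨p, hp⟩ := ih w hw
      exact ⟨Walk.cons hvw p, by simp [hp]⟩
  have hlow : ∀ (a b : W) (p : G.Walk a b), f a ≤ f b + p.length := by
    intro a b p
    induction p with
    | nil => simp
    | cons h p ih =>
      have := hl _ _ h
      simp only [Walk.length_cons]
      omega
  obtain ⟨p, hp⟩ := hup (f v) v rfl
  apply le_antisymm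
  · rw [← hp]; exact SimpleGraph.dist_le p
  · obtain ⟨p', hp'⟩ := (Walk.reachable p).exists_walk_length_eq_dist
    have := hlow _ _ p'
    omega

def e (k : ℕ) : Fin k × Option Bool → Sym2 (FriendVert k)
  | (i, some b) => s(Sum.inl (), Sum.inr (i, b))
  | (i, none) => s(Sum.inr (i, false), Sum.inr (i, true))

lemma e_mem (k : ℕ) (p) : e k p ∈ (friendshipGraph k).edgeSet := by
  rcases p with ⟨i, _ | b⟩
  · simp [e, friendshipGraph, fkU, fkX, fkY]
  · cases b <;> simp [e, friendshipGraph, fkU, fkX, fkY]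

def E (k : ℕ) (p : Fin k × Option Bool) : (friendshipGraph k).edgeSet := ⟨e k p, e_mem k p⟩

lemma E_surj (k : ℕ) : Function.Surjective (E k) := by
  rintro ⟨s, hs⟩
  suffices ∃ p, e k p = s by
    obtain ⟨p, hp⟩ := this
    exact ⟨p, Subtype.ext hp⟩
  induction s using Sym2.ind with
  | _ a b =>
    simp only [friendshipGraph, fkU, fkX, fkY, mem_edgeSet, fromRel_adj] at hs
    rcases hs with ⟨-, (⟨i, rfl, rfl⟩ | ⟨i, rfl, rfl⟩ | ⟨i, rfl, rfl⟩) |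
      (⟨i, rfl, rfl⟩ | ⟨i, rfl, rfl⟩ | ⟨i, rfl, rfl⟩)⟩
    · exact ⟨(i, some false), rfl⟩
    · exact ⟨(i, some true), rfl⟩
    · exact ⟨(i, none), rfl⟩
    · exact ⟨(i, some false), Sym2.eq_swap⟩
    · exact ⟨(i, some true), Sym2.eq_swap⟩
    · exact ⟨(i, none), Sym2.eq_swap⟩

lemma E_inj (k : ℕ) : Function.Injective (E k) := by
  intro p q h
  have h : e k p = e k q := congrArg Subtype.val h
  rcases p with ⟨i, _ | b⟩ <;> rcases q with ⟨j, _ | c⟩ <;> simp [e] at h ⊢ <;> tauto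

def D {k : ℕ} : Fin k × Option Bool → Fin k × Option Bool → ℕ
  | (i, s), (j, t) => if i = j then (if s = t then 0 else 1) else
    1 + (if s = none then 1 else 0) + (if t = none then 1 else 0)

lemma adj_iff (k : ℕ) (p q) : (friendshipGraph k).lineGraph.Adj (E k p) (E k q) ↔ D p q = 1 := by
  rw [SimpleGraph.lineGraph_adj_iff_exists, (E_inj k).ne_iff]
  rcases p with ⟨i, _ | b⟩ <;> rcases q with ⟨j, _ | c⟩ <;> by_cases hij : i = j <;>
    simp [E, e, D, hij]

lemma dist_eq (k : ℕ) (p q) : (friendshipGraph k).lineGraph.dist (E k p) (E k q) = D p q := by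
  let F := Equiv.ofBijective (E k) ⟨E_inj k, E_surj k⟩
  have hF : ∀ p, F.symm (E k p) = p := fun p => F.symm_apply_apply p
  have := dist_eq_of_potential (friendshipGraph k).lineGraph (E k q) (fun v => D (F.symm v) q)
    ?_ ?_ ?_ ?_ (E k p)
  · simpa [hF] using this
  · intro v hv
    obtain ⟨r, rfl⟩ := E_surj k v
    rw [hF] at hv
    congr 1
    rcases r with ⟨i, s⟩; rcases q with ⟨j, t⟩
    simp only [D] at hv
    grind
  · rcases q with ⟨j, t⟩
    simp [hF, D]
  · intro v n hv
    obtain ⟨r, rfl⟩ := E_surj k v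
    rw [hF] at hv
    suffices ∃ w, D r w = 1 ∧ D w q = n by
      obtain ⟨w, h1, h2⟩ := this
      exact ⟨E k w, (adj_iff k _ _).2 h1, by simpa [hF] using h2⟩
    rcases r with ⟨i, s⟩; rcases q with ⟨j, t⟩
    by_cases hij : i = j
    · refine ⟨(j, t), ?_, ?_⟩ <;> simp only [D] at hv ⊢ <;> grind
    · cases s with
      | none => refine ⟨(i, some true), ?_, ?_⟩ <;> simp only [D] at hv ⊢ <;> grind
      | some b =>
        cases t with
        | none => refine ⟨(j, some true), ?_, ?_⟩ <;> simp only [D] at hv ⊢ <;> grind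
        | some c => refine ⟨(j, some c), ?_, ?_⟩ <;> simp only [D] at hv ⊢ <;> grind
  · intro v w hvw
    obtain ⟨r, rfl⟩ := E_surj k v
    obtain ⟨r', rfl⟩ := E_surj k w
    rw [adj_iff] at hvw
    simp only [hF]
    rcases r with ⟨i, s⟩; rcases r' with ⟨i', s'⟩; rcases q with ⟨j, t⟩
    simp only [D] at hvw ⊢
    grind

lemma lower (k : ℕ) (S : Set (friendshipGraph k).edgeSet)
    (hS : IsDoublyResolvingSet (friendshipGraph k).lineGraph S) : 2 * k ≤ S.ncard := by
  have key : ∀ i : Fin k, ∃ t t' : Option Bool, t ≠ t' ∧ E k (i, t) ∈ S ∧ E k (i, t') ∈ S := by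
    intro i
    have h1 : ∃ b : Bool, E k (i, some b) ∈ S := by
      obtain ⟨x, hx, y, hy, h⟩ := hS (E k (i, some false)) (E k (i, some true))
        (by simp [(E_inj k).ne_iff])
      obtain ⟨⟨j, t⟩, rfl⟩ := E_surj k x
      obtain ⟨⟨j', t'⟩, rfl⟩ := E_surj k y
      by_contra! hc
      simp only [dist_eq, D] at h
      have : ∀ j t, E k (j, t) ∈ S → i = j → t = none := by
        rintro j (_ | b) h rfl
        · rfl
        · exact absurd h (hc b)
      have a1 := this _ _ hx
      have a2 := this _ _ hy
      grind
    obtain ⟨b, hb⟩ := h1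
    refine ⟨some b, ?_⟩
    obtain ⟨x, hx, y, hy, h⟩ := hS (E k (i, some b)) (E k (i, none))
      (by simp [(E_inj k).ne_iff])
    obtain ⟨⟨j, t⟩, rfl⟩ := E_surj k x
    obtain ⟨⟨j', t'⟩, rfl⟩ := E_surj k y
    by_contra! hc
    have : ∀ j t, E k (j, t) ∈ S → i = j → t = some b := by
      rintro j t h rfl
      by_contra hne
      exact hc t (Ne.symm hne) hb h
    have a1 := this _ _ hx
    have a2 := this _ _ hy
    simp only [dist_eq, D] at h
    grind
  choose t t' hne ht ht' using key
  let g : Fin k × Bool → (friendshipGraph k).edgeSet :=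
    fun p => E k (p.1, if p.2 then t p.1 else t' p.1)
  have hg : Function.Injective g := by
    rintro ⟨i, b⟩ ⟨j, c⟩ h
    have h := E_inj k h
    simp only [Prod.mk.injEq] at h
    obtain ⟨rfl, h⟩ := h
    have := hne i
    cases b <;> cases c <;> grind
  have hsub : Set.range g ⊆ S := by
    rintro _ ⟨⟨i, b⟩, rfl⟩
    cases b
    · exact ht' i
    · exact ht i
  have : Finite (friendshipGraph k).edgeSet := Finite.of_surjective _ (E_surj k)
  have h1 := Set.ncard_le_ncard hsub (Set.toFinite S)
  rw [← Set.image_univ, Set.ncard_image_of_injective _ hg, Set.ncard_univ] at h1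
  simp at h1
  omega

lemma upper (k : ℕ) : ∃ S : Set (friendshipGraph k).edgeSet,
    IsDoublyResolvingSet (friendshipGraph k).lineGraph S ∧ S.ncard = 2 * k := by
  let g : Fin k × Bool → (friendshipGraph k).edgeSet := fun p => E k (p.1, some p.2)
  have hg : Function.Injective g := by
    rintro ⟨i, b⟩ ⟨j, c⟩ h
    have h := E_inj k h
    simpa using h
  refine ⟨Set.range g, ?_, ?_⟩
  · intro u v huv
    obtain ⟨⟨i, s⟩, rfl⟩ := E_surj k u
    obtain ⟨⟨j, t⟩, rfl⟩ := E_surj k v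
    rw [(E_inj k).ne_iff] at huv
    suffices ∃ p q : Fin k × Bool, (D (i, s) (p.1, some p.2) : ℤ) - D (i, s) (q.1, some q.2) ≠
        D (j, t) (p.1, some p.2) - D (j, t) (q.1, some q.2) by
      obtain ⟨p, q, h⟩ := this
      refine ⟨g p, ⟨p, rfl⟩, g q, ⟨q, rfl⟩, ?_⟩
      simpa only [g, dist_eq] using h
    by_cases hij : i = j
    · subst hij
      refine ⟨(i, true), (i, false), ?_⟩
      rcases s with _ | _ | _ <;> rcases t with _ | _ | _ <;> simp [D] at huv ⊢
    · rcases s with _ | b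
      · rcases t with _ | c
        · refine ⟨(i, true), (j, true), ?_⟩
          simp [D, hij, Ne.symm hij]
        · refine ⟨(j, true), (j, false), ?_⟩
          cases c <;> simp [D, hij]
      · refine ⟨(i, true), (i, false), ?_⟩
        cases b <;> simp [D, Ne.symm hij]
  · rw [← Set.image_univ, Set.ncard_image_of_injective _ hg, Set.ncard_univ]
    simp
    omega

end FK

/-- For every integer `k ≥ 1`, the friendship graph `T_k` satisfies
`Ψ(L(T_k)) = 2k = |V(T_k)| - 1`. -/
theorem psi_lineGraph_friendshipGraph (k : ℕ) (hk : 1 ≤ k) :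
    psi (friendshipGraph k).lineGraph = 2 * k ∧
      2 * k = Fintype.card (FriendVert k) - 1 := by
  constructor
  · apply le_antisymm
    · exact Nat.sInf_le (FK.upper k)
    · have hne : {n | ∃ S : Set (friendshipGraph k).edgeSet,
          IsDoublyResolvingSet (friendshipGraph k).lineGraph S ∧ S.ncard = n}.Nonempty :=
        ⟨2 * k, FK.upper k⟩
      obtain ⟨S, hS, h⟩ := Nat.sInf_mem hne
      unfold psi
      rw [← h]
      exact FK.lower k S hS
  · simp [FriendVert]
    omega
end

section
/- Let k ≥ 1 and let S be a doubly resolving set of the line graph L(T_k) of the friendship graph T_k. Then for every index i with 1 ≤ i ≤ k, the set S contains at least two of the three edges ux_i, uy_i, x_iy_i, i.e., |S ∩ {ux_i, uy_i, x_iy_i}| ≥ 2. -/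
open SimpleGraph

variable {V : Type*}

lemma aux_exists_adj {W : Type*} (G : SimpleGraph W) (hG : G.Preconnected) (p e : W) (h : p ≠ e) :
    ∃ z, G.Adj p z ∧ G.dist p e = G.dist z e + 1 := by
  obtain ⟨w, hw⟩ := (hG p e).exists_walk_length_eq_dist
  cases w with
  | nil => exact absurd rfl h
  | @cons _ z _ hz q =>
    refine ⟨z, hz, ?_⟩
    have h1 := SimpleGraph.dist_le q
    obtain ⟨q', hq'⟩ := (hG z e).exists_walk_length_eq_dist
    have h2 := SimpleGraph.dist_le (SimpleGraph.Walk.cons hz q')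
    simp only [SimpleGraph.Walk.length_cons] at hw h2
    omega

lemma aux_twin_le {W : Type*} (G : SimpleGraph W) (hG : G.Preconnected) (a b e : W) (h : a ≠ e)
    (ht : ∀ z, z ≠ b → G.Adj a z → G.Adj b z) : G.dist b e ≤ G.dist a e := by
  obtain ⟨z, hz, hd⟩ := aux_exists_adj G hG a e h
  by_cases hzb : z = b
  · subst hzb; omega
  · obtain ⟨q, hq⟩ := (hG z e).exists_walk_length_eq_dist
    have h2 := SimpleGraph.dist_le (SimpleGraph.Walk.cons (ht z hzb hz) q)
    simp only [SimpleGraph.Walk.length_cons] at h2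
    omega

lemma aux_abstract {W : Type*} (G : SimpleGraph W) (hG : G.Preconnected) (S : Set W)
    (hS : IsDoublyResolvingSet G S) (a b c : W) (hab : G.Adj a b) (hac : G.Adj a c)
    (hbc : G.Adj b c) (h1 : ∀ z, z ≠ b → G.Adj a z → G.Adj b z)
    (h2 : ∀ z, z ≠ a → G.Adj b z → G.Adj a z) (h3 : ∀ z, G.Adj c z → z = a ∨ z = b) :
    2 ≤ (S ∩ {e | e = a ∨ e = b ∨ e = c}).ncard := by
  by_contra hlt
  have hfin : (S ∩ {e | e = a ∨ e = b ∨ e = c}).Finite :=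
    Set.Finite.subset (s := {a, b, c}) (Set.toFinite _) (by intro x hx; simpa using hx.2)
  have hsub : ∀ x ∈ S, ∀ y ∈ S, (x = a ∨ x = b ∨ x = c) → (y = a ∨ y = b ∨ y = c) → x = y := by
    intro x hx y hy hx' hy'
    exact (Set.ncard_le_one hfin).1 (by omega) x ⟨hx, hx'⟩ y ⟨hy, hy'⟩
  have dab : ∀ e, e ≠ a → e ≠ b → G.dist a e = G.dist b e := fun e ha hb =>
    le_antisymm (aux_twin_le G hG b a e hb.symm h2) (aux_twin_le G hG a b e ha.symm h1)
  have dc : ∀ e, e ≠ a → e ≠ b → e ≠ c → G.dist c e = G.dist a e + 1 := by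
    intro e ha hb hc
    obtain ⟨z, hz, hd⟩ := aux_exists_adj G hG c e hc.symm
    have := dab e ha hb
    rcases h3 z hz with rfl | rfl <;> omega
  have e1 : G.dist c a = 1 := SimpleGraph.dist_eq_one_iff_adj.2 hac.symm
  have e2 : G.dist c b = 1 := SimpleGraph.dist_eq_one_iff_adj.2 hbc.symm
  have nab := hab.ne
  have nac := hac.ne
  have nbc := hbc.ne
  by_cases ha : a ∈ S
  · have hb : b ∉ S := fun hb => nab (hsub a ha b hb (by simp) (by simp))
    have hc : c ∉ S := fun hc => nac (hsub a ha c hc (by simp) (by simp))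
    have key : ∀ e ∈ S, G.dist c e = G.dist a e + 1 := by
      intro e he
      by_cases hea : e = a
      · subst hea; simp [e1]
      · exact dc e hea (by rintro rfl; exact hb he) (by rintro rfl; exact hc he)
    obtain ⟨x, hx, y, hy, hne⟩ := hS a c nac
    have := key x hx
    have := key y hy
    omega
  · by_cases hb : b ∈ S
    · have hc : c ∉ S := fun hc => nbc (hsub b hb c hc (by simp) (by simp))
      have key : ∀ e ∈ S, G.dist c e = G.dist b e + 1 := by
        intro e he
        by_cases heb : e = b
        · subst heb; simp [e2]
        · have hea : e ≠ a := by rintro rfl; exact ha he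
          rw [← dab e hea heb]
          exact dc e hea heb (by rintro rfl; exact hc he)
      obtain ⟨x, hx, y, hy, hne⟩ := hS b c nbc
      have := key x hx
      have := key y hy
      omega
    · obtain ⟨x, hx, y, hy, hne⟩ := hS a b nab
      have := dab x (by rintro rfl; exact ha hx) (by rintro rfl; exact hb hx)
      have := dab y (by rintro rfl; exact ha hy) (by rintro rfl; exact hb hy)
      omega

lemma aux_ux (k : ℕ) (i : Fin k) : s(fkU k, fkX k i) ∈ (friendshipGraph k).edgeSet := by
  simp [friendshipGraph, fkU, fkX, fkY]
lemma aux_uy (k : ℕ) (i : Fin k) : s(fkU k, fkY k i) ∈ (friendshipGraph k).edgeSet := by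
  simp [friendshipGraph, fkU, fkX, fkY]
lemma aux_xy (k : ℕ) (i : Fin k) : s(fkX k i, fkY k i) ∈ (friendshipGraph k).edgeSet := by
  simp [friendshipGraph, fkU, fkX, fkY]

lemma aux_cases (k : ℕ) (e : (friendshipGraph k).edgeSet) :
    ∃ i, e = ⟨_, aux_ux k i⟩ ∨ e = ⟨_, aux_uy k i⟩ ∨ e = ⟨_, aux_xy k i⟩ := by
  obtain ⟨e, he⟩ := e
  induction e using Sym2.ind with
  | _ p q =>
  have h := he
  rw [SimpleGraph.mem_edgeSet, friendshipGraph, SimpleGraph.fromRel_adj] at h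
  simp only [Subtype.mk.injEq]
  rcases h.2 with (⟨i, rfl, rfl⟩ | ⟨i, rfl, rfl⟩ | ⟨i, rfl, rfl⟩) |
    (⟨i, rfl, rfl⟩ | ⟨i, rfl, rfl⟩ | ⟨i, rfl, rfl⟩)
  · exact ⟨i, Or.inl rfl⟩
  · exact ⟨i, Or.inr (Or.inl rfl)⟩
  · exact ⟨i, Or.inr (Or.inr rfl)⟩
  · exact ⟨i, Or.inl Sym2.eq_swap⟩
  · exact ⟨i, Or.inr (Or.inl Sym2.eq_swap)⟩
  · exact ⟨i, Or.inr (Or.inr Sym2.eq_swap)⟩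

lemma aux_adj (k : ℕ) (e f : (friendshipGraph k).edgeSet) :
    (friendshipGraph k).lineGraph.Adj e f ↔
      e ≠ f ∧ ∃ v, v ∈ (e : Sym2 (FriendVert k)) ∧ v ∈ (f : Sym2 (FriendVert k)) := by
  rw [SimpleGraph.lineGraph_adj_iff_exists]

lemma aux_reach_s9 (k : ℕ) (i : Fin k) (e : (friendshipGraph k).edgeSet) :
    (friendshipGraph k).lineGraph.Reachable ⟨_, aux_ux k i⟩ e := by
  have hu : ∀ f : (friendshipGraph k).edgeSet, fkU k ∈ (f : Sym2 (FriendVert k)) →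
      (friendshipGraph k).lineGraph.Reachable ⟨_, aux_ux k i⟩ f := by
    intro f hf
    by_cases h : (⟨_, aux_ux k i⟩ : (friendshipGraph k).edgeSet) = f
    · rw [h]
    · exact ((aux_adj k _ _).2 ⟨h, fkU k, by simp, hf⟩).reachable
  obtain ⟨j, rfl | rfl | rfl⟩ := aux_cases k e
  · exact hu _ (by simp)
  · exact hu _ (by simp)
  · refine (hu ⟨_, aux_ux k j⟩ (by simp)).trans (SimpleGraph.Adj.reachable ?_)
    exact (aux_adj k _ _).2 ⟨by simp [fkU, fkX, fkY], fkX k j, by simp, by simp⟩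

/-- Let `k ≥ 1` and let `S` be a doubly resolving set of `L(T_k)`, where
`T_k` is the friendship graph. Then for each `i`, `S` contains at least two of the three
edges `u x_i`, `u y_i`, `x_i y_i`. -/
theorem drs_friendshipGraph_two_per_triangle (k : ℕ) (hk : 1 ≤ k)
    (S : Set (friendshipGraph k).edgeSet)
    (hS : IsDoublyResolvingSet (friendshipGraph k).lineGraph S) :
    ∀ i : Fin k,
      2 ≤ (S ∩ {e : (friendshipGraph k).edgeSet |
        (e : Sym2 (FriendVert k)) = s(fkU k, fkX k i) ∨
        (e : Sym2 (FriendVert k)) = s(fkU k, fkY k i) ∨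
        (e : Sym2 (FriendVert k)) = s(fkX k i, fkY k i)}).ncard := by
  intro i
  have hG : (friendshipGraph k).lineGraph.Preconnected := fun p q =>
    (aux_reach_s9 k i p).symm.trans (aux_reach_s9 k i q)
  have := aux_abstract _ hG S hS ⟨_, aux_ux k i⟩ ⟨_, aux_uy k i⟩ ⟨_, aux_xy k i⟩
    ((aux_adj k _ _).2 ⟨by simp [fkU, fkX, fkY], fkU k, by simp, by simp⟩)
    ((aux_adj k _ _).2 ⟨by simp [fkU, fkX, fkY], fkX k i, by simp, by simp⟩)
    ((aux_adj k _ _).2 ⟨by simp [fkU, fkX, fkY], fkY k i, by simp, by simp⟩)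
    (by
      intro z hz h
      obtain ⟨j, rfl | rfl | rfl⟩ := aux_cases k z <;>
      simp_all [aux_adj, fkU, fkX, fkY] <;> grind)
    (by
      intro z hz h
      obtain ⟨j, rfl | rfl | rfl⟩ := aux_cases k z <;>
      simp_all [aux_adj, fkU, fkX, fkY] <;> grind)
    (by
      intro z h
      obtain ⟨j, rfl | rfl | rfl⟩ := aux_cases k z <;>
      simp_all [aux_adj, fkU, fkX, fkY])
  simpa only [Subtype.ext_iff] using this
end

section
/- Let G be a finite connected simple graph with at least two vertices, let S be a resolving set of G, let x ∈ S, and let T ⊆ V(G) be a doubly distance resolving set of G on x. Then S ∪ T is a doubly resolving set of G. -/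
open SimpleGraph

variable {V : Type*}

/-- `S` is a resolving set of `G`. -/
def IsResolvingSet (G : SimpleGraph V) (S : Set V) : Prop :=
  ∀ u v : V, u ≠ v → ∃ x ∈ S, G.dist u x ≠ G.dist v x

/-- The pair `{x, y}` doubly resolves the pair `{u, v}` in `G`. -/
def DoublyResolves (G : SimpleGraph V) (x y u v : V) : Prop :=
  (G.dist u x : ℤ) - (G.dist u y : ℤ) ≠ (G.dist v x : ℤ) - (G.dist v y : ℤ)

/-- `T` is a doubly distance resolving set of `G` on `x`: every pair of distinct vertices
at different distances from `x` is doubly resolved by some pair of vertices in `T ∪ {x}`. -/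
def IsDoublyDistanceResolvingSet (G : SimpleGraph V) (x : V) (T : Set V) : Prop :=
  ∀ u v : V, u ≠ v → G.dist u x ≠ G.dist v x →
    ∃ a ∈ T ∪ {x}, ∃ b ∈ T ∪ {x}, DoublyResolves G a b u v

/-- If `S` is a resolving set of `G`, `x ∈ S`, and `T` is a doubly distance
resolving set of `G` on `x`, then `S ∪ T` is a doubly resolving set of `G`. -/
theorem resolvingSet_union_ddrs_isDRS {V : Type*} [Fintype V] (G : SimpleGraph V)
    (hconn : G.Connected) (hcard : 2 ≤ Fintype.card V)
    (S : Set V) (hS : IsResolvingSet G S) (x : V) (hx : x ∈ S)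
    (T : Set V) (hT : IsDoublyDistanceResolvingSet G x T) :
    IsDoublyResolvingSet G (S ∪ T) := by
  intro u v huv
  by_cases h : G.dist u x = G.dist v x
  · obtain ⟨y, hy, hne⟩ := hS u v huv
    refine ⟨y, Or.inl hy, x, Or.inl hx, ?_⟩
    omega
  · obtain ⟨a, ha, b, hb, hab⟩ := hT u v huv h
    have key : ∀ c ∈ T ∪ {x}, c ∈ S ∪ T := by
      rintro c (hc | hc)
      · exact Or.inr hc
      · exact Or.inl (by rw [Set.mem_singleton_iff.mp hc]; exact hx)
    exact ⟨a, key a ha, b, key b hb, hab⟩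
end

section
/- Let K_n be the complete graph on n ≥ 2 vertices and let D ⊆ V(K_n). Then Ψ_D(K_n) = n − |D| if n = 2 or D = V(K_n), and Ψ_D(K_n) = n − 1 − |D| if n > 2 and D ≠ V(K_n). -/
open SimpleGraph

variable {V : Type*}

/-- `Ψ_D(G)`: the minimum of `|S| - |D|` over all doubly resolving sets `S` of `G`
containing `D`. -/
noncomputable def psiD (G : SimpleGraph V) (D : Set V) : ℕ :=
  sInf {n | ∃ S : Set V, D ⊆ S ∧ IsDoublyResolvingSet G S ∧ S.ncard = n + D.ncard}

theorem drs_top_iff {n : ℕ} (hn : 2 ≤ n) (S : Set (Fin n)) :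
    IsDoublyResolvingSet (completeGraph (Fin n)) S ↔ n - 1 ≤ S.ncard ∧ 2 ≤ S.ncard := by
  have hc : S.ncard + Sᶜ.ncard = n := by
    have := Set.ncard_add_ncard_compl S
    simpa using this
  have e : (completeGraph (Fin n)) = ⊤ := rfl
  have h2 : 2 ≤ S.ncard ↔ S.Nontrivial := by
    rw [← Set.one_lt_ncard_iff_nontrivial]; rfl
  have h1 : n - 1 ≤ S.ncard ↔ Sᶜ.ncard ≤ 1 := by omega
  rw [h1, h2, Set.ncard_le_one]
  unfold IsDoublyResolvingSet
  simp only [e, SimpleGraph.dist_top]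
  constructor
  · intro h
    constructor
    · intro a ha b hb
      by_contra hab
      obtain ⟨x, hx, y, hy, hxy⟩ := h a b hab
      apply hxy
      have : a ≠ x := fun h => ha (h ▸ hx)
      have : a ≠ y := fun h => ha (h ▸ hy)
      have : b ≠ x := fun h => hb (h ▸ hx)
      have : b ≠ y := fun h => hb (h ▸ hy)
      simp [*]
    · obtain ⟨x, hx, y, hy, hxy⟩ := h ⟨0, by omega⟩ ⟨1, by omega⟩ (by simp)
      refine ⟨x, hx, y, hy, ?_⟩
      rintro rfl
      simp at hxy
  · rintro ⟨h, hS⟩ u v huv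
    by_cases hu : u ∈ S
    · obtain ⟨y, hy, hyu⟩ := hS.exists_ne u
      refine ⟨u, hu, y, hy, ?_⟩
      have := huv.symm
      have := hyu.symm
      by_cases v = y <;> simp [*]
    · have hv : v ∈ S := by
        by_contra hv
        exact huv (h u hu v hv)
      obtain ⟨y, hy, hyu⟩ := hS.exists_ne v
      refine ⟨v, hv, y, hy, ?_⟩
      have := hyu.symm
      have : u ≠ y := fun h => hu (h ▸ hy)
      simp [*]

theorem psiD_eq_of_min {n : ℕ} (G : SimpleGraph (Fin n)) (D S₀ : Set (Fin n)) (hD : D ⊆ S₀)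
    (h0 : IsDoublyResolvingSet G S₀)
    (hmin : ∀ S, D ⊆ S → IsDoublyResolvingSet G S → S₀.ncard ≤ S.ncard) :
    psiD G D = S₀.ncard - D.ncard := by
  have hle := Set.ncard_le_ncard hD
  have hmem : S₀.ncard - D.ncard ∈
      {m | ∃ S : Set (Fin n), D ⊆ S ∧ IsDoublyResolvingSet G S ∧ S.ncard = m + D.ncard} :=
    ⟨S₀, hD, h0, by omega⟩
  apply le_antisymm (Nat.sInf_le hmem)
  apply le_csInf ⟨_, hmem⟩
  rintro m ⟨S, hS, hS', hm⟩
  have := hmin S hS hS'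
  omega

/-- For the complete graph `K_n` with `n ≥ 2` and any `D ⊆ V(K_n)`:
`Ψ_D(K_n) = n - |D|` if `n = 2` or `D = V(K_n)`, and `Ψ_D(K_n) = n - 1 - |D|` if `n > 2`
and `D ≠ V(K_n)`. -/
theorem psiD_completeGraph (n : ℕ) (hn : 2 ≤ n) (D : Set (Fin n)) :
    (n = 2 ∨ D = Set.univ → psiD (completeGraph (Fin n)) D = n - D.ncard) ∧
    (2 < n ∧ D ≠ Set.univ → psiD (completeGraph (Fin n)) D = n - 1 - D.ncard) := by
  have hU : (Set.univ : Set (Fin n)).ncard = n := by simp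
  constructor
  · intro h
    have := psiD_eq_of_min (completeGraph (Fin n)) D Set.univ (Set.subset_univ _)
      ((drs_top_iff hn _).2 (by rw [hU]; omega)) (by
        intro S hS hS'
        rw [hU]
        rcases h with h | h
        · have := ((drs_top_iff hn _).1 hS').2
          omega
        · have : S = Set.univ := Set.univ_subset_iff.1 (h ▸ hS)
          rw [this, hU])
    rw [this, hU]
  · rintro ⟨h3, hD⟩
    obtain ⟨a, ha⟩ := (Set.ne_univ_iff_exists_notMem D).1 hD
    have hc : ({a}ᶜ : Set (Fin n)).ncard = n - 1 := by
      have := Set.ncard_add_ncard_compl ({a} : Set (Fin n))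
      simp only [Set.ncard_singleton, Nat.card_eq_fintype_card, Fintype.card_fin] at this
      omega
    have := psiD_eq_of_min (completeGraph (Fin n)) D {a}ᶜ (by simpa using ha)
      ((drs_top_iff hn _).2 (by rw [hc]; omega)) (by
        intro S hS hS'
        rw [hc]
        exact ((drs_top_iff hn _).1 hS').1)
    rw [this, hc]
end

section
/- Let T be a tree with at least two vertices. Then Ψ(T) = σ(T), i.e., the minimum cardinality of a doubly resolving set of T equals the number of leaves of T. -/
open SimpleGraph

variable {V : Type*}

lemma parent_unique_aux {V : Type*} (T : SimpleGraph V) (hT : T.IsTree) {v x p q : V}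
    (hp : T.Adj p x) (hq : T.Adj q x) (dp : T.dist v x = T.dist v p + 1)
    (dq : T.dist v x = T.dist v q + 1) : p = q := by
  obtain ⟨P, hP⟩ := hT.connected.exists_walk_length_eq_dist v p
  obtain ⟨Q, hQ⟩ := hT.connected.exists_walk_length_eq_dist v q
  have h1 : (P.concat hp).IsPath :=
    Walk.isPath_of_length_eq_dist _ (by rw [Walk.length_concat, hP, dp])
  have h2 : (Q.concat hq).IsPath :=
    Walk.isPath_of_length_eq_dist _ (by rw [Walk.length_concat, hQ, dq])
  have h3 := congrArg Subtype.val (hT.isAcyclic.path_unique ⟨_, h1⟩ ⟨_, h2⟩)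
  have h4 := congrArg Walk.penultimate h3
  simpa using h4

lemma exists_leaf_beyond_aux {V : Type*} [Fintype V] (T : SimpleGraph V) (hT : T.IsTree)
    {u v : V} (huv : u ≠ v) :
    ∃ x, deg T x = 1 ∧ T.dist v x = T.dist v u + T.dist u x := by
  classical
  obtain ⟨x, hx, hmax⟩ := Finset.exists_max_image
    (Finset.univ.filter fun x => T.dist v x = T.dist v u + T.dist u x) (fun x => T.dist v x)
    ⟨u, by simp⟩
  simp only [Finset.mem_filter, Finset.mem_univ, true_and] at hx hmax
  refine ⟨x, ?_, hx⟩
  have key : ∀ q, T.Adj q x → T.dist v x = T.dist v q + 1 := by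
    intro q hq
    rcases hT.dist_eq_dist_add_one_of_adj v hq with h | h
    · exfalso
      have t1 := hT.connected.dist_triangle (u := v) (v := u) (w := q)
      have t2 := hT.connected.dist_triangle (u := u) (v := x) (w := q)
      have t3 : T.dist x q = 1 := dist_eq_one_iff_adj.2 hq.symm
      have := hmax q (by omega)
      omega
    · exact h
  haveI : Nontrivial V := ⟨u, v, huv⟩
  obtain ⟨p, hp⟩ := hT.connected.preconnected.exists_adj_of_nontrivial x
  unfold deg
  rw [Set.ncard_eq_one]
  refine ⟨p, ?_⟩
  ext q
  simp only [mem_neighborSet, Set.mem_singleton_iff]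
  constructor
  · intro hq
    exact parent_unique_aux T hT hq.symm hp.symm (key _ hq.symm) (key _ hp.symm)
  · rintro rfl
    exact hp

lemma leaf_dist_aux {V : Type*} (T : SimpleGraph V) (hT : T.IsTree) {l w x : V}
    (h : T.neighborSet l = {w}) (hx : x ≠ l) : T.dist l x = T.dist w x + 1 := by
  have hw : T.Adj l w := by
    have : w ∈ T.neighborSet l := by rw [h]; rfl
    exact this
  obtain ⟨P, hP⟩ := hT.connected.exists_walk_length_eq_dist l x
  cases P with
  | nil => exact absurd rfl hx
  | @cons _ b _ hb P' =>
    have : b ∈ T.neighborSet l := hb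
    rw [h] at this
    obtain rfl : b = w := this
    have h1 := dist_le P'
    have h2 := hT.connected.dist_triangle (u := l) (v := b) (w := x)
    have h3 : T.dist l b = 1 := dist_eq_one_iff_adj.2 hw
    rw [Walk.length_cons] at hP
    omega

/-- For a tree `T` with at least two vertices, `Ψ(T) = σ(T)`: the minimum
cardinality of a doubly resolving set of `T` equals the number of leaves of `T`. -/
theorem psi_tree_eq_leaves {V : Type*} [Fintype V] (T : SimpleGraph V)
    (hT : T.IsTree) (hcard : 2 ≤ Fintype.card V) :
    psi T = {v : V | deg T v = 1}.ncard := by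
  have hmem : {v : V | deg T v = 1}.ncard ∈
      {n | ∃ S : Set V, IsDoublyResolvingSet T S ∧ S.ncard = n} := by
    refine ⟨_, ?_, rfl⟩
    intro u v huv
    obtain ⟨x, hx, hx'⟩ := exists_leaf_beyond_aux T hT huv
    obtain ⟨y, hy, hy'⟩ := exists_leaf_beyond_aux T hT huv.symm
    refine ⟨x, hx, y, hy, ?_⟩
    have h1 := hT.connected.pos_dist_of_ne huv
    have h2 : T.dist u v = T.dist v u := dist_comm
    omega
  apply le_antisymm (Nat.sInf_le hmem)
  refine le_csInf ⟨_, hmem⟩ ?_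
  rintro n ⟨S, hS, rfl⟩
  refine Set.ncard_le_ncard ?_ (Set.toFinite S)
  intro l hl
  by_contra hlS
  obtain ⟨w, hw⟩ := Set.ncard_eq_one.1 (show (T.neighborSet l).ncard = 1 from hl)
  have hlw : T.Adj l w := by
    have : w ∈ T.neighborSet l := by rw [hw]; rfl
    exact this
  obtain ⟨x, hx, y, hy, hne⟩ := hS l w hlw.ne
  have h1 := leaf_dist_aux T hT hw (x := x) (by rintro rfl; exact hlS hx)
  have h2 := leaf_dist_aux T hT hw (x := y) (by rintro rfl; exact hlS hy)
  omega
end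

section
/- Let T be a tree with at least three vertices. Then the metric dimension of the line graph of T equals the metric dimension of T, i.e., μ(L(T)) = μ(T). -/
open SimpleGraph

variable {V : Type*}

/-- `μ(G)`: the metric dimension of `G`, i.e., the minimum cardinality of a resolving set. -/
noncomputable def metricDim (G : SimpleGraph V) : ℕ :=
  sInf {n | ∃ S : Set V, IsResolvingSet G S ∧ S.ncard = n}


namespace MDL
variable {V : Type*} {T : SimpleGraph V}

lemma adj_step (hT : T.IsTree) (z : V) {a b : V} (h : T.Adj a b) :
    T.dist z a = T.dist z b + 1 ∨ T.dist z b = T.dist z a + 1 :=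
  hT.dist_eq_dist_add_one_of_adj z h

lemma exists_toward (hT : T.IsTree) {v u : V} (h : v ≠ u) :
    ∃ a, T.Adj v a ∧ T.dist u v = T.dist u a + 1 := by
  obtain ⟨p, hp⟩ := hT.1.exists_walk_length_eq_dist v u
  cases p with
  | nil => exact absurd rfl h
  | @cons _ a _ hadj q =>
    refine ⟨a, hadj, ?_⟩
    have h1 := T.dist_le q
    have h2 := adj_step hT u hadj
    rw [Walk.length_cons] at hp
    rw [dist_comm] at hp h1
    omega

lemma toward_unique (hT : T.IsTree) {u v a b : V} (ha : T.Adj v a) (hb : T.Adj v b)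
    (h1 : T.dist u v = T.dist u a + 1) (h2 : T.dist u v = T.dist u b + 1) : a = b := by
  obtain ⟨p, hp⟩ := hT.1.exists_walk_length_eq_dist a u
  obtain ⟨q, hq⟩ := hT.1.exists_walk_length_eq_dist b u
  have hp' : (Walk.cons ha p).IsPath := by
    apply Walk.isPath_of_length_eq_dist
    rw [Walk.length_cons, hp, dist_comm (v := u), dist_comm (v := u)]; omega
  have hq' : (Walk.cons hb q).IsPath := by
    apply Walk.isPath_of_length_eq_dist
    rw [Walk.length_cons, hq, dist_comm (v := u), dist_comm (v := u)]; omega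
  have := (hT.2.subsingleton_path v u).elim ⟨_, hp'⟩ ⟨_, hq'⟩
  have h3 := congrArg (fun w : T.Path v u => w.1.snd) this
  simpa using h3

lemma sep (hT : T.IsTree) {s w : V} : ∀ {u u' : V}, T.Adj u u' →
    T.dist s u' = T.dist s u + 1 → T.dist w u = T.dist w u' + 1 →
    T.dist s w = T.dist s u + 1 + T.dist w u' := by
  suffices H : ∀ n : ℕ, ∀ {u u' : V}, T.Adj u u' → T.dist w u' = n →
    T.dist s u' = T.dist s u + 1 → T.dist w u = T.dist w u' + 1 →
    T.dist s w = T.dist s u + 1 + T.dist w u' from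
    fun {u u'} h => H _ h rfl
  intro n
  induction n with
  | zero =>
    intro u u' h h0 h1 h2
    have : w = u' := hT.1.dist_eq_zero_iff.1 h0
    subst this
    omega
  | succ n ih =>
    intro u u' h h0 h1 h2
    have hne : u' ≠ w := by rintro rfl; simp at h0
    obtain ⟨c, hc, hc'⟩ := exists_toward hT hne
    have hcu : c ≠ u := by rintro rfl; omega
    have h3 : T.dist s c = T.dist s u' + 1 := by
      rcases adj_step hT s hc with h4 | h4
      · exact absurd (toward_unique hT hc h.symm h4 h1) hcu
      · exact h4
    have := ih hc (by omega) h3 hc'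
    omega

lemma parity (hT : T.IsTree) (s p q : V) :
    (T.dist s p + T.dist s q + T.dist p q) % 2 = 0 := by
  obtain ⟨w⟩ := hT.1.preconnected p q
  induction w with
  | nil => simp; omega
  | @cons a b c h _ ih =>
    have h1 := adj_step hT s h
    have h2 := adj_step hT c h
    have e1 : T.dist c a = T.dist a c := dist_comm
    have e2 : T.dist c b = T.dist b c := dist_comm
    omega

lemma resolving_of_local (hT : T.IsTree) {S : Set V} (hne : S.Nonempty)
    (hS : ∀ v a b, T.Adj v a → T.Adj v b → a ≠ b → ∃ s ∈ S, T.dist s a ≠ T.dist s b) :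
    IsResolvingSet T S := by
  obtain ⟨s0, hs0⟩ := hne
  have H : ∀ n : ℕ, ∀ u w : V, u ≠ w → T.dist u w = n →
      (∀ s ∈ S, T.dist s u = T.dist s w) → False := by
    intro n
    induction n using Nat.strong_induction_on with
    | _ n ih =>
    intro u w huw hn hall
    obtain ⟨u', hu, hu'⟩ := exists_toward hT huw
    obtain ⟨w', hw, hw'⟩ := exists_toward hT huw.symm
    have e1 : T.dist w u = T.dist u w := dist_comm
    have k1 : ∀ s ∈ S, T.dist s u = T.dist s u' + 1 := by
      intro s hs
      rcases adj_step hT s hu with h | h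
      · exact h
      · have := sep hT hu h hu'
        have := hall s hs
        omega
    have k2 : ∀ s ∈ S, T.dist s w = T.dist s w' + 1 := by
      intro s hs
      rcases adj_step hT s hw with h | h
      · exact h
      · have := sep hT hw h hw'
        have := hall s hs
        omega
    by_cases h : u' = w'
    · subst h
      obtain ⟨s, hs, hs'⟩ := hS u' u w hu.symm hw.symm huw
      exact hs' (hall s hs)
    · refine ih (T.dist u' w') ?_ u' w' h rfl ?_
      · have e2 : T.dist w' u' = T.dist u' w' := dist_comm
        have e3 : T.dist w' u = T.dist u w' := dist_comm
        have e4 : T.dist w u' = T.dist u' w := dist_comm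
        have e5 : T.dist u' u = 1 := by rw [dist_eq_one_iff_adj]; exact hu.symm
        rcases adj_step hT w' hu with h1 | h1
        · omega
        · rcases adj_step hT u' hw with h2 | h2
          · omega
          · have := sep hT hw h2 hw'
            have h0 : T.dist w u' = 0 := by omega
            have h0' : T.dist u w' = 0 := by omega
            have := hT.1.dist_eq_zero_iff.1 h0
            have := hT.1.dist_eq_zero_iff.1 h0'
            subst_vars
            exact absurd hs0 (fun hs => by have := k1 _ hs; have := hall _ hs; omega)
      · intro s hs
        have := k1 s hs; have := k2 s hs; have := hall s hs
        omega
  intro u v huv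
  by_contra hcon
  push Not at hcon
  refine H _ u v huv rfl fun s hs => ?_
  rw [dist_comm, hcon s hs, dist_comm]

end MDL

namespace MDL
variable {V : Type*} {T : SimpleGraph V}

lemma normal_form (hT : T.IsTree) {e r : T.edgeSet} (h : e ≠ r) :
    ∃ p p' x x', T.Adj p p' ∧ T.Adj x x' ∧ e.1 = s(p, p') ∧ r.1 = s(x, x') ∧
      T.dist x p' = T.dist x p + 1 ∧ T.dist x' p = T.dist x p + 1 ∧
      T.dist x' p' = T.dist x p + 2 := by
  have key : ∀ p p' x x', T.Adj p p' → T.Adj x x' → s(p, p') ≠ s(x, x') →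
      T.dist x p' = T.dist x p + 1 → T.dist x' p = T.dist x p + 1 →
      T.dist x' p' = T.dist x p + 2 := by
    intro p p' x x' hp hx hne h1 h2
    rcases adj_step hT x' hp with h3 | h3
    · have h4 := sep hT (s := x') (w := x) hp.symm h3 h1
      have h5 : T.dist x' x = 1 := dist_eq_one_iff_adj.2 hx.symm
      have h6 := hT.1.dist_eq_zero_iff.1 (show T.dist x p = 0 by omega)
      have h7 := hT.1.dist_eq_zero_iff.1 (show T.dist x' p' = 0 by omega)
      subst h6 h7
      exact absurd rfl hne
    · omega
  obtain ⟨e, he⟩ := e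
  obtain ⟨r, hr⟩ := r
  have hne : e ≠ r := fun hh => h (Subtype.ext hh)
  clear h
  induction e using Sym2.ind with
  | _ p p' =>
  induction r using Sym2.ind with
  | _ x x' =>
  have hp : T.Adj p p' := he
  have hx : T.Adj x x' := hr
  have c1 : s(p, p') = s(p', p) := Sym2.eq_swap
  have c2 : s(x, x') = s(x', x) := Sym2.eq_swap
  have step : ∀ p p', T.Adj p p' → s(p, p') ≠ s(x, x') → T.dist x p' = T.dist x p + 1 →
    ∃ x₁ x₁', T.Adj x₁ x₁' ∧ s(x, x') = s(x₁, x₁') ∧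
      T.dist x₁ p' = T.dist x₁ p + 1 ∧ T.dist x₁' p = T.dist x₁ p + 1 ∧
      T.dist x₁' p' = T.dist x₁ p + 2 := by
    intro p p' hp hne h1
    have e1 : T.dist x p = T.dist p x := dist_comm
    have e2 : T.dist x' p = T.dist p x' := dist_comm
    have e3 : T.dist x p' = T.dist p' x := dist_comm
    have e4 : T.dist x' p' = T.dist p' x' := dist_comm
    rcases adj_step hT p hx with h2 | h2
    · refine ⟨x', x, hx.symm, c2, ?_, by omega, ?_⟩
      · have := adj_step hT x' hp
        have := adj_step hT p' hx
        omega
      · omega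
    · exact ⟨x, x', hx, rfl, h1, by omega, key _ _ _ _ hp hx hne h1 (by omega)⟩
  rcases adj_step hT x hp with h1 | h1
  · obtain ⟨x₁, x₁', h2, h3, h4⟩ := step p' p hp.symm (c1 ▸ hne) h1
    exact ⟨p', p, x₁, x₁', hp.symm, h2, c1, h3, h4⟩
  · obtain ⟨x₁, x₁', h2, h3, h4⟩ := step p p' hp hne h1
    exact ⟨p, p', x₁, x₁', hp, h2, rfl, h3, h4⟩

lemma line_upper (hT : T.IsTree) (r : T.edgeSet) (x : V) (hx : x ∈ r.1) :
    ∀ n : ℕ, ∀ (e : T.edgeSet) (p : V), p ∈ e.1 → T.dist x p = n →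
      ∃ w : T.lineGraph.Walk e r, w.length ≤ n + 1 := by
  intro n
  induction n with
  | zero =>
    intro e p hp h0
    have := hT.1.dist_eq_zero_iff.1 h0
    subst this
    by_cases h : e = r
    · subst h; exact ⟨Walk.nil, by simp⟩
    · exact ⟨Walk.cons (lineGraph_adj_iff_exists.2 ⟨h, x, hp, hx⟩) Walk.nil, by simp⟩
  | succ n ih =>
    intro e p hp h0
    have hne : p ≠ x := by rintro rfl; simp at h0
    obtain ⟨c, hc, hc'⟩ := exists_toward hT hne
    obtain ⟨w, hw⟩ := ih ⟨s(p, c), hc⟩ c (by simp) (by omega)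
    by_cases h : e = ⟨s(p, c), hc⟩
    · rw [h]; exact ⟨w, by omega⟩
    · exact ⟨Walk.cons (lineGraph_adj_iff_exists.2 ⟨h, p, hp, by simp⟩) w, by
        rw [Walk.length_cons]; omega⟩

lemma line_connected (hT : T.IsTree) (e r : T.edgeSet) : T.lineGraph.Reachable e r := by
  obtain ⟨e, he⟩ := e
  obtain ⟨r, hr⟩ := r
  induction e using Sym2.ind with
  | _ p p' =>
  induction r using Sym2.ind with
  | _ x x' =>
  obtain ⟨w, -⟩ := line_upper hT ⟨s(x, x'), hr⟩ x (by simp) _ ⟨s(p, p'), he⟩ p (by simp) rfl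
  exact ⟨w⟩

lemma line_lower (hT : T.IsTree) {e r : T.edgeSet} (w : T.lineGraph.Walk e r) {x x' : V}
    (hr : r.1 = s(x, x')) : ∀ p p', e.1 = s(p, p') → e ≠ r →
      T.dist x p + T.dist x p' + T.dist x' p + T.dist x' p' ≤ 4 * w.length := by
  induction w with
  | nil => intro p p' _ h; exact absurd rfl h
  | @cons e b r hadj w ih =>
    have ih := ih hr
    obtain ⟨hne, v, hv, hvb⟩ := lineGraph_adj_iff_exists.1 hadj
    obtain ⟨a, ha⟩ := Sym2.mem_iff_exists.1 hv
    obtain ⟨c, hc⟩ := Sym2.mem_iff_exists.1 hvb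
    have hva : T.Adj v a := by have := e.2; rw [ha] at this; exact this
    have hvc : T.Adj v c := by have := b.2; rw [hc] at this; exact this
    have main : e ≠ r → T.dist x v + T.dist x a + T.dist x' v + T.dist x' a
        ≤ 4 * (w.length + 1) := by
      intro her
      have d1 := adj_step hT x hva
      have d2 := adj_step hT x' hva
      have d3 := adj_step hT x hvc
      have d4 := adj_step hT x' hvc
      by_cases hbr : b = r
      · subst hbr
        rw [hr] at hc
        have f1 : T.dist v v = 0 := dist_self
        have f2 : T.dist c c = 0 := dist_self
        have f3 : T.dist v c = T.dist c v := dist_comm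
        rcases Sym2.eq_iff.1 hc with ⟨rfl, rfl⟩ | ⟨rfl, rfl⟩ <;> omega
      · have := ih v c hc hbr
        omega
    intro p p' hp her
    have := main her
    rw [Walk.length_cons]
    rw [ha] at hp
    rcases Sym2.eq_iff.1 hp with ⟨rfl, rfl⟩ | ⟨rfl, rfl⟩ <;> omega

lemma line_dist (hT : T.IsTree) {e r : T.edgeSet} (her : e ≠ r) {p p' x x' : V}
    (he : e.1 = s(p, p')) (hr : r.1 = s(x, x')) :
    T.dist x p + T.dist x p' + T.dist x' p + T.dist x' p' = 4 * T.lineGraph.dist e r := by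
  apply le_antisymm
  · obtain ⟨w, hw⟩ := (line_connected hT e r).exists_walk_length_eq_dist
    rw [← hw]
    exact line_lower hT w hr p p' he her
  · obtain ⟨q, q', y, y', hq, hy, hq', hy', h1, h2, h3⟩ := normal_form hT her
    obtain ⟨w, hw⟩ := line_upper hT r y (by simp [hy']) _ e q (by simp [hq']) rfl
    have h4 := T.lineGraph.dist_le w
    rw [he] at hq'
    rw [hr] at hy'
    rcases Sym2.eq_iff.1 hq' with ⟨rfl, rfl⟩ | ⟨rfl, rfl⟩ <;>
    rcases Sym2.eq_iff.1 hy' with ⟨rfl, rfl⟩ | ⟨rfl, rfl⟩ <;> omega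

lemma line_dist_pos (hT : T.IsTree) {e r : T.edgeSet} (her : e ≠ r) :
    T.lineGraph.dist e r ≠ 0 := by
  intro h
  exact her ((line_connected hT e r).dist_eq_zero_iff.1 h)

/-- Geodesic uniqueness. -/
lemma geod_unique (hT : T.IsTree) {q : V} : ∀ n : ℕ, ∀ p s s' : V, T.dist s p = n →
    T.dist s' p = n → T.dist q s = T.dist q s' → T.dist s p + T.dist q s = T.dist q p →
    s = s' := by
  intro n
  induction n with
  | zero =>
    intro p s s' h1 h2 _ _
    rw [hT.1.dist_eq_zero_iff.1 h1, hT.1.dist_eq_zero_iff.1 h2]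
  | succ n ih =>
    intro p s s' h1 h2 h3 h4
    have hs : p ≠ s := by rintro rfl; simp at h1
    have hs' : p ≠ s' := by rintro rfl; simp at h2
    obtain ⟨c, hc, hc'⟩ := exists_toward hT hs
    obtain ⟨d, hd, hd'⟩ := exists_toward hT hs'
    have t1 : T.dist q c ≤ T.dist q s + T.dist s c := hT.1.dist_triangle
    have t2 : T.dist q d ≤ T.dist q s' + T.dist s' d := hT.1.dist_triangle
    have a1 := adj_step hT q hc
    have a2 := adj_step hT q hd
    have : c = d := toward_unique (u := q) hT hc hd (by omega) (by omega)
    subst this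
    exact ih c s s' (by omega) (by omega) h3 (by omega)

end MDL

namespace MDL
variable {V : Type*} {T : SimpleGraph V}

lemma side_aux (hT : T.IsTree) {p p' q q' x y : V} (hp : T.Adj p p') (hxy : T.Adj x y)
    (h1 : T.dist q p' = T.dist q p + 1) (h3 : T.dist q' p' = T.dist q' p + 1)
    (hne : s(p, p') ≠ s(x, y))
    (hs : T.dist x p + T.dist x p' + T.dist y p + T.dist y p' =
      T.dist x q + T.dist x q' + T.dist y q + T.dist y q') :
    T.dist x p' = T.dist x p + 1 := by
  rcases adj_step hT x hp with h | h
  · exfalso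
    rcases adj_step hT y hp with h' | h'
    · have := sep hT hp.symm h h1
      have := sep hT hp.symm h h3
      have := sep hT hp.symm h' h1
      have := sep hT hp.symm h' h3
      omega
    · have h4 := sep hT hp.symm h h'
      have h5 : T.dist x y = 1 := dist_eq_one_iff_adj.2 hxy
      have h6 := hT.1.dist_eq_zero_iff.1 (show T.dist x p' = 0 by omega)
      have h7 := hT.1.dist_eq_zero_iff.1 (show T.dist y p = 0 by omega)
      subst h6 h7
      exact hne Sym2.eq_swap
  · exact h

lemma dirA_core (hT : T.IsTree) {S : Set V} (hS : IsResolvingSet T S) {R : Set T.edgeSet}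
    (hSR : ∀ s ∈ S, ∃ r ∈ R, s ∈ r.1)
    (hR : (∃ r₁ ∈ R, ∃ r₂ ∈ R, r₁ ≠ r₂) ∨ ∃ s, S = {s}) :
    IsResolvingSet T.lineGraph R := by
  intro e f hef
  by_contra hcon
  push Not at hcon
  obtain ⟨p, p', q, q', hp, hq, he, hf, h1, h2, h3⟩ := normal_form hT hef
  have c1 : T.dist q p = T.dist p q := dist_comm
  have c2 : T.dist q p' = T.dist p' q := dist_comm
  have c3 : T.dist q' p = T.dist p q' := dist_comm
  have c4 : T.dist q' p' = T.dist p' q' := dist_comm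
  have key : ∀ r ∈ R, ∀ x y, r.1 = s(x, y) → T.Adj x y ∧
      T.dist x p' = T.dist x p + 1 ∧ T.dist x q' = T.dist x q + 1 ∧
      T.dist y p' = T.dist y p + 1 ∧ T.dist y q' = T.dist y q + 1 ∧
      T.dist x p + T.dist y p = T.dist x q + T.dist y q := by
    intro r hr x y hxy
    have hadj : T.Adj x y := by have := r.2; rw [hxy] at this; exact this
    have hc := hcon r hr
    have her : e ≠ r := by
      rintro rfl
      rw [dist_self] at hc
      exact line_dist_pos hT hef.symm hc.symm
    have hfr : f ≠ r := by
      rintro rfl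
      rw [dist_self] at hc
      exact line_dist_pos hT hef hc
    have g1 := line_dist hT her he hxy
    have g2 := line_dist hT hfr hf hxy
    have n1 : s(p, p') ≠ s(x, y) := fun h => her (Subtype.ext (by rw [he, hxy, h]))
    have n2 : s(q, q') ≠ s(x, y) := fun h => hfr (Subtype.ext (by rw [hf, hxy, h]))
    have sw : s(x, y) = s(y, x) := Sym2.eq_swap
    have k1 := side_aux (q := q) (q' := q') hT hp hadj h1 (by omega) n1 (by omega)
    have k2 := side_aux (q := q) (q' := q') hT hp hadj.symm h1 (by omega) (sw ▸ n1) (by omega)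
    have k3 := side_aux (q := p) (q' := p') hT hq hadj (by omega) (by omega) n2 (by omega)
    have k4 := side_aux (q := p) (q' := p') hT hq hadj.symm (by omega) (by omega) (sw ▸ n2)
      (by omega)
    exact ⟨hadj, k1, k3, k2, k4, by omega⟩
  by_cases hpar : T.dist q p % 2 = 0
  · have hne : p' ≠ q' := by
      rintro rfl
      rw [dist_self] at h3
      omega
    obtain ⟨s, hs, hs'⟩ := hS p' q' hne
    obtain ⟨r, hr, hsr⟩ := hSR s hs
    obtain ⟨t, ht⟩ := Sym2.mem_iff_exists.1 hsr
    obtain ⟨hst, k1, k2, k3, k4, k5⟩ := key r hr s t ht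
    have a1 := adj_step hT p hst
    have a2 := adj_step hT q hst
    have := parity hT s p q
    rw [dist_comm (u := p'), dist_comm (u := q')] at hs'
    rw [dist_comm (u := p), dist_comm (u := p)] at a1
    rw [dist_comm (u := q), dist_comm (u := q)] at a2
    omega
  · have mid : ∀ r ∈ R, ∃ x y, r.1 = s(x, y) ∧ T.Adj x y ∧ 2 * T.dist x p + 1 = T.dist q p ∧
        T.dist x q = T.dist x p + 1 ∧ T.dist y p = T.dist x p + 1 ∧ T.dist y q = T.dist x p := by
      intro r hr
      obtain ⟨r, hr'⟩ := r
      induction r using Sym2.ind with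
      | _ x y =>
      obtain ⟨hst, k1, k2, k3, k4, k5⟩ := key _ hr x y rfl
      have hpx := parity hT x p q
      have a1 := adj_step hT p hst
      have a2 := adj_step hT q hst
      have d1 : T.dist p x = T.dist x p := dist_comm
      have d2 : T.dist p y = T.dist y p := dist_comm
      have d3 : T.dist q x = T.dist x q := dist_comm
      have d4 : T.dist q y = T.dist y q := dist_comm
      rcases a1 with a1 | a1
      · have := sep (s := p) (w := q) hT hst.symm a1 (by omega)
        exact ⟨y, x, Sym2.eq_swap, hst.symm, by omega, by omega, by omega, by omega⟩
      · have := sep (s := p) (w := q) hT hst a1 (by omega)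
        exact ⟨x, y, rfl, hst, by omega, by omega, by omega, by omega⟩
    rcases hR with ⟨r₁, hr₁, r₂, hr₂, hne⟩ | ⟨s, rfl⟩
    · obtain ⟨x, y, e1, -, m1, m2, m3, m4⟩ := mid r₁ hr₁
      obtain ⟨z, w, e2, -, l1, l2, l3, l4⟩ := mid r₂ hr₂
      have d1 : T.dist q x = T.dist x q := dist_comm
      have d2 : T.dist q y = T.dist y q := dist_comm
      have d3 : T.dist q z = T.dist z q := dist_comm
      have d4 : T.dist q w = T.dist w q := dist_comm
      have i1 : x = z := geod_unique (q := q) hT _ p x z rfl (by omega) (by omega) (by omega)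
      have i2 : y = w := geod_unique (q := q) hT _ p y w rfl (by omega) (by omega) (by omega)
      subst i1 i2
      exact hne (Subtype.ext (by rw [e1, e2]))
    · obtain ⟨r, hr, hsr⟩ := hSR s rfl
      obtain ⟨t, ht⟩ := Sym2.mem_iff_exists.1 hsr
      obtain ⟨hst, k1, k2, k3, k4, k5⟩ := key r hr s t ht
      have a1 := adj_step hT p hst
      have a2 := adj_step hT q hst
      have hpx := parity hT s p q
      have d1 : T.dist p s = T.dist s p := dist_comm
      have d2 : T.dist p t = T.dist t p := dist_comm
      have d3 : T.dist q s = T.dist s q := dist_comm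
      have d4 : T.dist q t = T.dist t q := dist_comm
      have fin : ∀ z, s ≠ z → T.dist z t = T.dist z s + 1 → False := by
        intro z hz hzt
        obtain ⟨c, hc, hc'⟩ := exists_toward hT hz
        have hct : c ≠ t := by rintro rfl; omega
        obtain ⟨s', hs', h⟩ := hS c t hct
        rw [Set.mem_singleton_iff] at hs'
        subst hs'
        exact h (by rw [dist_eq_one_iff_adj.2 hc.symm, dist_eq_one_iff_adj.2 hst.symm])
      rcases a1 with a1 | a1
      · refine fin q' (by rintro rfl; simp at k2) ?_
        rw [dist_comm, k4, dist_comm (u := q'), k2]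
        omega
      · refine fin p' (by rintro rfl; simp at k1) ?_
        rw [dist_comm, k3, dist_comm (u := p'), k1]
        omega

lemma exists_third [Fintype V] (hcard : 3 ≤ Fintype.card V) (a b : V) :
    ∃ c, c ≠ a ∧ c ≠ b := by
  classical
  by_contra h
  push Not at h
  have : (Finset.univ : Finset V) ⊆ {a, b} := by
    intro c _
    by_cases hc : c = a
    · simp [hc]
    · simp [h c hc]
  have := Finset.card_le_card this
  have h2 : ({a, b} : Finset V).card ≤ 2 := Finset.card_le_two
  rw [Finset.card_univ] at this
  omega

lemma exists_edge (hT : T.IsTree) [Fintype V] (hcard : 3 ≤ Fintype.card V) (s : V) :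
    ∃ e : T.edgeSet, s ∈ e.1 := by
  obtain ⟨c, hc, -⟩ := exists_third hcard s s
  obtain ⟨a, ha, -⟩ := exists_toward hT hc.symm
  exact ⟨⟨s(s, a), ha⟩, by simp⟩

lemma exists_other_edge (hT : T.IsTree) [Fintype V] (hcard : 3 ≤ Fintype.card V) (e : T.edgeSet) :
    ∃ f : T.edgeSet, f ≠ e := by
  obtain ⟨e, he⟩ := e
  induction e using Sym2.ind with
  | _ a b =>
  obtain ⟨c, hca, hcb⟩ := exists_third hcard a b
  obtain ⟨f, hf⟩ := exists_edge hT hcard c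
  refine ⟨f, ?_⟩
  rintro rfl
  simp [hca, hcb] at hf

lemma dirA (hT : T.IsTree) [Fintype V] (hcard : 3 ≤ Fintype.card V) {S : Set V}
    (hS : IsResolvingSet T S) :
    ∃ R : Set T.edgeSet, IsResolvingSet T.lineGraph R ∧ R.ncard ≤ S.ncard := by
  choose g hg using exists_edge hT hcard
  have hSne : S.Nonempty := by
    obtain ⟨v⟩ := hT.1.nonempty
    obtain ⟨c, hc, -⟩ := exists_third hcard v v
    obtain ⟨s, hs, -⟩ := hS c v hc
    exact ⟨s, hs⟩
  obtain ⟨s, hs⟩ := hSne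
  have hle : (g '' S).ncard ≤ S.ncard := Set.ncard_image_le S.toFinite
  by_cases h1 : ∃ s, S = {s}
  · exact ⟨g '' S, dirA_core hT hS (fun s hs => ⟨g s, ⟨s, hs, rfl⟩, hg s⟩) (Or.inr h1), hle⟩
  · by_cases h2 : ∃ r₁ ∈ g '' S, ∃ r₂ ∈ g '' S, r₁ ≠ r₂
    · exact ⟨g '' S, dirA_core hT hS (fun s hs => ⟨g s, ⟨s, hs, rfl⟩, hg s⟩) (Or.inl h2), hle⟩
    · push Not at h2
      obtain ⟨f, hf⟩ := exists_other_edge hT hcard (g s)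
      refine ⟨{g s, f}, dirA_core hT hS (fun t ht => ⟨g s, by simp, ?_⟩)
        (Or.inl ⟨g s, by simp, f, by simp, hf.symm⟩), ?_⟩
      · rw [h2 (g s) ⟨s, hs, rfl⟩ (g t) ⟨t, ht, rfl⟩]
        exact hg t
      · rw [Set.ncard_pair hf.symm]
        by_contra hlt
        have h3 : S.ncard ≠ 0 := by
          rw [Ne, Set.ncard_eq_zero S.toFinite]
          rintro rfl
          exact hs
        exact h1 (Set.ncard_eq_one.1 (by omega))

lemma sep_cross (hT : T.IsTree) {x y v a : V} (hxy : T.Adj x y) (hva : T.Adj v a)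
    (hv : T.dist v y = T.dist v x + 1) (ha : T.dist a x = T.dist a y + 1) : v = x ∧ a = y := by
  have := sep hT hxy hv ha
  have h5 : T.dist v a = 1 := dist_eq_one_iff_adj.2 hva
  exact ⟨hT.1.dist_eq_zero_iff.1 (by omega), hT.1.dist_eq_zero_iff.1 (by omega)⟩

lemma dirB (hT : T.IsTree) [Fintype V] (hcard : 3 ≤ Fintype.card V) {R : Set T.edgeSet}
    (hR : IsResolvingSet T.lineGraph R) :
    ∃ S : Set V, IsResolvingSet T S ∧ S.ncard ≤ R.ncard := by
  classical
  -- local condition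
  have hloc : ∀ v a b, T.Adj v a → T.Adj v b → a ≠ b →
      ∃ r ∈ R, ∃ z ∈ r.1, T.dist z a ≠ T.dist z b := by
    intro v a b ha hb hab
    have hne : (⟨s(v, a), ha⟩ : T.edgeSet) ≠ ⟨s(v, b), hb⟩ := by
      intro h
      have := congrArg Subtype.val h
      simp [hab] at this
      exact hab (this.2.symm ▸ this.1 ▸ rfl)
    obtain ⟨r, hr, hd⟩ := hR _ _ hne
    refine ⟨r, hr, ?_⟩
    by_contra hcon
    push Not at hcon
    by_cases h1 : (⟨s(v, a), ha⟩ : T.edgeSet) = r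
    · have := hcon a (by rw [← h1]; simp)
      rw [dist_self] at this
      exact hab (hT.1.dist_eq_zero_iff.1 this.symm)
    by_cases h2 : (⟨s(v, b), hb⟩ : T.edgeSet) = r
    · have := hcon b (by rw [← h2]; simp)
      rw [dist_self] at this
      exact hab (hT.1.dist_eq_zero_iff.1 this).symm
    obtain ⟨r, hr'⟩ := r
    induction r using Sym2.ind with
    | _ x y =>
    have k1 := line_dist hT h1 rfl rfl
    have k2 := line_dist hT h2 rfl rfl
    have k3 := hcon x (by simp)
    have k4 := hcon y (by simp)
    omega
  have hRne : R.Nonempty := by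
    obtain ⟨v⟩ := hT.1.nonempty
    obtain ⟨e, -⟩ := exists_edge hT hcard v
    obtain ⟨f, hf⟩ := exists_other_edge hT hcard e
    obtain ⟨r, hr, -⟩ := hR f e hf
    exact ⟨r, hr⟩
  -- extremal edge
  obtain ⟨w⟩ := hT.1.nonempty
  have hfin : {z | ∃ r ∈ R, z ∈ r.1}.Finite := Set.toFinite _
  have hne : {z | ∃ r ∈ R, z ∈ r.1}.Nonempty := by
    obtain ⟨r, hr⟩ := hRne
    exact ⟨_, r, hr, Sym2.out_fst_mem r.1⟩
  obtain ⟨y, ⟨r₀, hr₀, hy⟩, hmax⟩ := Set.exists_max_image _ (fun z => T.dist w z) hfin hne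
  obtain ⟨x, hx⟩ := Sym2.mem_iff_exists.1 hy
  have hyx : T.Adj y x := by have := r₀.2; rw [hx] at this; exact this
  have hxy := hyx.symm
  have hwx : T.dist w y = T.dist w x + 1 := by
    have h1 : T.dist w x ≤ T.dist w y := hmax x ⟨r₀, hr₀, by rw [hx]; simp⟩
    have := adj_step hT w hxy
    omega
  have hend : ∀ r ∈ R, ∀ z ∈ r.1, z = y ∨ T.dist z y = T.dist z x + 1 := by
    intro r hr z hz
    rcases adj_step hT z hxy with h | h
    · left
      have h1 := sep hT hxy hwx h
      have h2 : T.dist w z ≤ T.dist w y := hmax z ⟨r, hr, hz⟩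
      exact hT.1.dist_eq_zero_iff.1 (by omega)
    · exact Or.inr h
  -- the far vertex
  obtain ⟨ρ, hρ, hρmax⟩ := Set.exists_max_image {z | T.dist z x = T.dist z y + 1}
    (fun z => T.dist x z) (Set.toFinite _) ⟨y, by
      show T.dist y x = T.dist y y + 1
      rw [dist_self, dist_eq_one_iff_adj.2 hyx]⟩
  replace hρ : T.dist ρ x = T.dist ρ y + 1 := hρ
  replace hρmax : ∀ z, T.dist z x = T.dist z y + 1 → T.dist x z ≤ T.dist x ρ := hρmax
  have hfar : ∀ e : T.edgeSet, ∃ z ∈ e.1, ∀ u ∈ e.1, T.dist ρ u ≤ T.dist ρ z := by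
    rintro ⟨e, he⟩
    induction e using Sym2.ind with
    | _ a b =>
    rcases le_total (T.dist ρ a) (T.dist ρ b) with h | h
    · exact ⟨b, by simp, by simp [h]⟩
    · exact ⟨a, by simp, by simp [h]⟩
  choose far hfar1 hfar2 using hfar
  refine ⟨insert ρ (far '' (R \ {r₀})), resolving_of_local hT ⟨ρ, by simp⟩ ?_, ?_⟩
  swap
  · have h1 := Set.ncard_insert_le ρ (far '' (R \ {r₀}))
    have h2 : (far '' (R \ {r₀})).ncard ≤ (R \ {r₀}).ncard := Set.ncard_image_le (Set.toFinite _)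
    have h3 := Set.ncard_sdiff_singleton_add_one hr₀ (Set.toFinite R)
    omega
  intro v a b ha hb hab
  by_contra hcon
  push Not at hcon
  have hcρ := hcon ρ (by simp)
  have hcf : ∀ r ∈ R, r ≠ r₀ → T.dist (far r) a = T.dist (far r) b := fun r hr hne =>
    hcon _ (Or.inr ⟨r, ⟨hr, hne⟩, rfl⟩)
  have haway : ∀ z, T.dist z a = T.dist z b → T.dist z a = T.dist z v + 1 := by
    intro z hz
    rcases adj_step hT z ha with h | h
    · exact absurd (toward_unique hT ha hb h (by omega)) hab
    · exact h
  rcases adj_step hT v hxy with hv | hv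
  · -- v on the y side
    have lemY : ∀ b c, T.Adj v b → T.Adj v c → b ≠ c → T.dist x b = T.dist x v + 1 →
        T.dist x c = T.dist x v + 1 → False := by
      intro b c hb hc hbc h1 h2
      obtain ⟨r, hr, z, hz, hd⟩ := hloc v b c hb hc hbc
      have side : ∀ b, T.Adj v b → T.dist x b = T.dist x v + 1 →
          T.dist b x = T.dist b y + 1 := by
        intro b hb h1
        rcases adj_step hT b hxy with h | h
        · exact h
        · obtain ⟨rfl, rfl⟩ := sep_cross hT hxy hb.symm h hv
          rw [dist_self] at h1
          omega
      have s1 := side b hb h1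
      have s2 := side c hc h2
      have e1 : T.dist b x = T.dist x b := dist_comm
      have e2 : T.dist c x = T.dist x c := dist_comm
      rcases hend r hr z hz with rfl | h
      · rw [dist_comm (v := b), dist_comm (v := c)] at hd
        omega
      · have := sep hT hxy h s1
        have := sep hT hxy h s2
        omega
    by_cases hvρ : v = ρ
    · subst hvρ
      have amax : ∀ b, T.Adj v b → T.dist x b = T.dist x v + 1 → False := by
        intro b hb h1
        rcases adj_step hT b hxy with h | h
        · have := hρmax b h
          omega
        · obtain ⟨rfl, rfl⟩ := sep_cross hT hxy hb.symm h hv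
          rw [dist_self] at h1
          omega
      rcases adj_step hT x ha with h | h
      · rcases adj_step hT x hb with h' | h'
        · exact hab (toward_unique hT ha hb h h')
        · exact amax b hb h'
      · exact amax a ha h
    · obtain ⟨c, hc, hc'⟩ := exists_toward hT hvρ
      have := haway ρ hcρ
      have hca : a ≠ c := by rintro rfl; omega
      have hcb : b ≠ c := by rintro rfl; omega
      rcases adj_step hT x ha with h | h
      · rcases adj_step hT x hb with h' | h'
        · exact hab (toward_unique hT ha hb h h')
        · rcases adj_step hT x hc with h'' | h''
          · exact hca (toward_unique hT ha hc h h'')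
          · exact lemY b c hb hc hcb h' h''
      · rcases adj_step hT x hb with h' | h'
        · rcases adj_step hT x hc with h'' | h''
          · exact hcb (toward_unique hT hb hc h' h'')
          · exact lemY a c ha hc hca h h''
        · exact lemY a b ha hb hab h h'
  · -- v on the x side
    have main : ∀ a, T.Adj v a → (∀ z, z = ρ ∨ (∃ r ∈ R, r ≠ r₀ ∧ z = far r) →
        T.dist z a = T.dist z v + 1) →
        ∀ r ∈ R, ∀ z ∈ r.1, T.dist z v = T.dist z a + 1 → False := by
      intro a ha haw r hr z hz hza
      have hρa := haw ρ (Or.inl rfl)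
      by_cases hrr : r = r₀
      · subst hrr
        have hz' : z = y ∨ z = x := by rw [hx] at hz; simpa using hz
        have f1 := sep hT hxy hv hρ
        rcases adj_step hT a hxy with h | h
        · obtain ⟨rfl, rfl⟩ := sep_cross hT hxy ha hv h
          omega
        · have f2 := sep hT hxy h hρ
          have e1 : T.dist v ρ = T.dist ρ v := dist_comm
          have e2 : T.dist a ρ = T.dist ρ a := dist_comm
          have e3 : T.dist v x = T.dist x v := dist_comm
          have e4 : T.dist a x = T.dist x a := dist_comm
          have e5 : T.dist v y = T.dist y v := dist_comm
          have e6 : T.dist a y = T.dist y a := dist_comm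
          rcases hz' with rfl | rfl <;> omega
      · have hfa := haw (far r) (Or.inr ⟨r, hr, hrr, rfl⟩)
        obtain ⟨u, hu⟩ := Sym2.mem_iff_exists.1 hz
        have hzu : T.Adj z u := by have := r.2; rw [hu] at this; exact this
        have hf := hfar1 r
        rw [hu, Sym2.mem_iff] at hf
        rcases hf with hf | hf
        · rw [hf] at hfa; omega
        · rw [hf] at hfa
          have hm := hfar2 r z hz
          rw [hf] at hm
          obtain ⟨rfl, rfl⟩ := sep_cross hT ha hzu.symm hfa hza
          omega
    obtain ⟨r, hr, z, hz, hd⟩ := hloc v a b ha hb hab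
    have haw : ∀ z, z = ρ ∨ (∃ r ∈ R, r ≠ r₀ ∧ z = far r) → T.dist z a = T.dist z b := by
      rintro z (rfl | ⟨r, hr, hrr, rfl⟩)
      · exact hcρ
      · exact hcf r hr hrr
    rcases adj_step hT z ha with h | h
    · exact main a ha (fun z hz => haway z (haw z hz)) r hr z hz h
    · rcases adj_step hT z hb with h' | h'
      · exact main b hb (fun z hz => haw z hz ▸ haway z (haw z hz)) r hr z hz h'
      · omega

end MDL

/-- For a tree `T` with at least three vertices, the metric dimension of the
line graph of `T` equals the metric dimension of `T`: `μ(L(T)) = μ(T)`. -/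
theorem metricDim_lineGraph_tree {V : Type*} [Fintype V] (T : SimpleGraph V)
    (hT : T.IsTree) (hcard : 3 ≤ Fintype.card V) :
    metricDim T.lineGraph = metricDim T := by
  have huniv : IsResolvingSet T Set.univ := by
    intro u v huv
    refine ⟨u, Set.mem_univ _, ?_⟩
    rw [dist_self]
    exact fun h => huv (hT.1.dist_eq_zero_iff.1 h.symm).symm
  have hne1 : {n | ∃ S : Set V, IsResolvingSet T S ∧ S.ncard = n}.Nonempty :=
    ⟨_, _, huniv, rfl⟩
  have hne2 : {n | ∃ S : Set T.edgeSet, IsResolvingSet T.lineGraph S ∧ S.ncard = n}.Nonempty := by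
    obtain ⟨R, hR, -⟩ := MDL.dirA hT hcard huniv
    exact ⟨_, R, hR, rfl⟩
  obtain ⟨S, hS, hS'⟩ := Nat.sInf_mem hne1
  obtain ⟨R, hR, hR'⟩ := Nat.sInf_mem hne2
  obtain ⟨R₁, hR₁, hR₁'⟩ := MDL.dirA hT hcard hS
  obtain ⟨S₁, hS₁, hS₁'⟩ := MDL.dirB hT hcard hR
  unfold metricDim
  apply le_antisymm
  · rw [← hS']
    exact le_trans (Nat.sInf_le (Set.mem_setOf.2 ⟨R₁, hR₁, rfl⟩)) hR₁'
  · rw [← hR']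
    exact le_trans (Nat.sInf_le (Set.mem_setOf.2 ⟨S₁, hS₁, rfl⟩)) hS₁'
end
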